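/- There is an absolute constant C > 0 such that for every integer t ≥ 2, every K_t-free string graph on n > 2 vertices has chromatic number at most (log₂ n)^{C·log₂ t}. -/

import Mathlib

/-- A curve in the plane: the image of a continuous map from `[0,1]` to `ℝ²`. -/
def IsCurve (c : Set (ℝ × ℝ)) : Prop :=
  ∃ f : ℝ → ℝ × ℝ, ContinuousOn f (Set.Icc 0 1) ∧ c = f '' Set.Icc 0 1

/-- A string graph: an intersection graph of curves in the plane. -/
def IsStringGraph {V : Type*} (G : SimpleGraph V) : Prop :=
  ∃ γ : V → Set (ℝ × ℝ), (∀ v, IsCurve (γ v)) ∧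
    ∀ u v : V, u ≠ v → (G.Adj u v ↔ (γ u ∩ γ v).Nonempty)

set_option autoImplicit false

abbrev Pt := ℤ × ℤ

/-- reflexive 4-adjacency on the integer lattice -/
def GR (a b : Pt) : Prop :=
  (a.1 = b.1 ∧ (a.2 = b.2 ∨ a.2 = b.2 + 1 ∨ b.2 = a.2 + 1)) ∨
  (a.2 = b.2 ∧ (a.1 = b.1 + 1 ∨ b.1 = a.1 + 1))

lemma GR.symm {a b : Pt} (h : GR a b) : GR b a := by
  unfold GR at *; omega

lemma GR.refl (a : Pt) : GR a a := by
  unfold GR; omega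

open Classical in
noncomputable def dl (a b v : Pt) : ℤ :=
  if a.2 ≠ b.2 ∧ min a.2 b.2 = v.2 ∧ v.1 < a.1 then 1 else 0

open Classical in
noncomputable def lo (f e : Pt) : ℤ :=
  if f.2 < e.2 ∨ (f.2 = e.2 ∧ e.1 < f.1) then 1 else 0

lemma lo_antisymm {a b : Pt} (h : a ≠ b) : lo a b + lo b a = 1 := by
  obtain ⟨a1, a2⟩ := a
  obtain ⟨b1, b2⟩ := b
  have : ¬ (a1 = b1 ∧ a2 = b2) := by rintro ⟨rfl, rfl⟩; exact h rfl
  unfold lo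
  dsimp only
  split_ifs <;> omega


/-- up or right step -/
def UR (a b : Pt) : Prop := (b.1 = a.1 + 1 ∧ b.2 = a.2) ∨ (b.1 = a.1 ∧ b.2 = a.2 + 1)

lemma GR.cases {a b : Pt} (h : GR a b) : a = b ∨ UR a b ∨ UR b a := by
  obtain ⟨a1, a2⟩ := a
  obtain ⟨b1, b2⟩ := b
  unfold GR at h
  unfold UR
  simp only [Prod.mk.injEq] at *
  omega

lemma dl_self (a v : Pt) : dl a a v = 0 := by simp [dl]

lemma dl_comm {a b : Pt} (h : GR a b) (v : Pt) : dl a b v = dl b a v := by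
  unfold dl GR at *
  split_ifs <;> omega

set_option maxHeartbeats 4000000 in
lemma local_check_UR {a b c d : Pt} (hab : UR a b) (hcd : UR c d)
    (h1 : a ≠ c) (h2 : a ≠ d) (h3 : b ≠ c) (h4 : b ≠ d) :
    (dl a b c + dl a b d + dl c d a + dl c d b - lo c a - lo c b - lo d a - lo d b) % 2 = 0 := by
  obtain ⟨a1, a2⟩ := a
  obtain ⟨b1, b2⟩ := b
  obtain ⟨c1, c2⟩ := c
  obtain ⟨d1, d2⟩ := d
  simp only [ne_eq, Prod.mk.injEq] at h1 h2 h3 h4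
  unfold UR at hab hcd
  unfold dl lo
  dsimp only at *
  rcases hab with ⟨rfl, rfl⟩ | ⟨rfl, rfl⟩ <;>
  rcases hcd with ⟨rfl, rfl⟩ | ⟨rfl, rfl⟩ <;>
  split_ifs <;> omega

lemma local_check {a b c d : Pt} (hab : GR a b) (hcd : GR c d)
    (h1 : a ≠ c) (h2 : a ≠ d) (h3 : b ≠ c) (h4 : b ≠ d) :
    (dl a b c + dl a b d + dl c d a + dl c d b - lo c a - lo c b - lo d a - lo d b) % 2 = 0 := by
  rcases hab.cases with rfl | hab' | hab'
  · simp only [dl_self]; omega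
  · rcases hcd.cases with rfl | hcd' | hcd'
    · simp only [dl_self]; omega
    · exact local_check_UR hab' hcd' h1 h2 h3 h4
    · have := local_check_UR hab' hcd' h2 h1 h4 h3
      rw [dl_comm hcd, dl_comm hcd]; omega
  · rcases hcd.cases with rfl | hcd' | hcd'
    · simp only [dl_self]; omega
    · have := local_check_UR hab' hcd' h3 h4 h1 h2
      rw [dl_comm hab, dl_comm hab]; omega
    · have := local_check_UR hab' hcd' h4 h3 h2 h1
      rw [dl_comm hab, dl_comm hab, dl_comm hcd, dl_comm hcd]; omega

/-- Lattice walk from `a` to `b` inside `S`, carrying its crossing function. -/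
inductive WPath (S : Set Pt) : Pt → Pt → (Pt → ℤ) → Prop
  | nil (a : Pt) (ha : a ∈ S) : WPath S a a (fun _ => 0)
  | cons (a b c : Pt) (r : Pt → ℤ) (ha : a ∈ S) (hab : GR a b) (h : WPath S b c r) :
      WPath S a c (fun v => dl a b v + r v)

lemma WPath.mem_left {S : Set Pt} {a b : Pt} {r : Pt → ℤ} (h : WPath S a b r) : a ∈ S := by
  cases h <;> assumption

lemma WPath.mem_right {S : Set Pt} {a b : Pt} {r : Pt → ℤ} (h : WPath S a b r) : b ∈ S := by
  induction h <;> assumption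

lemma T_step {S' : Set Pt} {a b c d : Pt} {r' : Pt → ℤ} (hab : GR a b)
    (h' : WPath S' c d r') (ha : a ∉ S') (hb : b ∉ S') :
    (dl a b c + dl a b d + r' a + r' b - lo c a - lo c b - lo d a - lo d b) % 2 = 0 := by
  induction h' with
  | nil c hc => simp only []; omega
  | cons c d e r hc hcd h ih =>
    have hd := h.mem_left
    have l := local_check hab hcd (fun e => ha (e ▸ hc)) (fun e => ha (e ▸ hd))
      (fun e => hb (e ▸ hc)) (fun e => hb (e ▸ hd))
    simp only []
    omega

lemma T_lemma {S S' : Set Pt} (hd : Disjoint S S') {a b c d : Pt} {r r' : Pt → ℤ}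
    (h : WPath S a b r) (h' : WPath S' c d r') :
    (r c + r d + r' a + r' b - lo c a - lo c b - lo d a - lo d b) % 2 = 0 := by
  induction h with
  | nil c hc => simp only []; omega
  | cons a b e r ha hab h ih =>
    have l := T_step hab h' (Set.disjoint_left.1 hd ha) (Set.disjoint_left.1 hd h.mem_left)
    simp only []
    omega

/-- `a` and `b` are connected inside `S`. -/
inductive Conn (S : Set Pt) : Pt → Pt → Prop
  | refl (a : Pt) (ha : a ∈ S) : Conn S a a
  | step (a b c : Pt) (ha : a ∈ S) (hab : GR a b) (h : Conn S b c) : Conn S a c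

lemma Conn.mem_left {S : Set Pt} {a b : Pt} (h : Conn S a b) : a ∈ S := by
  cases h <;> assumption

lemma Conn.mem_right {S : Set Pt} {a b : Pt} (h : Conn S a b) : b ∈ S := by
  induction h <;> assumption

lemma Conn.trans {S : Set Pt} {a b c : Pt} (h : Conn S a b) (h' : Conn S b c) : Conn S a c := by
  induction h with
  | refl => exact h'
  | step a b _ ha hab _ ih => exact Conn.step a b _ ha hab (ih h')

lemma Conn.of_adj {S : Set Pt} {a b : Pt} (ha : a ∈ S) (hb : b ∈ S) (h : GR a b) : Conn S a b :=
  Conn.step a b b ha h (Conn.refl b hb)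

lemma Conn.symm {S : Set Pt} {a b : Pt} (h : Conn S a b) : Conn S b a := by
  induction h with
  | refl a ha => exact Conn.refl a ha
  | step a b _ ha hab h ih => exact ih.trans (Conn.of_adj h.mem_left ha hab.symm)

lemma Conn.mono {S T : Set Pt} (hST : S ⊆ T) {a b : Pt} (h : Conn S a b) : Conn T a b := by
  induction h with
  | refl a ha => exact Conn.refl a (hST ha)
  | step a b _ ha hab _ ih => exact Conn.step a b _ (hST ha) hab ih

lemma Conn.path {S : Set Pt} {a b : Pt} (h : Conn S a b) : ∃ r, WPath S a b r := by
  induction h with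
  | refl a ha => exact ⟨_, WPath.nil a ha⟩
  | step a b _ ha hab _ ih => obtain ⟨r, hr⟩ := ih; exact ⟨_, WPath.cons a b _ r ha hab hr⟩

/-- No planar drawing of `K₅`. Vertices 1..5. -/
lemma no_K5 {v1 v2 v3 v4 v5 : Pt} {S12 S13 S14 S15 S23 S24 S25 S34 S35 S45 : Set Pt}
    (c12 : Conn S12 v1 v2) (c13 : Conn S13 v1 v3) (c14 : Conn S14 v1 v4) (c15 : Conn S15 v1 v5)
    (c23 : Conn S23 v2 v3) (c24 : Conn S24 v2 v4) (c25 : Conn S25 v2 v5)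
    (c34 : Conn S34 v3 v4) (c35 : Conn S35 v3 v5) (c45 : Conn S45 v4 v5)
    (d1 : Disjoint S12 S34) (d2 : Disjoint S12 S35) (d3 : Disjoint S12 S45)
    (d4 : Disjoint S13 S24) (d5 : Disjoint S13 S25) (d6 : Disjoint S13 S45)
    (d7 : Disjoint S14 S23) (d8 : Disjoint S14 S25) (d9 : Disjoint S14 S35)
    (d10 : Disjoint S15 S23) (d11 : Disjoint S15 S24) (d12 : Disjoint S15 S34)
    (d13 : Disjoint S23 S45) (d14 : Disjoint S24 S35) (d15 : Disjoint S25 S34) : False := by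
  have n12 : v1 ≠ v2 := fun h => Set.disjoint_left.1 d4 c13.mem_left (h ▸ c24.mem_left)
  have n13 : v1 ≠ v3 := fun h => Set.disjoint_left.1 d1 c12.mem_left (h ▸ c34.mem_left)
  have n14 : v1 ≠ v4 := fun h => Set.disjoint_left.1 d3 c12.mem_left (h ▸ c45.mem_left)
  have n15 : v1 ≠ v5 := fun h => Set.disjoint_left.1 d3 c12.mem_left (h ▸ c45.mem_right)
  have n23 : v2 ≠ v3 := fun h => Set.disjoint_left.1 d1 c12.mem_right (h ▸ c34.mem_left)
  have n24 : v2 ≠ v4 := fun h => Set.disjoint_left.1 d3 c12.mem_right (h ▸ c45.mem_left)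
  have n25 : v2 ≠ v5 := fun h => Set.disjoint_left.1 d3 c12.mem_right (h ▸ c45.mem_right)
  have n34 : v3 ≠ v4 := fun h => Set.disjoint_left.1 d6 c13.mem_right (h ▸ c45.mem_left)
  have n35 : v3 ≠ v5 := fun h => Set.disjoint_left.1 d6 c13.mem_right (h ▸ c45.mem_right)
  have n45 : v4 ≠ v5 := fun h => Set.disjoint_left.1 d9 c14.mem_right (h ▸ c35.mem_right)
  obtain ⟨r12, p12⟩ := c12.path
  obtain ⟨r13, p13⟩ := c13.path
  obtain ⟨r14, p14⟩ := c14.path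
  obtain ⟨r15, p15⟩ := c15.path
  obtain ⟨r23, p23⟩ := c23.path
  obtain ⟨r24, p24⟩ := c24.path
  obtain ⟨r25, p25⟩ := c25.path
  obtain ⟨r34, p34⟩ := c34.path
  obtain ⟨r35, p35⟩ := c35.path
  obtain ⟨r45, p45⟩ := c45.path
  have e1 := T_lemma d1 p12 p34
  have e2 := T_lemma d2 p12 p35
  have e3 := T_lemma d3 p12 p45
  have e4 := T_lemma d4 p13 p24
  have e5 := T_lemma d5 p13 p25
  have e6 := T_lemma d6 p13 p45
  have e7 := T_lemma d7 p14 p23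
  have e8 := T_lemma d8 p14 p25
  have e9 := T_lemma d9 p14 p35
  have e10 := T_lemma d10 p15 p23
  have e11 := T_lemma d11 p15 p24
  have e12 := T_lemma d12 p15 p34
  have e13 := T_lemma d13 p23 p45
  have e14 := T_lemma d14 p24 p35
  have e15 := T_lemma d15 p25 p34
  have m12 := lo_antisymm n12
  have m13 := lo_antisymm n13
  have m14 := lo_antisymm n14
  have m15 := lo_antisymm n15
  have m23 := lo_antisymm n23
  have m24 := lo_antisymm n24
  have m25 := lo_antisymm n25
  have m34 := lo_antisymm n34
  have m35 := lo_antisymm n35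
  have m45 := lo_antisymm n45
  omega

/-- No planar drawing of `K₃₃`. -/
lemma no_K33 {a1 a2 a3 b1 b2 b3 : Pt} {S11 S12 S13 S21 S22 S23 S31 S32 S33 : Set Pt}
    (c11 : Conn S11 a1 b1) (c12 : Conn S12 a1 b2) (c13 : Conn S13 a1 b3)
    (c21 : Conn S21 a2 b1) (c22 : Conn S22 a2 b2) (c23 : Conn S23 a2 b3)
    (c31 : Conn S31 a3 b1) (c32 : Conn S32 a3 b2) (c33 : Conn S33 a3 b3)
    (d1 : Disjoint S11 S22) (d2 : Disjoint S11 S23) (d3 : Disjoint S11 S32) (d4 : Disjoint S11 S33)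
    (d5 : Disjoint S12 S21) (d6 : Disjoint S12 S23) (d7 : Disjoint S12 S31) (d8 : Disjoint S12 S33)
    (d9 : Disjoint S13 S21) (d10 : Disjoint S13 S22) (d11 : Disjoint S13 S31)
    (d12 : Disjoint S13 S32)
    (d13 : Disjoint S21 S32) (d14 : Disjoint S21 S33) (d15 : Disjoint S22 S31)
    (d16 : Disjoint S22 S33) (d17 : Disjoint S23 S31) (d18 : Disjoint S23 S32) : False := by
  have na12 : a1 ≠ a2 := fun h => Set.disjoint_left.1 d1 c11.mem_left (h ▸ c22.mem_left)
  have na13 : a1 ≠ a3 := fun h => Set.disjoint_left.1 d3 c11.mem_left (h ▸ c32.mem_left)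
  have na23 : a2 ≠ a3 := fun h => Set.disjoint_left.1 d13 c21.mem_left (h ▸ c32.mem_left)
  have nb12 : b1 ≠ b2 := fun h => Set.disjoint_left.1 d1 c11.mem_right (h ▸ c22.mem_right)
  have nb13 : b1 ≠ b3 := fun h => Set.disjoint_left.1 d2 c11.mem_right (h ▸ c23.mem_right)
  have nb23 : b2 ≠ b3 := fun h => Set.disjoint_left.1 d6 c12.mem_right (h ▸ c23.mem_right)
  have n11 : a1 ≠ b1 := fun h => Set.disjoint_left.1 d5 c12.mem_left (h ▸ c21.mem_right)
  have n12 : a1 ≠ b2 := fun h => Set.disjoint_left.1 d1 c11.mem_left (h ▸ c22.mem_right)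
  have n13 : a1 ≠ b3 := fun h => Set.disjoint_left.1 d2 c11.mem_left (h ▸ c23.mem_right)
  have n21 : a2 ≠ b1 := fun h => Set.disjoint_left.1 d1 c11.mem_right (h ▸ c22.mem_left)
  have n22 : a2 ≠ b2 := fun h => Set.disjoint_left.1 d5 c12.mem_right (h ▸ c21.mem_left)
  have n23 : a2 ≠ b3 := fun h => Set.disjoint_left.1 d9 c13.mem_right (h ▸ c21.mem_left)
  have n31 : a3 ≠ b1 := fun h => Set.disjoint_left.1 d3 c11.mem_right (h ▸ c32.mem_left)
  have n32 : a3 ≠ b2 := fun h => Set.disjoint_left.1 d7 c12.mem_right (h ▸ c31.mem_left)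
  have n33 : a3 ≠ b3 := fun h => Set.disjoint_left.1 d11 c13.mem_right (h ▸ c31.mem_left)
  obtain ⟨r11, p11⟩ := c11.path
  obtain ⟨r12, p12⟩ := c12.path
  obtain ⟨r13, p13⟩ := c13.path
  obtain ⟨r21, p21⟩ := c21.path
  obtain ⟨r22, p22⟩ := c22.path
  obtain ⟨r23, p23⟩ := c23.path
  obtain ⟨r31, p31⟩ := c31.path
  obtain ⟨r32, p32⟩ := c32.path
  obtain ⟨r33, p33⟩ := c33.path
  have e1 := T_lemma d1 p11 p22
  have e2 := T_lemma d2 p11 p23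
  have e3 := T_lemma d3 p11 p32
  have e4 := T_lemma d4 p11 p33
  have e5 := T_lemma d5 p12 p21
  have e6 := T_lemma d6 p12 p23
  have e7 := T_lemma d7 p12 p31
  have e8 := T_lemma d8 p12 p33
  have e9 := T_lemma d9 p13 p21
  have e10 := T_lemma d10 p13 p22
  have e11 := T_lemma d11 p13 p31
  have e12 := T_lemma d12 p13 p32
  have e13 := T_lemma d13 p21 p32
  have e14 := T_lemma d14 p21 p33
  have e15 := T_lemma d15 p22 p31
  have e16 := T_lemma d16 p22 p33
  have e17 := T_lemma d17 p23 p31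
  have e18 := T_lemma d18 p23 p32
  have m1 := lo_antisymm na12
  have m2 := lo_antisymm na13
  have m3 := lo_antisymm na23
  have m4 := lo_antisymm nb12
  have m5 := lo_antisymm nb13
  have m6 := lo_antisymm nb23
  have m11 := lo_antisymm n11
  have m12 := lo_antisymm n12
  have m13 := lo_antisymm n13
  have m21 := lo_antisymm n21
  have m22 := lo_antisymm n22
  have m23 := lo_antisymm n23
  have m31 := lo_antisymm n31
  have m32 := lo_antisymm n32
  have m33 := lo_antisymm n33
  omega

/-- two lists share a point -/
def Hit (l m : List Pt) : Prop := ∃ p, p ∈ l ∧ p ∈ m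

lemma Hit.symm {l m : List Pt} (h : Hit l m) : Hit m l := by
  obtain ⟨p, h1, h2⟩ := h; exact ⟨p, h2, h1⟩

lemma Hit.mono {l m l' m' : List Pt} (h : Hit l m) (hl : l ⊆ l') (hm : m ⊆ m') : Hit l' m' := by
  obtain ⟨p, h1, h2⟩ := h; exact ⟨p, hl h1, hm h2⟩

lemma chain_pre {l m : List Pt} (h : l.IsChain GR) (hm : m <+: l) : m.IsChain GR := by
  obtain ⟨t, rfl⟩ := hm
  exact h.left_of_append

lemma chain_inf {l m : List Pt} (h : l.IsChain GR) (hm : m <:+: l) : m.IsChain GR := by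
  obtain ⟨s, t, rfl⟩ := hm
  exact h.left_of_append.right_of_append

/-- the initial part of `l` before hitting `w` -/
def tw (l w : List Pt) : List Pt := l.takeWhile (fun p => decide (p ∉ w))

/-- the part of `l` between the last `A` before first `B`, and first `B` -/
def piece (l A B : List Pt) : List Pt := (tw l B).rtakeWhile (fun p => decide (p ∉ A))

/-- the set of points of a list -/
def ls (l : List Pt) : Set Pt := {p | p ∈ l}

lemma tw_pre (l w : List Pt) : tw l w <+: l := ⟨_, List.takeWhile_append_dropWhile⟩

lemma tw_subset (l w : List Pt) : tw l w ⊆ l := (tw_pre l w).subset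

lemma tw_not_mem {l w : List Pt} {p : Pt} (h : p ∈ tw l w) : p ∉ w := by
  have := List.mem_takeWhile_imp h
  simpa using this

lemma tw_not_hit (l w : List Pt) : ¬ Hit (tw l w) w := by
  rintro ⟨p, h1, h2⟩; exact tw_not_mem h1 h2

lemma tw_cons (a : Pt) (l w : List Pt) : tw (a :: l) w = if a ∈ w then [] else a :: tw l w := by
  unfold tw
  rw [List.takeWhile_cons]
  by_cases h : a ∈ w <;> simp [h]

lemma tw_decomp {l w : List Pt} (h : Hit l w) : ∃ b rest, b ∈ w ∧ l = tw l w ++ b :: rest := by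
  induction l with
  | nil => obtain ⟨p, h1, _⟩ := h; simp at h1
  | cons a l ih =>
    rw [tw_cons]
    split_ifs with ha
    · exact ⟨a, l, ha, rfl⟩
    · have : Hit l w := by
        obtain ⟨p, h1, h2⟩ := h
        rcases List.mem_cons.1 h1 with rfl | h1
        · exact absurd h2 ha
        · exact ⟨p, h1, h2⟩
      obtain ⟨b, rest, hb, e⟩ := ih this
      exact ⟨b, rest, hb, by rw [List.cons_append, ← e]⟩

lemma rtw_decomp {u A : List Pt} (h : Hit u A) : ∃ pre a, a ∈ A ∧
    u = pre ++ a :: u.rtakeWhile (fun p => decide (p ∉ A)) := by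
  have h' : Hit u.reverse A := by
    obtain ⟨p, h1, h2⟩ := h; exact ⟨p, by simpa using h1, h2⟩
  obtain ⟨b, rest, hb, e⟩ := tw_decomp h'
  refine ⟨rest.reverse, b, hb, ?_⟩
  have := congrArg List.reverse e
  simp only [List.reverse_reverse, List.reverse_append, List.reverse_cons] at this
  unfold List.rtakeWhile
  conv_lhs => rw [this]
  simp [tw]

lemma piece_decomp {l A B : List Pt} (hB : Hit l B) (hA : Hit (tw l B) A) :
    ∃ pre a b rest, a ∈ A ∧ b ∈ B ∧ l = pre ++ a :: (piece l A B ++ b :: rest) := by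
  obtain ⟨b, rest, hb, e⟩ := tw_decomp hB
  obtain ⟨pre, a, ha, e'⟩ := rtw_decomp hA
  refine ⟨pre, a, b, rest, ha, hb, ?_⟩
  conv_lhs => rw [e, e']
  simp [piece]

lemma piece_not_mem_left {l A B : List Pt} {p : Pt} (h : p ∈ piece l A B) : p ∉ A := by
  have := List.mem_rtakeWhile_imp h
  simpa using this

lemma piece_not_mem_right {l A B : List Pt} {p : Pt} (h : p ∈ piece l A B) : p ∉ B :=
  tw_not_mem ((List.rtakeWhile_suffix _ _).subset h)

lemma piece_inf (l A B : List Pt) : piece l A B <:+: l :=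
  (List.rtakeWhile_suffix _ _).isInfix.trans (tw_pre l B).isInfix

lemma piece_head {l A B : List Pt} (hl : l.IsChain GR) (hB : Hit l B) (hA : Hit (tw l B) A) :
    ∀ p ∈ (piece l A B).head?, ∃ a ∈ A, GR a p := by
  obtain ⟨pre, a, b, rest, ha, hb, e⟩ := piece_decomp hB hA
  intro p hp
  rw [e] at hl
  have h2 := hl.right_of_append
  refine ⟨a, ha, h2.rel_head? ?_⟩
  rw [List.head?_append]
  simp at hp
  simp [hp]

lemma piece_last {l A B : List Pt} (hl : l.IsChain GR) (hB : Hit l B) (hA : Hit (tw l B) A) :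
    ∀ p ∈ (piece l A B).getLast?, ∃ b ∈ B, GR p b := by
  obtain ⟨pre, a, b, rest, ha, hb, e⟩ := piece_decomp hB hA
  intro p hp
  rw [e] at hl
  have h2 := hl.right_of_append.tail
  simp only [List.tail_cons] at h2
  refine ⟨b, hb, ?_⟩
  have := (List.isChain_append.1 h2).2.2 p hp b (by simp)
  exact this

/-- order of first hits -/
lemma tw_trans {l A B X : List Pt} (h : Hit (tw l A) B) (h' : Hit (tw l B) X) : Hit (tw l A) X := by
  have hp : tw l B <+: tw l A := by
    have : ∀ l : List Pt, Hit (tw l A) B → tw l B <+: tw l A := by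
      intro l
      induction l with
      | nil => intro _; simp [tw]
      | cons a l ih =>
        intro h
        rw [tw_cons] at h ⊢
        rw [tw_cons]
        split_ifs at h with ha
        · obtain ⟨p, h1, _⟩ := h; simp at h1
        · rw [if_neg ha]
          split_ifs with hb
          · simp
          · rw [List.cons_prefix_cons]
            refine ⟨rfl, ih ?_⟩
            obtain ⟨p, h1, h2⟩ := h
            rcases List.mem_cons.1 h1 with rfl | h1
            · exact absurd h2 hb
            · exact ⟨p, h1, h2⟩
    exact this l h
  exact h'.mono hp.subset (List.Subset.refl _)

lemma tw_total {l A B : List Pt} (hd : ¬ Hit A B) (hA : Hit l A) (hB : Hit l B) :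
    Hit (tw l A) B ∨ Hit (tw l B) A := by
  induction l with
  | nil => obtain ⟨p, h1, _⟩ := hA; simp at h1
  | cons a l ih =>
    rw [tw_cons, tw_cons]
    by_cases ha : a ∈ A
    · have hb : a ∉ B := fun h => hd ⟨a, ha, h⟩
      right; rw [if_neg hb]; exact ⟨a, by simp, ha⟩
    · by_cases hb : a ∈ B
      · left; rw [if_neg ha]; exact ⟨a, by simp, hb⟩
      · rw [if_neg ha, if_neg hb]
        have hA' : Hit l A := by
          obtain ⟨p, h1, h2⟩ := hA
          rcases List.mem_cons.1 h1 with rfl | h1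
          · exact absurd h2 ha
          · exact ⟨p, h1, h2⟩
        have hB' : Hit l B := by
          obtain ⟨p, h1, h2⟩ := hB
          rcases List.mem_cons.1 h1 with rfl | h1
          · exact absurd h2 hb
          · exact ⟨p, h1, h2⟩
        rcases ih hA' hB' with h | h
        · left; exact h.mono (List.subset_cons_self _ _) (List.Subset.refl _)
        · right; exact h.mono (List.subset_cons_self _ _) (List.Subset.refl _)

lemma rtw_total {u A B : List Pt} (hd : ¬ Hit A B) (hA : Hit u A) (hB : Hit u B) :
    Hit (u.rtakeWhile (fun p => decide (p ∉ A))) B ∨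
    Hit (u.rtakeWhile (fun p => decide (p ∉ B))) A := by
  have r : ∀ X : List Pt, Hit u X → Hit u.reverse X := by
    rintro X ⟨p, h1, h2⟩; exact ⟨p, by simpa using h1, h2⟩
  have r' : ∀ X Y : List Pt, Hit (tw u.reverse X) Y →
      Hit (u.rtakeWhile (fun p => decide (p ∉ X))) Y := by
    rintro X Y ⟨p, h1, h2⟩
    refine ⟨p, ?_, h2⟩
    unfold List.rtakeWhile
    simpa [tw] using h1
  rcases tw_total hd (r _ hA) (r _ hB) with h | h
  · exact Or.inl (r' _ _ h)
  · exact Or.inr (r' _ _ h)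

/-- `l` runs from `A` to `B` via `C` -/
def Valid (l A B C : List Pt) : Prop := Hit l B ∧ Hit (tw l B) A ∧ Hit (piece l A B) C

lemma valid_of_last {l A B C : List Pt} (hAC : ¬ Hit A C) (hA : Hit (tw l B) A)
    (hC : Hit (tw l B) C) (hB : Hit l B) : Valid l A B C ∨ Valid l C B A := by
  rcases rtw_total hAC hA hC with h | h
  · exact Or.inl ⟨hB, hA, h⟩
  · exact Or.inr ⟨hB, hC, h⟩

lemma three_last {l h0 h1 h2 : List Pt} (d01 : ¬ Hit h0 h1) (d02 : ¬ Hit h0 h2) (d12 : ¬ Hit h1 h2)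
    (k0 : Hit l h0) (k1 : Hit l h1) (k2 : Hit l h2) :
    (Hit (tw l h0) h1 ∧ Hit (tw l h0) h2) ∨ (Hit (tw l h1) h0 ∧ Hit (tw l h1) h2) ∨
    (Hit (tw l h2) h0 ∧ Hit (tw l h2) h1) := by
  rcases tw_total d01 k0 k1 with a | a <;> rcases tw_total d02 k0 k2 with b | b <;>
    rcases tw_total d12 k1 k2 with c | c
  · exact Or.inl ⟨a, b⟩
  · exact Or.inl ⟨a, b⟩
  · exact Or.inl ⟨a, tw_trans a c⟩
  · exact Or.inr (Or.inr ⟨b, c⟩)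
  · exact Or.inr (Or.inl ⟨a, c⟩)
  · exact Or.inr (Or.inl ⟨a, tw_trans a b⟩)
  · exact Or.inr (Or.inl ⟨a, c⟩)
  · exact Or.inr (Or.inr ⟨b, c⟩)

lemma p_claim {l : List Pt} (h : Fin 3 → List Pt) (hd : ∀ i j, i ≠ j → ¬ Hit (h i) (h j))
    (hl : ∀ i, Hit l (h i)) : ∃ σ : Equiv.Perm (Fin 3), Valid l (h (σ 0)) (h (σ 1)) (h (σ 2)) := by
  have key : ∀ i j k : Fin 3, i ≠ j → i ≠ k → j ≠ k → Valid l (h i) (h j) (h k) →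
      ∃ σ : Equiv.Perm (Fin 3), Valid l (h (σ 0)) (h (σ 1)) (h (σ 2)) := by
    intro i j k hij hik hjk hv
    have : ∃ σ : Equiv.Perm (Fin 3), σ 0 = i ∧ σ 1 = j ∧ σ 2 = k := by
      clear hv; revert i j k; decide
    obtain ⟨σ, rfl, rfl, rfl⟩ := this
    exact ⟨σ, hv⟩
  rcases three_last (hd 0 1 (by decide)) (hd 0 2 (by decide)) (hd 1 2 (by decide))
    (hl 0) (hl 1) (hl 2) with ⟨a, b⟩ | ⟨a, b⟩ | ⟨a, b⟩
  · rcases valid_of_last (hd 1 2 (by decide)) a b (hl 0) with v | v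
    · exact key 1 0 2 (by decide) (by decide) (by decide) v
    · exact key 2 0 1 (by decide) (by decide) (by decide) v
  · rcases valid_of_last (hd 0 2 (by decide)) a b (hl 1) with v | v
    · exact key 0 1 2 (by decide) (by decide) (by decide) v
    · exact key 2 1 0 (by decide) (by decide) (by decide) v
  · rcases valid_of_last (hd 0 1 (by decide)) a b (hl 2) with v | v
    · exact key 0 2 1 (by decide) (by decide) (by decide) v
    · exact key 1 2 0 (by decide) (by decide) (by decide) v

/-- among four disjoint sets hit by `l` there is one which is hit last -/
lemma four_last {l : List Pt} (h : Fin 4 → List Pt) (hd : ∀ i j, i ≠ j → ¬ Hit (h i) (h j))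
    (hl : ∀ i, Hit l (h i)) : ∃ i, ∀ j, j ≠ i → Hit (tw l (h i)) (h j) := by
  have tot : ∀ i j, i ≠ j → Hit (tw l (h i)) (h j) ∨ Hit (tw l (h j)) (h i) := fun i j hij =>
    tw_total (hd i j hij) (hl i) (hl j)
  have aux : ∀ s : Finset (Fin 4), s.Nonempty → ∃ i ∈ s, ∀ j ∈ s, j ≠ i → Hit (tw l (h i)) (h j) := by
    intro s hs
    induction hs using Finset.Nonempty.cons_induction with
    | singleton a => exact ⟨a, by simp, fun j hj hne => absurd (by simpa using hj) hne⟩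
    | cons a s ha hs ih =>
      obtain ⟨i, hi, hi'⟩ := ih
      have hai : a ≠ i := fun e => ha (e ▸ hi)
      rcases tot a i hai with t | t
      · refine ⟨a, by simp, fun j hj hne => ?_⟩
        rcases Finset.mem_cons.1 hj with rfl | hj
        · exact absurd rfl hne
        · by_cases hji : j = i
          · rw [hji]; exact t
          · exact tw_trans t (hi' j hj hji)
      · refine ⟨i, by simp [hi], fun j hj hne => ?_⟩
        rcases Finset.mem_cons.1 hj with rfl | hj
        · exact t
        · exact hi' j hj hne
  obtain ⟨i, _, hi⟩ := aux Finset.univ ⟨0, by simp⟩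
  exact ⟨i, fun j hj => hi j (by simp) hj⟩

lemma conn_of_chain {l : List Pt} (hl : l.IsChain GR) {a b : Pt} (ha : a ∈ l) (hb : b ∈ l) :
    Conn (ls l) a b := by
  have aux : ∀ l : List Pt, l.IsChain GR → ∀ x ∈ l.head?, ∀ b ∈ l, Conn (ls l) x b := by
    intro l
    induction l with
    | nil => intro _ x hx; simp at hx
    | cons c l ih =>
      intro hl x hx b hb
      simp at hx
      subst hx
      rcases List.mem_cons.1 hb with rfl | hb
      · exact Conn.refl _ (by simp [ls])
      · have hne : l ≠ [] := List.ne_nil_of_mem hb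
        obtain ⟨y, l', rfl⟩ := List.exists_cons_of_ne_nil hne
        have h1 := ih hl.tail y (by simp) b hb
        refine Conn.step _ y _ (by simp [ls]) (hl.rel_head? (by simp)) (h1.mono ?_)
        intro p hp; simp only [ls, Set.mem_ofPred_eq] at hp ⊢; exact List.mem_cons_of_mem _ hp
  have hne : l ≠ [] := List.ne_nil_of_mem ha
  obtain ⟨y, l', rfl⟩ := List.exists_cons_of_ne_nil hne
  exact (aux _ hl y (by simp) a ha).symm.trans (aux _ hl y (by simp) b hb)

open Classical in
/-- number of elements satisfying `P` -/
noncomputable def cnt {Ω : Type*} [Fintype Ω] (P : Ω → Prop) : ℕ := (Finset.univ.filter P).card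

/-- density of `P` -/
noncomputable def dens {Ω : Type*} [Fintype Ω] (P : Ω → Prop) : ℝ :=
  (cnt P : ℝ) / (Fintype.card Ω : ℝ)

section dens
variable {Ω Ω' : Type*} [Fintype Ω] [Fintype Ω']

lemma cnt_mono {P Q : Ω → Prop} (h : ∀ x, P x → Q x) : cnt P ≤ cnt Q := by
  classical
  unfold cnt
  exact Finset.card_le_card (fun x hx => by simp at hx ⊢; exact h x hx)

lemma cnt_le_card (P : Ω → Prop) : cnt P ≤ Fintype.card Ω := by
  classical
  unfold cnt
  exact Finset.card_filter_le _ _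

lemma cnt_eq_sum (P : Ω → Prop) [DecidablePred P] :
    (cnt P : ℝ) = ∑ x, if P x then (1 : ℝ) else 0 := by
  classical
  unfold cnt
  rw [Finset.sum_ite]
  simp only [Finset.sum_const, nsmul_eq_mul, mul_one, mul_zero, add_zero]
  congr!

lemma cnt_equiv (e : Ω ≃ Ω') (P : Ω' → Prop) : cnt (fun x => P (e x)) = cnt P := by
  classical
  unfold cnt
  refine Finset.card_bij (fun x _ => e x) ?_ ?_ ?_
  · intro a ha; simpa using ha
  · intro a _ b _ h; exact e.injective h
  · intro b hb; exact ⟨e.symm b, by simpa using hb, by simp⟩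

lemma cnt_or (P Q : Ω → Prop) : cnt (fun x => P x ∨ Q x) ≤ cnt P + cnt Q := by
  classical
  unfold cnt
  refine le_trans (Finset.card_le_card (t := Finset.univ.filter P ∪ Finset.univ.filter Q) ?_)
    (Finset.card_union_le _ _)
  intro x hx
  simpa using hx

lemma cnt_prod (P : Ω × Ω' → Prop) : cnt P = ∑ a, cnt (fun b => P (a, b)) := by
  classical
  have : ((cnt P : ℕ) : ℝ) = ((∑ a, cnt (fun b => P (a, b)) : ℕ) : ℝ) := by
    rw [cnt_eq_sum, Nat.cast_sum, Fintype.sum_prod_type]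
    refine Finset.sum_congr rfl fun a _ => ?_
    rw [cnt_eq_sum]
  exact_mod_cast this

lemma card_pos_real [Nonempty Ω] : (0 : ℝ) < Fintype.card Ω := by
  exact_mod_cast Fintype.card_pos

lemma dens_nonneg (P : Ω → Prop) : 0 ≤ dens P := by unfold dens; positivity

lemma dens_le_one (P : Ω → Prop) : dens P ≤ 1 := by
  unfold dens
  apply div_le_one_of_le₀
  · exact_mod_cast cnt_le_card P
  · positivity

lemma dens_mono {P Q : Ω → Prop} (h : ∀ x, P x → Q x) : dens P ≤ dens Q := by
  unfold dens
  have : (cnt P : ℝ) ≤ cnt Q := by exact_mod_cast cnt_mono h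
  gcongr

lemma dens_equiv (e : Ω ≃ Ω') (P : Ω' → Prop) : dens (fun x => P (e x)) = dens P := by
  unfold dens
  rw [cnt_equiv e P, Fintype.card_congr e]

lemma dens_or (P Q : Ω → Prop) : dens (fun x => P x ∨ Q x) ≤ dens P + dens Q := by
  unfold dens
  have : (cnt (fun x => P x ∨ Q x) : ℝ) ≤ cnt P + cnt Q := by exact_mod_cast cnt_or P Q
  rw [← add_div]
  gcongr

lemma dens_exists {ι : Type*} (s : Finset ι) (P : ι → Ω → Prop) :
    dens (fun x => ∃ i ∈ s, P i x) ≤ ∑ i ∈ s, dens (P i) := by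
  classical
  induction s using Finset.induction_on with
  | empty => simp [dens, cnt]
  | insert a s ha ih =>
    rw [Finset.sum_insert ha]
    refine le_trans (dens_mono (Q := fun x => P a x ∨ ∃ i ∈ s, P i x) ?_)
      ((dens_or _ _).trans (by linarith))
    rintro x ⟨i, hi, h⟩
    rcases Finset.mem_insert.1 hi with rfl | hi
    · exact Or.inl h
    · exact Or.inr ⟨i, hi, h⟩

/-- pigeonhole -/
lemma dens_pigeon {ι : Type*} [Fintype ι] {Q : Ω → Prop} (P : ι → Ω → Prop) {c : ℝ}
    (hQ : c ≤ dens Q) (h : ∀ x, Q x → ∃ i, P i x) [Nonempty ι] :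
    ∃ i, c / Fintype.card ι ≤ dens (P i) := by
  by_contra! hc
  have h1 : dens Q ≤ ∑ i, dens (P i) :=
    (dens_mono (fun x hx => by simpa using h x hx)).trans (dens_exists Finset.univ P)
  have h2 : ∑ i, dens (P i) < ∑ i : ι, c / Fintype.card ι :=
    Finset.sum_lt_sum_of_nonempty Finset.univ_nonempty fun i _ => hc i
  have h3 : ∑ i : ι, c / Fintype.card ι = c := by
    rw [Finset.sum_const, Finset.card_univ, nsmul_eq_mul]
    have : (0 : ℝ) < Fintype.card ι := card_pos_real
    field_simp
  linarith

lemma dens_diff {P Q : Ω → Prop} {a b : ℝ} (hP : a ≤ dens P) (hQ : dens Q ≤ b) :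
    a - b ≤ dens (fun x => P x ∧ ¬ Q x) := by
  have := dens_or (fun x => P x ∧ ¬ Q x) Q
  have h2 : dens P ≤ dens (fun x => (P x ∧ ¬ Q x) ∨ Q x) := dens_mono (fun x hx => by tauto)
  linarith

lemma dens_prod (P : Ω × Ω' → Prop) :
    dens P = (∑ a, dens (fun b => P (a, b))) / Fintype.card Ω := by
  unfold dens
  rw [cnt_prod, Fintype.card_prod, ← Finset.sum_div]
  push_cast
  rw [div_div, mul_comm]

lemma dens_prod_exists [Nonempty Ω] {P : Ω × Ω' → Prop} {c : ℝ} (h : c ≤ dens P) :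
    ∃ a, c ≤ dens (fun b => P (a, b)) := by
  by_contra! hc
  rw [dens_prod, le_div_iff₀ card_pos_real] at h
  have h2 : ∑ a, dens (fun b => P (a, b)) < ∑ _a : Ω, c :=
    Finset.sum_lt_sum_of_nonempty Finset.univ_nonempty fun i _ => hc i
  rw [Finset.sum_const, Finset.card_univ, nsmul_eq_mul] at h2
  linarith

lemma dens_prod_le [Nonempty Ω] {P : Ω × Ω' → Prop} {c : ℝ} (h : ∀ a, dens (fun b => P (a, b)) ≤ c) :
    dens P ≤ c := by
  rw [dens_prod, div_le_iff₀ card_pos_real]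
  calc ∑ a, dens (fun b => P (a, b)) ≤ ∑ _a : Ω, c := Finset.sum_le_sum fun a _ => h a
    _ = c * Fintype.card Ω := by rw [Finset.sum_const, Finset.card_univ, nsmul_eq_mul]; ring

lemma dens_prod_ge {P : Ω × Ω' → Prop} {c d : ℝ} (hc : 0 ≤ c)
    (h : d ≤ dens (fun a => c ≤ dens (fun b => P (a, b)))) : c * d ≤ dens P := by
  classical
  rw [dens_prod]
  calc c * d ≤ c * dens (fun a => c ≤ dens (fun b => P (a, b))) := by gcongr
    _ = (∑ a, c * if c ≤ dens (fun b => P (a, b)) then (1 : ℝ) else 0) / Fintype.card Ω := by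
      rw [dens.eq_1 (fun a => c ≤ dens (fun b => P (a, b))), cnt_eq_sum, ← Finset.mul_sum]
      ring
    _ ≤ _ := by
      gcongr with a
      split_ifs with h
      · simpa using h
      · simpa using dens_nonneg _

lemma dens_snd [Nonempty Ω] (P : Ω' → Prop) : dens (fun x : Ω × Ω' => P x.2) = dens P := by
  rw [dens_prod]
  have : (0 : ℝ) < Fintype.card Ω := card_pos_real
  simp only [Finset.sum_const, Finset.card_univ, nsmul_eq_mul]
  field_simp

lemma dens_fst [Nonempty Ω'] (P : Ω → Prop) : dens (fun x : Ω × Ω' => P x.1) = dens P := by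
  rw [← dens_snd (Ω := Ω') P]
  exact dens_equiv (Equiv.prodComm Ω Ω') (fun x => P x.2)

lemma dens_pi {ι : Type*} [Fintype ι] [DecidableEq ι] (P : ι → Ω → Prop) :
    dens (fun f : ι → Ω => ∀ i, P i (f i)) = ∏ i, dens (P i) := by
  classical
  unfold dens cnt
  rw [Finset.prod_div_distrib]
  congr 1
  · rw [← Nat.cast_prod, ← Fintype.card_piFinset]
    congr 2
    ext f
    simp
  · simp

lemma dens_star (m : ℕ) [Nonempty Ω] (R : Ω → Ω' → Prop) :
    (dens (fun x : Ω × Ω' => R x.1 x.2)) ^ m ≤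
      dens (fun x : Ω × (Fin m → Ω') => ∀ i, R x.1 (x.2 i)) := by
  rw [dens_prod, dens_prod]
  have h1 : ∀ a : Ω, dens (fun b : Fin m → Ω' => ∀ i, R (a, b).1 ((a, b).2 i)) =
      (dens (fun b => R a b)) ^ m := by
    intro a
    rw [dens_pi (fun _ => R a)]
    simp
  simp only [h1]
  have hc : (0 : ℝ) < Fintype.card Ω := card_pos_real
  have := Real.pow_arith_mean_le_arith_mean_pow Finset.univ (fun _ : Ω => 1 / (Fintype.card Ω : ℝ))
    (fun a => dens (fun b => R a b)) (fun _ _ => by positivity)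
    (by simp) (fun _ _ => dens_nonneg _) m
  rw [← Finset.mul_sum, ← Finset.mul_sum] at this
  rw [div_eq_inv_mul, div_eq_inv_mul]
  simpa using this

lemma dens_comp {ι κ : Type*} [Fintype ι] [Fintype κ] [DecidableEq ι] [DecidableEq κ] [Nonempty Ω]
    (e : κ → ι)
    (he : Function.Injective e) (P : (κ → Ω) → Prop) :
    dens (fun f : ι → Ω => P (fun k => f (e k))) = dens P := by
  classical
  let E1 := Equiv.piEquivPiSubtypeProd (fun i => i ∈ Set.range e) (fun _ : ι => Ω)
  let E2 : ({i // i ∈ Set.range e} → Ω) ≃ (κ → Ω) :=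
    Equiv.arrowCongr (Equiv.ofInjective e he).symm (Equiv.refl Ω)
  have h1 := dens_equiv E1 (fun x => P (E2 x.1))
  rw [dens_fst (fun x => P (E2 x)), dens_equiv E2] at h1
  exact h1

lemma dens_update {ι : Type*} [Fintype ι] [DecidableEq ι] [Nonempty Ω] (k : ι) (P : (ι → Ω) → Prop)
    {c : ℝ} (h : ∀ f, dens (fun x => P (Function.update f k x)) ≤ c) : dens P ≤ c := by
  let E : ((ι → Ω) × Ω) ≃ ((ι → Ω) × Ω) :=
    { toFun := fun x => (Function.update x.1 k x.2, x.1 k)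
      invFun := fun x => (Function.update x.1 k x.2, x.1 k)
      left_inv := fun x => by ext <;> simp
      right_inv := fun x => by ext <;> simp }
  have h1 := dens_equiv E (fun x => P x.1)
  rw [dens_fst] at h1
  rw [← h1]
  exact dens_prod_le h

lemma dens_le_of_cnt {P : Ω → Prop} {c : ℝ} (hc : 0 ≤ c) (h : (cnt P : ℝ) ≤ c * Fintype.card Ω) :
    dens P ≤ c := by
  unfold dens
  exact div_le_of_le_mul₀ (by positivity) hc h

lemma le_cnt_of_dens [Nonempty Ω] {P : Ω → Prop} {c : ℝ} (h : c ≤ dens P) :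
    c * Fintype.card Ω ≤ cnt P := by
  unfold dens at h
  rwa [le_div_iff₀ card_pos_real] at h

lemma le_dens_of_cnt [Nonempty Ω] {P : Ω → Prop} {c : ℝ} (h : c * Fintype.card Ω ≤ cnt P) :
    c ≤ dens P := by
  unfold dens
  rwa [le_div_iff₀ card_pos_real]

lemma cnt_le_of_dens [Nonempty Ω] {P : Ω → Prop} {c : ℝ} (h : dens P ≤ c) :
    (cnt P : ℝ) ≤ c * Fintype.card Ω := by
  unfold dens at h
  rwa [div_le_iff₀ card_pos_real] at h

end dens

section ramsey
variable {α : Type*} [DecidableEq α] (R : α → α → Prop)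

def Ind3 (s : Finset α) : Prop := ∃ a ∈ s, ∃ b ∈ s, ∃ c ∈ s, a ≠ b ∧ a ≠ c ∧ b ≠ c ∧
  ¬ R a b ∧ ¬ R a c ∧ ¬ R b c

lemma Ind3.mono {R : α → α → Prop} {s t : Finset α} (h : Ind3 R s) (hst : s ⊆ t) : Ind3 R t := by
  obtain ⟨a, ha, b, hb, c, hc, h⟩ := h
  exact ⟨a, hst ha, b, hst hb, c, hst hc, h⟩

lemma ramsey33 (s : Finset α) (hs : 6 ≤ s.card) :
    Ind3 R s ∨ ∃ a ∈ s, ∃ b ∈ s, ∃ c ∈ s, a ≠ b ∧ a ≠ c ∧ b ≠ c ∧ R a b ∧ R a c ∧ R b c := by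
  classical
  obtain ⟨v, hv⟩ : s.Nonempty := Finset.card_pos.1 (by omega)
  have h1 : ((s.erase v).filter (R v)).card + ((s.erase v).filter (fun x => ¬ R v x)).card =
    (s.erase v).card := Finset.card_filter_add_card_filter_not _
  rw [Finset.card_erase_of_mem hv] at h1
  have : 2 < ((s.erase v).filter (R v)).card ∨ 2 < ((s.erase v).filter (fun x => ¬ R v x)).card := by
    omega
  rcases this with h | h
  · obtain ⟨a, b, c, ha, hb, hc, hab, hac, hbc⟩ := Finset.two_lt_card_iff.1 h
    simp only [Finset.mem_filter, Finset.mem_erase] at ha hb hc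
    by_cases k1 : R a b
    · exact Or.inr ⟨v, hv, a, ha.1.2, b, hb.1.2, ha.1.1.symm, hb.1.1.symm, hab, ha.2, hb.2, k1⟩
    by_cases k2 : R a c
    · exact Or.inr ⟨v, hv, a, ha.1.2, c, hc.1.2, ha.1.1.symm, hc.1.1.symm, hac, ha.2, hc.2, k2⟩
    by_cases k3 : R b c
    · exact Or.inr ⟨v, hv, b, hb.1.2, c, hc.1.2, hb.1.1.symm, hc.1.1.symm, hbc, hb.2, hc.2, k3⟩
    exact Or.inl ⟨a, ha.1.2, b, hb.1.2, c, hc.1.2, hab, hac, hbc, k1, k2, k3⟩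
  · obtain ⟨a, b, c, ha, hb, hc, hab, hac, hbc⟩ := Finset.two_lt_card_iff.1 h
    simp only [Finset.mem_filter, Finset.mem_erase] at ha hb hc
    by_cases k1 : R a b
    · by_cases k2 : R a c
      · by_cases k3 : R b c
        · exact Or.inr ⟨a, ha.1.2, b, hb.1.2, c, hc.1.2, hab, hac, hbc, k1, k2, k3⟩
        · exact Or.inl ⟨v, hv, b, hb.1.2, c, hc.1.2, hb.1.1.symm, hc.1.1.symm, hbc, hb.2, hc.2, k3⟩
      · exact Or.inl ⟨v, hv, a, ha.1.2, c, hc.1.2, ha.1.1.symm, hc.1.1.symm, hac, ha.2, hc.2, k2⟩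
    · exact Or.inl ⟨v, hv, a, ha.1.2, b, hb.1.2, ha.1.1.symm, hb.1.1.symm, hab, ha.2, hb.2, k1⟩

lemma ramsey34 (s : Finset α) (hs : 10 ≤ s.card) :
    Ind3 R s ∨ ∃ a ∈ s, ∃ b ∈ s, ∃ c ∈ s, ∃ d ∈ s, a ≠ b ∧ a ≠ c ∧ a ≠ d ∧ b ≠ c ∧ b ≠ d ∧ c ≠ d ∧
      R a b ∧ R a c ∧ R a d ∧ R b c ∧ R b d ∧ R c d := by
  classical
  obtain ⟨v, hv⟩ : s.Nonempty := Finset.card_pos.1 (by omega)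
  have h1 : ((s.erase v).filter (R v)).card + ((s.erase v).filter (fun x => ¬ R v x)).card =
    (s.erase v).card := Finset.card_filter_add_card_filter_not _
  rw [Finset.card_erase_of_mem hv] at h1
  by_cases h : 6 ≤ ((s.erase v).filter (R v)).card
  · rcases ramsey33 R _ h with k | ⟨a, ha, b, hb, c, hc, hab, hac, hbc, k⟩
    · exact Or.inl (k.mono ((Finset.filter_subset _ _).trans (Finset.erase_subset _ _)))
    · simp only [Finset.mem_filter, Finset.mem_erase] at ha hb hc
      exact Or.inr ⟨v, hv, a, ha.1.2, b, hb.1.2, c, hc.1.2, ha.1.1.symm, hb.1.1.symm, hc.1.1.symm,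
        hab, hac, hbc, ha.2, hb.2, hc.2, k⟩
  · have h4 : 4 ≤ ((s.erase v).filter (fun x => ¬ R v x)).card := by omega
    by_cases hcl : ∃ a ∈ (s.erase v).filter (fun x => ¬ R v x),
        ∃ b ∈ (s.erase v).filter (fun x => ¬ R v x), a ≠ b ∧ ¬ R a b
    · obtain ⟨a, ha, b, hb, hab, k⟩ := hcl
      simp only [Finset.mem_filter, Finset.mem_erase] at ha hb
      exact Or.inl ⟨v, hv, a, ha.1.2, b, hb.1.2, ha.1.1.symm, hb.1.1.symm, hab, ha.2, hb.2, k⟩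
    · push Not at hcl
      set N := (s.erase v).filter (fun x => ¬ R v x) with hN
      have hNs : N ⊆ s := (Finset.filter_subset _ _).trans (Finset.erase_subset _ _)
      obtain ⟨d, hd⟩ : N.Nonempty := Finset.card_pos.1 (by omega)
      have h3 : 2 < (N.erase d).card := by rw [Finset.card_erase_of_mem hd]; omega
      obtain ⟨a, b, c, ha, hb, hc, hab, hac, hbc⟩ := Finset.two_lt_card_iff.1 h3
      simp only [Finset.mem_erase] at ha hb hc
      exact Or.inr ⟨a, hNs ha.2, b, hNs hb.2, c, hNs hc.2, d, hNs hd, hab, hac, ha.1, hbc, hb.1, hc.1,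
        hcl a ha.2 b hb.2 hab, hcl a ha.2 c hc.2 hac, hcl a ha.2 d hd ha.1, hcl b hb.2 c hc.2 hbc,
        hcl b hb.2 d hd hb.1, hcl c hc.2 d hd hc.1⟩
end ramsey

/-- the configuration found in a 5-clique -/
def Cfg (F : Fin 5 → Fin 5 → ℕ) : Prop := ∃ x y z c : Fin 5, x ≠ y ∧ x ≠ z ∧ x ≠ c ∧ y ≠ z ∧ y ≠ c ∧
  z ≠ c ∧ F x z < F x c ∧ F x z < F x y ∧ F y z < F y c

lemma five_core (F : Fin 5 → Fin 5 → ℕ)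
    (hne : ∀ x i j, i ≠ j → i ≠ x → j ≠ x → F x i ≠ F x j)
    (h0 : ∀ j, j ≠ 0 → j ≠ 1 → F 0 1 < F 0 j) : Cfg F := by
  by_contra hc
  have N : ∀ x y z c : Fin 5, x ≠ y → x ≠ z → x ≠ c → y ≠ z → y ≠ c → z ≠ c →
      F x z < F x c → F x z < F x y → F y c < F y z := by
    intro x y z c a1 a2 a3 a4 a5 a6 b1 b2
    by_contra hlt
    have := hne y z c a6 a4.symm a5.symm
    exact hc ⟨x, y, z, c, a1, a2, a3, a4, a5, a6, b1, b2, by omega⟩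
  have i02 := h0 2 (by decide) (by decide)
  have i03 := h0 3 (by decide) (by decide)
  have i04 := h0 4 (by decide) (by decide)
  -- for y in 2,3,4 : `F y c < F y 1`
  have e23 := N 0 2 1 3 (by decide) (by decide) (by decide) (by decide) (by decide) (by decide) i03 i02
  have e24 := N 0 2 1 4 (by decide) (by decide) (by decide) (by decide) (by decide) (by decide) i04 i02
  have e32 := N 0 3 1 2 (by decide) (by decide) (by decide) (by decide) (by decide) (by decide) i02 i03
  have e34 := N 0 3 1 4 (by decide) (by decide) (by decide) (by decide) (by decide) (by decide) i04 i03
  have e42 := N 0 4 1 2 (by decide) (by decide) (by decide) (by decide) (by decide) (by decide) i02 i04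
  have e43 := N 0 4 1 3 (by decide) (by decide) (by decide) (by decide) (by decide) (by decide) i03 i04
  rcases lt_or_gt_of_ne (hne 2 3 4 (by decide) (by decide) (by decide)) with h | h
  · have := N 2 4 3 1 (by decide) (by decide) (by decide) (by decide) (by decide) (by decide) e23 h
    omega
  · have := N 2 3 4 1 (by decide) (by decide) (by decide) (by decide) (by decide) (by decide) e24 h
    omega

lemma five_claim (F : Fin 5 → Fin 5 → ℕ)
    (hne : ∀ x i j, i ≠ j → i ≠ x → j ≠ x → F x i ≠ F x j) : Cfg F := by
  obtain ⟨m, hm, hmin⟩ := Finset.exists_min_image (Finset.univ.erase (0 : Fin 5)) (fun j => F 0 j)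
    ⟨1, by decide⟩
  have hm0 : m ≠ 0 := (Finset.mem_erase.1 hm).1
  let σ : Equiv.Perm (Fin 5) := Equiv.swap 1 m
  have s0 : σ 0 = 0 := Equiv.swap_apply_of_ne_of_ne (by decide) hm0.symm
  have s1 : σ 1 = m := Equiv.swap_apply_left _ _
  have := five_core (fun i j => F (σ i) (σ j))
    (fun x i j h1 h2 h3 => hne _ _ _ (σ.injective.ne h1) (σ.injective.ne h2) (σ.injective.ne h3))
    (by
      intro j j0 j1
      show F (σ 0) (σ 1) < F (σ 0) (σ j)
      rw [s0, s1]
      have hj0 : σ j ≠ 0 := by rw [← s0]; exact σ.injective.ne j0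
      have hj1 : σ j ≠ m := by rw [← s1]; exact σ.injective.ne j1
      have a := hmin (σ j) (Finset.mem_erase.2 ⟨hj0, Finset.mem_univ _⟩)
      have b := hne 0 m (σ j) hj1.symm hm0 hj0
      omega)
  obtain ⟨x, y, z, c, a1, a2, a3, a4, a5, a6, b⟩ := this
  exact ⟨σ x, σ y, σ z, σ c, σ.injective.ne a1, σ.injective.ne a2, σ.injective.ne a3,
    σ.injective.ne a4, σ.injective.ne a5, σ.injective.ne a6, b⟩

/-- length of the part before first hit -/
def fl (a b : List Pt) : ℕ := (tw a b).length

lemma fl_le (a b : List Pt) : fl a b ≤ a.length := (tw_pre a b).length_le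

lemma fl_lt_iff (a b : List Pt) : fl a b < a.length ↔ Hit a b := by
  constructor
  · intro h
    by_contra hn
    have : tw a b = a := by
      unfold tw
      rw [List.takeWhile_eq_self_iff]
      intro x hx
      simp only [decide_eq_true_eq]
      exact fun hb => hn ⟨x, hx, hb⟩
    unfold fl at h
    rw [this] at h
    exact lt_irrefl _ h
  · intro h
    obtain ⟨b0, rest, _, e⟩ := tw_decomp h
    unfold fl
    conv_rhs => rw [e]
    simp

lemma fl_point {a b : List Pt} (h : fl a b < a.length) : ∃ p, a[fl a b]? = some p ∧ p ∈ b := by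
  obtain ⟨b0, rest, hb, e⟩ := tw_decomp ((fl_lt_iff a b).1 h)
  refine ⟨b0, ?_, hb⟩
  have : ∀ n, n = (tw a b).length → (tw a b ++ b0 :: rest)[n]? = some b0 := by
    rintro n rfl; simp
  rw [← e] at this
  exact this _ rfl

lemma hit_of_fl_lt {x z w : List Pt} (h : fl x z < fl x w) : Hit z (tw x w) := by
  have h1 : fl x z < x.length := h.trans_le (fl_le x w)
  obtain ⟨b0, rest, hb, e⟩ := tw_decomp ((fl_lt_iff x z).1 h1)
  have p1 : tw x z ++ [b0] <+: x := ⟨rest, by simpa using e.symm⟩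
  have p2 := List.prefix_of_prefix_length_le p1 (tw_pre x w) (by
    simp only [List.length_append, List.length_singleton]; exact h)
  exact ⟨b0, hb, p2.subset (by simp)⟩

lemma not_hit_of_fl_le {x w c : List Pt} (h : fl x w ≤ fl x c) : ¬ Hit (tw x w) c := by
  have p := List.prefix_of_prefix_length_le (tw_pre x w) (tw_pre x c) h
  rintro ⟨q, h1, h2⟩
  exact tw_not_mem (p.subset h1) h2

section tri
variable {V : Type} [Fintype V]

/-- weak biclique of size `s` -/
def WB (l : V → List Pt) (s : ℝ) : Prop := ∃ A B : Finset V, s ≤ A.card ∧ s ≤ B.card ∧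
  ∀ a ∈ A, ∀ b ∈ B, Hit (l a) (l b)

lemma tie_bound (l : V → List Pt) {δ : ℝ} (hδ : 0 ≤ δ) (hWB : ¬ WB l (δ * Fintype.card V)) (x z : V)
    (h : Hit (l x) (l z)) : dens (fun c => fl (l x) (l z) = fl (l x) (l c)) ≤ δ := by
  classical
  apply dens_le_of_cnt hδ
  by_contra hc
  push Not at hc
  apply hWB
  unfold cnt at hc
  refine ⟨_, _, hc.le, hc.le, ?_⟩
  have hlt := (fl_lt_iff _ _).2 h
  obtain ⟨p, hp, _⟩ := fl_point hlt
  have key : ∀ c, fl (l x) (l z) = fl (l x) (l c) → p ∈ l c := by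
    intro c hc
    rw [hc] at hlt hp
    obtain ⟨p', hp', hm⟩ := fl_point hlt
    rw [hp] at hp'
    simp only [Option.some.injEq] at hp'
    rw [hp']; exact hm
  intro a ha b hb
  simp only [Finset.mem_filter, Finset.mem_univ, true_and] at ha hb
  exact ⟨p, key a ha, key b hb⟩

lemma gap_bound [Nonempty V] (g : V → ℕ) {κ : ℝ} (hκ : 0 ≤ κ) (m : ℕ) :
    dens (fun c => m < g c ∧ dens (fun w => m < g w ∧ g w ≤ g c) < κ) ≤ κ := by
  classical
  set S := Finset.univ.filter (fun c => m < g c ∧ dens (fun w => m < g w ∧ g w ≤ g c) < κ) with hS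
  by_cases hne : S.Nonempty
  · obtain ⟨c, hc, hmax⟩ := Finset.exists_max_image S g hne
    have hc' := (Finset.mem_filter.1 hc).2
    refine (dens_mono ?_).trans hc'.2.le
    intro d hd
    exact ⟨hd.1, hmax d (Finset.mem_filter.2 ⟨Finset.mem_univ _, hd⟩)⟩
  · have : ∀ c, ¬ (m < g c ∧ dens (fun w => m < g w ∧ g w ≤ g c) < κ) := by
      intro c hc
      exact hne ⟨c, Finset.mem_filter.2 ⟨Finset.mem_univ _, hc⟩⟩
    refine (dens_mono (Q := fun _ => False) this).trans ?_
    simp [dens, cnt, hκ]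

lemma end_bound [Nonempty V] (l : V → List Pt) {κ δ : ℝ} (hκ : 0 ≤ κ) (hδ : 0 ≤ δ)
    (hWB : ¬ WB l (δ * Fintype.card V)) (x : V) :
    dens (fun z => Hit (l x) (l z) ∧ dens (fun w => fl (l x) (l z) < fl (l x) (l w)) < κ) ≤ κ + δ := by
  classical
  set P := fun z => Hit (l x) (l z) ∧ dens (fun w => fl (l x) (l z) < fl (l x) (l w)) < κ with hP
  by_cases hne : (Finset.univ.filter P).Nonempty
  · obtain ⟨c, hc, hmin⟩ := Finset.exists_min_image _ (fun z => fl (l x) (l z)) hne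
    have hc' := (Finset.mem_filter.1 hc).2
    have h1 := tie_bound l hδ hWB x c hc'.1
    refine (dens_mono (Q := fun d => fl (l x) (l c) < fl (l x) (l d) ∨
      fl (l x) (l c) = fl (l x) (l d)) ?_).trans ((dens_or _ _).trans (by linarith [hc'.2]))
    intro d hd
    exact lt_or_eq_of_le (hmin d (Finset.mem_filter.2 ⟨Finset.mem_univ _, hd⟩))
  · have : ∀ c, ¬ P c := by
      intro c hc
      exact hne ⟨c, Finset.mem_filter.2 ⟨Finset.mem_univ _, hc⟩⟩
    refine (dens_mono (Q := fun _ => False) this).trans ?_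
    simp [dens, cnt]
    linarith

/-- the hair given by a pair -/
def hair (l : V → List Pt) (h : V × V) : List Pt := tw (l h.1) (l h.2)

/-- three disjoint hairs hit by `z` -/
def OK (l : V → List Pt) (h : Fin 3 → V × V) (z : V) : Prop :=
  (∀ i j, i ≠ j → ¬ Hit (hair l (h i)) (hair l (h j))) ∧ ∀ i, Hit (l z) (hair l (h i))

lemma OK_dens (l : V → List Pt) (x : Fin 3 → V) (z : V) {κ : ℝ} (hκ : 0 ≤ κ) (W : Fin 3 → V → Prop)
    (hW : ∀ i, κ ≤ dens (W i)) (h : ∀ w : Fin 3 → V, (∀ i, W i (w i)) → OK l (fun i => (x i, w i)) z) :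
    κ ^ 3 ≤ dens (fun w : Fin 3 → V => OK l (fun i => (x i, w i)) z) := by
  refine le_trans ?_ (dens_mono h)
  rw [dens_pi, Fin.prod_univ_three]
  have := hW 0; have := hW 1; have := hW 2
  calc κ ^ 3 = κ * κ * κ := by ring
    _ ≤ _ := by
      have := dens_nonneg (W 0)
      have := dens_nonneg (W 1)
      gcongr <;> apply hW

/-- good tuples -/
def QQ (l : V → List Pt) (κ : ℝ) (g : Fin 4 → V) : Prop :=
  κ ^ 3 ≤ dens (fun w : Fin 3 → V => OK l (fun i => (g i.succ, w i)) (g 0))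

def bad3 (l : V → List Pt) (κ : ℝ) (i j k : Fin 11) (f : Fin 11 → V) : Prop :=
  i ≠ k ∧ j ≠ k ∧ ((Hit (l (f i)) (l (f j)) ∧ fl (l (f i)) (l (f j)) = fl (l (f i)) (l (f k))) ∨
   (fl (l (f i)) (l (f j)) < fl (l (f i)) (l (f k)) ∧
     dens (fun w => fl (l (f i)) (l (f j)) < fl (l (f i)) (l w) ∧
      fl (l (f i)) (l w) ≤ fl (l (f i)) (l (f k))) < κ))

def bad2 (l : V → List Pt) (κ : ℝ) (i j : Fin 11) (f : Fin 11 → V) : Prop :=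
  i ≠ j ∧ Hit (l (f i)) (l (f j)) ∧ dens (fun w => fl (l (f i)) (l (f j)) < fl (l (f i)) (l w)) < κ

lemma dens_bad3 [Nonempty V] (l : V → List Pt) {κ δ : ℝ} (hκ : 0 ≤ κ) (hδ : 0 ≤ δ)
    (hWB : ¬ WB l (δ * Fintype.card V)) (i j k : Fin 11) : dens (bad3 l κ i j k) ≤ κ + δ := by
  apply dens_update k
  intro f
  by_cases hik : i = k
  · refine (dens_mono (Q := fun _ => False) (fun x hx => hx.1 hik)).trans ?_
    simp [dens, cnt]; linarith
  by_cases hjk : j = k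
  · refine (dens_mono (Q := fun _ => False) (fun x hx => hx.2.1 hjk)).trans ?_
    simp [dens, cnt]; linarith
  unfold bad3
  simp only [Function.update_of_ne hik, Function.update_of_ne hjk, Function.update_self]
  have h1 := gap_bound (fun c => fl (l (f i)) (l c)) hκ (fl (l (f i)) (l (f j)))
  by_cases hh : Hit (l (f i)) (l (f j))
  · have h2 := tie_bound l hδ hWB (f i) (f j) hh
    refine le_trans (dens_mono ?_) ((dens_or _ _).trans (add_le_add h1 h2))
    rintro x ⟨_, _, h | h⟩
    · exact Or.inr h.2
    · exact Or.inl h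
  · refine le_trans (dens_mono ?_) (h1.trans (by linarith))
    rintro x ⟨_, _, h | h⟩
    · exact absurd h.1 hh
    · exact h

lemma dens_bad2 [Nonempty V] (l : V → List Pt) {κ δ : ℝ} (hκ : 0 ≤ κ) (hδ : 0 ≤ δ)
    (hWB : ¬ WB l (δ * Fintype.card V)) (i j : Fin 11) : dens (bad2 l κ i j) ≤ κ + δ := by
  apply dens_update j
  intro f
  by_cases hij : i = j
  · refine (dens_mono (Q := fun _ => False) (fun x hx => hx.1 hij)).trans ?_
    simp [dens, cnt]; linarith
  unfold bad2
  simp only [Function.update_of_ne hij, Function.update_self]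
  exact (dens_mono (fun x hx => hx.2)).trans (end_bound l hκ hδ hWB (f i))

lemma good_ind (l : V → List Pt) {κ : ℝ} (hκ : 0 ≤ κ) (f : Fin 11 → V)
    (star : ∀ i, i ≠ 0 → Hit (l (f i)) (l (f 0))) (h2 : ∀ i j, ¬ bad2 l κ i j f)
    (a b c : Fin 11) (ha : a ≠ 0) (hb : b ≠ 0) (hc : c ≠ 0) (hab : a ≠ b) (hac : a ≠ c) (hbc : b ≠ c)
    (nab : ¬ Hit (l (f a)) (l (f b))) (nac : ¬ Hit (l (f a)) (l (f c)))
    (nbc : ¬ Hit (l (f b)) (l (f c))) :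
    ∃ e : Fin 4 → Fin 11, Function.Injective e ∧ QQ l κ (fun i => f (e i)) := by
  refine ⟨![0, a, b, c], ?_, ?_⟩
  · intro i j hij
    fin_cases i <;> fin_cases j <;> simp_all
  · unfold QQ
    have e2 : ∀ i, i ≠ 0 → κ ≤ dens (fun w => fl (l (f i)) (l (f 0)) < fl (l (f i)) (l w)) := by
      intro i hi
      by_contra hlt
      exact h2 i 0 ⟨hi, star i hi, not_le.1 hlt⟩
    apply OK_dens l _ _ hκ (fun i w => fl (l (f (![a, b, c] i))) (l (f 0)) < fl (l (f (![a, b, c] i))) (l w))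
    · intro i; fin_cases i
      · exact e2 a ha
      · exact e2 b hb
      · exact e2 c hc
    · intro w hw
      refine ⟨?_, ?_⟩
      · intro i j hij hh
        have hh' := hh.mono (tw_subset _ _) (tw_subset _ _)
        have hh'' := hh'.symm
        fin_cases i <;> fin_cases j <;> simp_all
      · intro i
        have := hit_of_fl_lt (hw i)
        fin_cases i <;> exact this

lemma good_cfg (l : V → List Pt) {κ : ℝ} (hκ : 0 ≤ κ) (f : Fin 11 → V)
    (h3 : ∀ i j k, ¬ bad3 l κ i j k f) (h2 : ∀ i j, ¬ bad2 l κ i j f)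
    (x y z c : Fin 11) (hxy : x ≠ y) (hxz : x ≠ z) (hxc : x ≠ c) (hyz : y ≠ z) (hyc : y ≠ c)
    (hzc : z ≠ c) (hcz : Hit (l (f c)) (l (f z)))
    (k1 : fl (l (f x)) (l (f z)) < fl (l (f x)) (l (f c)))
    (k2 : fl (l (f x)) (l (f z)) < fl (l (f x)) (l (f y)))
    (k3 : fl (l (f y)) (l (f z)) < fl (l (f y)) (l (f c))) :
    ∃ e : Fin 4 → Fin 11, Function.Injective e ∧ QQ l κ (fun i => f (e i)) := by
  refine ⟨![z, x, y, c], ?_, ?_⟩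
  · intro i j hij
    fin_cases i <;> fin_cases j <;> simp_all
  · unfold QQ
    have gap : ∀ i j k : Fin 11, i ≠ k → j ≠ k → fl (l (f i)) (l (f j)) < fl (l (f i)) (l (f k)) →
        κ ≤ dens (fun w => fl (l (f i)) (l (f j)) < fl (l (f i)) (l w) ∧
          fl (l (f i)) (l w) ≤ fl (l (f i)) (l (f k))) := by
      intro i j k hik hjk hlt
      by_contra hc
      exact h3 i j k ⟨hik, hjk, Or.inr ⟨hlt, not_le.1 hc⟩⟩
    have g1 : κ ≤ dens (fun w => fl (l (f x)) (l (f z)) < fl (l (f x)) (l w) ∧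
          fl (l (f x)) (l w) ≤ min (fl (l (f x)) (l (f c))) (fl (l (f x)) (l (f y)))) := by
      rcases le_total (fl (l (f x)) (l (f c))) (fl (l (f x)) (l (f y))) with h | h
      · rw [min_eq_left h]; exact gap x z c hxc hzc k1
      · rw [min_eq_right h]; exact gap x z y hxy hyz.symm k2
    have g2 := gap y z c hyc hzc k3
    have g3 : κ ≤ dens (fun w => fl (l (f c)) (l (f z)) < fl (l (f c)) (l w)) := by
      by_contra hlt
      exact h2 c z ⟨hzc.symm, hcz, not_le.1 hlt⟩
    apply OK_dens l _ _ hκ ![fun w => fl (l (f x)) (l (f z)) < fl (l (f x)) (l w) ∧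
          fl (l (f x)) (l w) ≤ min (fl (l (f x)) (l (f c))) (fl (l (f x)) (l (f y))),
          fun w => fl (l (f y)) (l (f z)) < fl (l (f y)) (l w) ∧
          fl (l (f y)) (l w) ≤ fl (l (f y)) (l (f c)),
          fun w => fl (l (f c)) (l (f z)) < fl (l (f c)) (l w)]
    · intro i; fin_cases i
      · exact g1
      · exact g2
      · exact g3
    · intro w hw
      have w0 := hw 0
      have w1 := hw 1
      have w2 := hw 2
      simp only [Matrix.cons_val_zero, Matrix.cons_val_one, Matrix.cons_val] at w0 w1 w2
      have d01 : ¬ Hit (tw (l (f x)) (l (w 0))) (tw (l (f y)) (l (w 1))) := fun h =>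
        not_hit_of_fl_le (w0.2.trans (min_le_right _ _)) (h.mono (List.Subset.refl _) (tw_subset _ _))
      have d02 : ¬ Hit (tw (l (f x)) (l (w 0))) (tw (l (f c)) (l (w 2))) := fun h =>
        not_hit_of_fl_le (w0.2.trans (min_le_left _ _)) (h.mono (List.Subset.refl _) (tw_subset _ _))
      have d12 : ¬ Hit (tw (l (f y)) (l (w 1))) (tw (l (f c)) (l (w 2))) := fun h =>
        not_hit_of_fl_le w1.2 (h.mono (List.Subset.refl _) (tw_subset _ _))
      refine ⟨?_, ?_⟩
      · intro i j hij hh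
        have hh'' := hh.symm
        fin_cases i <;> fin_cases j
        · exact hij rfl
        · exact d01 hh
        · exact d02 hh
        · exact d01 hh''
        · exact hij rfl
        · exact d12 hh
        · exact d02 hh''
        · exact d12 hh''
        · exact hij rfl
      · intro i
        fin_cases i
        · exact hit_of_fl_lt w0.1
        · exact hit_of_fl_lt w1.1
        · exact hit_of_fl_lt w2

lemma good_exists (l : V → List Pt) {κ : ℝ} (hκ : 0 ≤ κ) (f : Fin 11 → V)
    (star : ∀ i, i ≠ 0 → Hit (l (f 0)) (l (f i)))
    (h3 : ∀ i j k, ¬ bad3 l κ i j k f) (h2 : ∀ i j, ¬ bad2 l κ i j f) :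
    ∃ e : Fin 4 → Fin 11, Function.Injective e ∧ QQ l κ (fun i => f (e i)) := by
  rcases ramsey34 (fun a b => Hit (l (f a)) (l (f b))) (Finset.univ.erase (0 : Fin 11)) (by simp) with
    ⟨a, ha, b, hb, c, hc, hab, hac, hbc, k1, k2, k3⟩ | ⟨a, ha, b, hb, c, hc, d, hd, hab, hac, had, hbc,
      hbd, hcd, kab, kac, kad, kbc, kbd, kcd⟩
  · simp only [Finset.mem_erase, Finset.mem_univ, and_true] at ha hb hc
    exact good_ind l hκ f (fun i hi => (star i hi).symm) h2 a b c ha hb hc hab hac hbc k1 k2 k3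
  · simp only [Finset.mem_erase, Finset.mem_univ, and_true] at ha hb hc hd
    let v : Fin 5 → Fin 11 := ![0, a, b, c, d]
    have hv : ∀ i j, i ≠ j → v i ≠ v j := by
      intro i j hij
      fin_cases i <;> fin_cases j <;> first | exact absurd rfl hij | simp [v] <;> tauto
    have hH : ∀ i j, i ≠ j → Hit (l (f (v i))) (l (f (v j))) := by
      have sa := star a ha
      have sb := star b hb
      have sc := star c hc
      have sd := star d hd
      intro i j hij
      fin_cases i <;> fin_cases j <;> first | exact absurd rfl hij | assumption | (apply Hit.symm; assumption)
    obtain ⟨x, y, z, c, h1, h2', h3', h4, h5, h6, k1, k2, k3⟩ := five_claim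
      (fun i j => fl (l (f (v i))) (l (f (v j)))) (by
        intro x i j hij hix hjx heq
        exact h3 (v x) (v i) (v j) ⟨hv _ _ hjx.symm, hv _ _ hij, Or.inl ⟨hH _ _ hix.symm, heq⟩⟩)
    exact good_cfg l hκ f h3 h2 (v x) (v y) (v z) (v c) (hv _ _ h1) (hv _ _ h2') (hv _ _ h3')
      (hv _ _ h4) (hv _ _ h5) (hv _ _ h6) (hH _ _ h6.symm) k1 k2 k3

lemma tri [Nonempty V] (l : V → List Pt) {ε κ δ : ℝ} (hε : 0 < ε) (hκ : κ = ε ^ 10 / 10 ^ 4)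
    (hδ : 0 ≤ δ) (hδκ : δ ≤ κ) (hWB : ¬ WB l (δ * Fintype.card V))
    (hd : ε ≤ dens (fun x : V × V => Hit (l x.1) (l x.2))) :
    κ ^ 3 * (ε ^ 10 / 2 / 14641) ≤ dens (fun t : (Fin 3 → V × V) × V => OK l t.1 t.2) := by
  have hκ0 : 0 ≤ κ := by rw [hκ]; positivity
  have s1 : ε ^ 10 ≤ dens (fun f : Fin 11 → V => ∀ i, i ≠ 0 → Hit (l (f 0)) (l (f i))) := by
    have h1 := dens_star 10 (fun x y : V => Hit (l x) (l y))
    have h2 : ε ^ 10 ≤ (dens (fun x : V × V => Hit (l x.1) (l x.2))) ^ 10 := by gcongr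
    refine (h2.trans h1).trans ?_
    rw [← dens_equiv (Fin.consEquiv (fun _ : Fin 11 => V))
      (fun f : Fin 11 → V => ∀ i, i ≠ 0 → Hit (l (f 0)) (l (f i)))]
    apply dens_mono
    intro x hx i hi
    obtain ⟨j, rfl⟩ := Fin.exists_succ_eq.2 hi
    exact hx j
  have b3 : dens (fun f : Fin 11 → V => ∃ t ∈ (Finset.univ : Finset (Fin 11 × Fin 11 × Fin 11)),
      bad3 l κ t.1 t.2.1 t.2.2 f) ≤ 1331 * (κ + δ) := by
    refine (dens_exists _ _).trans ((Finset.sum_le_sum (fun t _ =>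
      dens_bad3 l hκ0 hδ hWB t.1 t.2.1 t.2.2)).trans ?_)
    rw [Finset.sum_const, Finset.card_univ]
    simp
    linarith
  have b2 : dens (fun f : Fin 11 → V => ∃ t ∈ (Finset.univ : Finset (Fin 11 × Fin 11)),
      bad2 l κ t.1 t.2 f) ≤ 121 * (κ + δ) := by
    refine (dens_exists _ _).trans ((Finset.sum_le_sum (fun t _ =>
      dens_bad2 l hκ0 hδ hWB t.1 t.2)).trans ?_)
    rw [Finset.sum_const, Finset.card_univ]
    simp
    linarith
  have g := dens_diff (dens_diff s1 b3) b2
  have g' : ε ^ 10 / 2 ≤ ε ^ 10 - 1331 * (κ + δ) - 121 * (κ + δ) := by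
    have : ε ^ 10 = 10 ^ 4 * κ := by rw [hκ]; ring
    rw [this]; linarith
  have hpos : 0 < ε ^ 10 := by positivity
  obtain ⟨e, he⟩ := dens_pigeon (fun (e : Fin 4 → Fin 11) (f : Fin 11 → V) =>
    Function.Injective e ∧ QQ l κ (fun i => f (e i))) (g'.trans g) (by
      rintro f ⟨⟨hs, h3⟩, h2⟩
      exact good_exists l hκ0 f hs (fun i j k hb => h3 ⟨(i, j, k), Finset.mem_univ _, hb⟩)
        (fun i j hb => h2 ⟨(i, j), Finset.mem_univ _, hb⟩))
  have hcard : (Fintype.card (Fin 4 → Fin 11) : ℝ) = 14641 := by simp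
  rw [hcard] at he
  have hinj : Function.Injective e := by
    by_contra hn
    have : dens (fun f : Fin 11 → V => Function.Injective e ∧ QQ l κ (fun i => f (e i))) ≤ 0 := by
      refine (dens_mono (Q := fun _ => False) (fun x hx => hn hx.1)).trans ?_
      simp [dens, cnt]
    have : 0 < ε ^ 10 / 2 / 14641 := by positivity
    linarith
  have q1 : ε ^ 10 / 2 / 14641 ≤ dens (QQ l κ) := by
    rw [← dens_comp e hinj]
    exact he.trans (dens_mono (fun f hf => hf.2))
  have q2 := dens_prod_ge (P := fun t : (Fin 4 → V) × (Fin 3 → V) =>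
    OK l (fun i => (t.1 i.succ, t.2 i)) (t.1 0)) (by positivity) q1
  refine q2.trans (le_of_eq ?_)
  let E : ((Fin 4 → V) × (Fin 3 → V)) ≃ ((Fin 3 → V × V) × V) :=
    { toFun := fun t => (fun i => (t.1 i.succ, t.2 i), t.1 0)
      invFun := fun t => (Fin.cons t.2 (fun i => (t.1 i).1), fun i => (t.1 i).2)
      left_inv := fun t => by
        refine Prod.ext ?_ ?_
        · funext i; refine Fin.cases ?_ (fun i => ?_) i <;> simp
        · rfl
      right_inv := fun t => by
        refine Prod.ext ?_ ?_
        · funext i; simp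
        · simp }
  exact dens_equiv E (fun t => OK l t.1 t.2)
end tri

lemma ls_disj {p q : List Pt} : Disjoint (ls p) (ls q) ↔ ¬ Hit p q := by
  rw [Set.disjoint_left]
  constructor
  · rintro h ⟨a, h1, h2⟩; exact h h1 h2
  · intro h a h1 h2; exact h ⟨a, h1, h2⟩

/-- lists touch -/
def Adjc (p q : List Pt) : Prop := ∃ u ∈ p, ∃ v ∈ q, GR u v

lemma Adjc.symm {p q : List Pt} (h : Adjc p q) : Adjc q p := by
  obtain ⟨u, hu, v, hv, h⟩ := h; exact ⟨v, hv, u, hu, h.symm⟩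

lemma Hit.adjc {p q : List Pt} (h : Hit p q) : Adjc p q := by
  obtain ⟨u, hu, hv⟩ := h; exact ⟨u, hu, u, hv, GR.refl u⟩

lemma conn_join {p q : List Pt} (hp : p.IsChain GR) (hq : q.IsChain GR) (h : Adjc p q)
    {s t : Pt} (hs : s ∈ p) (ht : t ∈ q) : Conn (ls p ∪ ls q) s t := by
  obtain ⟨u, hu, v, hv, h⟩ := h
  have h1 := (conn_of_chain hp hs hu).mono (Set.subset_union_left (t := ls q))
  have h2 := (conn_of_chain hq hv ht).mono (Set.subset_union_right (s := ls p))
  exact h1.trans ((Conn.of_adj h1.mem_right h2.mem_left h).trans h2)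

lemma conn_join3 {p q r : List Pt} (hp : p.IsChain GR) (hq : q.IsChain GR) (hr : r.IsChain GR)
    (h : Adjc p q) (h' : Adjc q r)
    {s t : Pt} (hs : s ∈ p) (ht : t ∈ r) : Conn (ls p ∪ ls q ∪ ls r) s t := by
  obtain ⟨u, hu, v, hv, e⟩ := h
  have h1 := (conn_join hp hq ⟨u, hu, v, hv, e⟩ hs hv).mono
    (Set.subset_union_left (t := ls r))
  have h2 := (conn_join hq hr h' hv ht).mono (T := ls p ∪ ls q ∪ ls r) (by
    rw [Set.union_assoc]; exact Set.subset_union_right)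
  exact h1.trans h2

lemma Adjc.ne_left {p q : List Pt} (h : Adjc p q) : ∃ u, u ∈ p := by
  obtain ⟨u, hu, _⟩ := h; exact ⟨u, hu⟩

lemma Hit.ne_right {p q : List Pt} (h : Hit p q) : ∃ u, u ∈ q := by
  obtain ⟨u, _, hu⟩ := h; exact ⟨u, hu⟩

lemma K5_lists {g1 g2 x y a z b1 b2 b3 : List Pt}
    (cg1 : g1.IsChain GR) (cg2 : g2.IsChain GR) (cx : x.IsChain GR) (cy : y.IsChain GR)
    (ca : a.IsChain GR) (cz : z.IsChain GR) (cb1 : b1.IsChain GR) (cb2 : b2.IsChain GR)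
    (cb3 : b3.IsChain GR)
    (x1 : Adjc g1 x) (y1 : Adjc g1 y) (a1 : Adjc g1 a) (z1 : Adjc g1 z)
    (x2 : Adjc g2 x) (y2 : Adjc g2 y) (a2 : Adjc g2 a) (z2 : Adjc g2 z)
    (n1 : ¬ Hit g1 g2) (n2 : ¬ Hit x g1) (n3 : ¬ Hit x g2) (n4 : ¬ Hit y g1) (n5 : ¬ Hit y g2)
    (n6 : ¬ Hit a g1) (n7 : ¬ Hit a g2)
    (m1 : ¬ Hit x y) (m2 : ¬ Hit x a) (m3 : ¬ Hit x z) (m4 : ¬ Hit y a) (m5 : ¬ Hit y z)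
    (m6 : ¬ Hit a z)
    (b11 : ¬ Hit b1 g1) (b12 : ¬ Hit b1 g2) (b1z : ¬ Hit b1 z) (b1x : Hit b1 x) (b1y : Hit b1 y)
    (b1a : ¬ Hit b1 a)
    (b21 : ¬ Hit b2 g1) (b22 : ¬ Hit b2 g2) (b2z : ¬ Hit b2 z) (b2x : Hit b2 x) (b2a : Hit b2 a)
    (b2y : ¬ Hit b2 y)
    (b31 : ¬ Hit b3 g1) (b32 : ¬ Hit b3 g2) (b3z : ¬ Hit b3 z) (b3y : Hit b3 y) (b3a : Hit b3 a)
    (b3x : ¬ Hit b3 x) : False := by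
  obtain ⟨I, hI⟩ := x1.ne_left
  obtain ⟨J, hJ⟩ := x2.ne_left
  obtain ⟨x0, hx⟩ := b1x.ne_right
  obtain ⟨y0, hy⟩ := b1y.ne_right
  obtain ⟨a0, ha⟩ := b2a.ne_right
  rw [← ls_disj] at n1 n2 n3 n4 n5 n6 n7 m1 m2 m3 m4 m5 m6 b11 b12 b1z b1a b21 b22 b2z b2y b31 b32
  rw [← ls_disj] at b3z b3x
  have cIJ := conn_join3 cg1 cz cg2 z1 z2.symm hI hJ
  have cIx := conn_join cg1 cx x1 hI hx
  have cIy := conn_join cg1 cy y1 hI hy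
  have cIa := conn_join cg1 ca a1 hI ha
  have cJx := conn_join cg2 cx x2 hJ hx
  have cJy := conn_join cg2 cy y2 hJ hy
  have cJa := conn_join cg2 ca a2 hJ ha
  have cxy := conn_join3 cx cb1 cy b1x.symm.adjc b1y.adjc hx hy
  have cxa := conn_join3 cx cb2 ca b2x.symm.adjc b2a.adjc hx ha
  have cya := conn_join3 cy cb3 ca b3y.symm.adjc b3a.adjc hy ha
  have n1' := n1.symm
  have n2' := n2.symm
  have n3' := n3.symm
  have n4' := n4.symm
  have n5' := n5.symm
  have n6' := n6.symm
  have n7' := n7.symm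
  have m1' := m1.symm
  have m2' := m2.symm
  have m3' := m3.symm
  have m4' := m4.symm
  have m5' := m5.symm
  have m6' := m6.symm
  have b11' := b11.symm
  have b12' := b12.symm
  have b1z' := b1z.symm
  have b1a' := b1a.symm
  have b21' := b21.symm
  have b22' := b22.symm
  have b2z' := b2z.symm
  have b2y' := b2y.symm
  have b31' := b31.symm
  have b32' := b32.symm
  have b3z' := b3z.symm
  have b3x' := b3x.symm
  refine no_K5 cIJ cIx cIy cIa cJx cJy cJa cxy cxa cya ?_ ?_ ?_ ?_ ?_ ?_ ?_ ?_ ?_ ?_ ?_ ?_ ?_ ?_ ?_ <;>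
  simp only [Set.disjoint_union_left, Set.disjoint_union_right, *, and_self]

/-- `c` is between -/
def Mid {V : Type} (a : V → List Pt) (x y c z : List Pt) : Prop :=
  ∀ b, Hit (tw (a b) z) x → Hit (tw (a b) z) y → Hit (tw (a b) z) c

section L
variable {V : Type}

/-- connectors between `g1` and `g2` -/
def Cr (g1 g2 y : List Pt) : Prop := y.IsChain GR ∧ ¬ Hit y g1 ∧ ¬ Hit y g2 ∧
  (y ≠ [] → Adjc g1 y ∧ Adjc g2 y)

lemma mid_three {g1 g2 : List Pt} (cg1 : g1.IsChain GR) (cg2 : g2.IsChain GR) (hg : ¬ Hit g1 g2)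
    {a : V → List Pt} (ca : ∀ b, (a b).IsChain GR) (a1 : ∀ b, ¬ Hit (a b) g1) (a2 : ∀ b, ¬ Hit (a b) g2)
    {x y c z : List Pt} (hx : Cr g1 g2 x) (hy : Cr g1 g2 y) (hc : Cr g1 g2 c) (hz : Cr g1 g2 z)
    (zn : z ≠ [])
    (m1 : ¬ Hit x y) (m2 : ¬ Hit x c) (m3 : ¬ Hit x z) (m4 : ¬ Hit y c) (m5 : ¬ Hit y z)
    (m6 : ¬ Hit c z) : Mid a x y c z ∨ Mid a x c y z ∨ Mid a c y x z := by
  by_contra hcon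
  unfold Mid at hcon
  push Not at hcon
  obtain ⟨⟨b1, b1x, b1y, b1c⟩, ⟨b2, b2x, b2c, b2y⟩, ⟨b3, b3c, b3y, b3x⟩⟩ := hcon
  have nn : ∀ {p q : List Pt}, Hit p q → q ≠ [] := by
    rintro p q ⟨u, _, h⟩ rfl; simp at h
  have ch : ∀ b, (tw (a b) z).IsChain GR := fun b => chain_pre (ca b) (tw_pre _ _)
  have k1 : ∀ b, ¬ Hit (tw (a b) z) g1 := fun b h => a1 b (h.mono (tw_subset _ _) (List.Subset.refl _))
  have k2 : ∀ b, ¬ Hit (tw (a b) z) g2 := fun b h => a2 b (h.mono (tw_subset _ _) (List.Subset.refl _))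
  exact K5_lists cg1 cg2 hx.1 hy.1 hc.1 hz.1 (ch b1) (ch b2) (ch b3)
    (hx.2.2.2 (nn b1x)).1 (hy.2.2.2 (nn b1y)).1 (hc.2.2.2 (nn b2c)).1 (hz.2.2.2 zn).1
    (hx.2.2.2 (nn b1x)).2 (hy.2.2.2 (nn b1y)).2 (hc.2.2.2 (nn b2c)).2 (hz.2.2.2 zn).2
    hg hx.2.1 hx.2.2.1 hy.2.1 hy.2.2.1 hc.2.1 hc.2.2.1 m1 m2 m3 m4 m5 m6
    (k1 b1) (k2 b1) (tw_not_hit _ _) b1x b1y b1c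
    (k1 b2) (k2 b2) (tw_not_hit _ _) b2x b2c b2y
    (k1 b3) (k2 b3) (tw_not_hit _ _) b3y b3c b3x

def GoodL (a y : V → List Pt) (b : V) (i : Fin 4 → V) : Prop :=
  Hit (tw (a b) (y (i 3))) (y (i 0)) ∧ Hit (tw (a b) (y (i 3))) (y (i 1)) ∧
  Mid a (y (i 0)) (y (i 1)) (y (i 2)) (y (i 3))

variable [Fintype V]

lemma L_lemma [Nonempty V] (l : V → List Pt) {g1 g2 : List Pt} (cg1 : g1.IsChain GR)
    (cg2 : g2.IsChain GR) (hg : ¬ Hit g1 g2)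
    (a y : V → List Pt) (ca : ∀ b, (a b).IsChain GR) (a1 : ∀ b, ¬ Hit (a b) g1)
    (a2 : ∀ b, ¬ Hit (a b) g2) (al : ∀ b, a b ⊆ l b) (yl : ∀ b, y b ⊆ l b)
    (hy : ∀ z, Cr g1 g2 (y z)) {ε : ℝ} (hε : 0 < ε)
    (hd : ε ≤ dens (fun x : V × V => Hit (a x.1) (y x.2)))
    (hWB : ¬ WB l (ε ^ 4 / 48 * Fintype.card V)) :
    ε ^ 4 / 12 ≤ dens (fun x : V × V => Hit (y x.1) (y x.2)) := by
  by_contra hcon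
  push Not at hcon
  have s1 : ε ^ 4 ≤ dens (fun x : V × (Fin 4 → V) => ∀ k, Hit (a x.1) (y (x.2 k))) := by
    refine le_trans ?_ (dens_star 4 (fun x y' : V => Hit (a x) (y y')))
    gcongr
  have cr : ∀ p q : Fin 4, p ≠ q →
      dens (fun x : V × (Fin 4 → V) => Hit (y (x.2 p)) (y (x.2 q))) ≤ ε ^ 4 / 12 := by
    intro p q hpq
    rw [dens_snd (fun i : Fin 4 → V => Hit (y (i p)) (y (i q)))]
    have h1 := dens_comp (Ω := V) (![p, q] : Fin 2 → Fin 4) (by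
      intro i j hij
      fin_cases i <;> fin_cases j <;> simp_all) (fun f => Hit (y (f 0)) (y (f 1)))
    have h2 := dens_equiv (finTwoArrowEquiv V) (fun x => Hit (y x.1) (y x.2))
    refine le_trans (le_of_eq ?_) hcon.le
    rw [← h2]
    exact h1
  have b1 : dens (fun x : V × (Fin 4 → V) => ∃ t ∈ (Finset.univ.filter (fun t : Fin 4 × Fin 4 => t.1 < t.2)),
      Hit (y (x.2 t.1)) (y (x.2 t.2))) ≤ 6 * (ε ^ 4 / 12) := by
    refine (dens_exists _ _).trans ((Finset.sum_le_sum (fun t ht =>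
      cr t.1 t.2 (ne_of_lt (Finset.mem_filter.1 ht).2))).trans ?_)
    rw [Finset.sum_const]
    have : (Finset.univ.filter (fun t : Fin 4 × Fin 4 => t.1 < t.2)).card = 6 := by decide
    rw [this]
    simp
  have g := dens_diff s1 b1
  obtain ⟨σ, hσ⟩ := dens_pigeon (fun (σ : Equiv.Perm (Fin 4)) (x : V × (Fin 4 → V)) =>
    GoodL a y x.1 (fun k => x.2 (σ k))) g (by
    rintro ⟨b, i⟩ ⟨hit, hnc⟩
    have hnc' : ∀ p q : Fin 4, p ≠ q → ¬ Hit (y (i p)) (y (i q)) := by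
      intro p q hpq hh
      rcases lt_or_gt_of_ne hpq with h | h
      · exact hnc ⟨(p, q), by simp [h], hh⟩
      · exact hnc ⟨(q, p), by simp [h], hh.symm⟩
    obtain ⟨j, hj⟩ := four_last (fun k => y (i k)) hnc' hit
    let τ : Equiv.Perm (Fin 4) := Equiv.swap 3 j
    have τ3 : τ 3 = j := Equiv.swap_apply_left _ _
    have hne : ∀ k, Hit (a b) (y (i k)) → y (i k) ≠ [] := by
      rintro k ⟨u, _, hu⟩ e; rw [e] at hu; simp at hu
    have N : ∀ p q, p ≠ q → ¬ Hit (y (i (τ p))) (y (i (τ q))) := fun p q h =>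
      hnc' _ _ (τ.injective.ne h)
    have H : ∀ p, p ≠ 3 → Hit (tw (a b) (y (i (τ 3)))) (y (i (τ p))) := fun p hp => by
      have := hj (τ p) (by rw [← τ3]; exact τ.injective.ne hp)
      rw [τ3]; exact this
    rcases mid_three cg1 cg2 hg ca a1 a2 (hy (i (τ 0))) (hy (i (τ 1))) (hy (i (τ 2))) (hy (i (τ 3)))
      (hne _ (hit _)) (N 0 1 (by decide)) (N 0 2 (by decide)) (N 0 3 (by decide)) (N 1 2 (by decide))
      (N 1 3 (by decide)) (N 2 3 (by decide)) with m | m | m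
    · exact ⟨τ, H 0 (by decide), H 1 (by decide), m⟩
    · refine ⟨τ * Equiv.swap 1 2, ?_, ?_, ?_⟩
      · exact H 0 (by decide)
      · exact H 2 (by decide)
      · exact m
    · refine ⟨τ * Equiv.swap 0 2, ?_, ?_, ?_⟩
      · exact H 2 (by decide)
      · exact H 1 (by decide)
      · exact m)
  have hcard : (Fintype.card (Equiv.Perm (Fin 4)) : ℝ) = 24 := by
    rw [Fintype.card_perm]; simp [Nat.factorial]
  have hG : ε ^ 4 / 48 ≤ dens (fun x : V × (Fin 4 → V) => GoodL a y x.1 x.2) := by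
    rw [hcard] at hσ
    have h1 := dens_equiv (Equiv.prodCongr (Equiv.refl V) (Equiv.arrowCongr σ.symm (Equiv.refl V)))
      (fun x : V × (Fin 4 → V) => GoodL a y x.1 x.2)
    rw [← h1]
    refine le_trans (by linarith) hσ
  let E : ((V × V × V) × (V × V)) ≃ (V × (Fin 4 → V)) :=
    { toFun := fun t => (t.2.1, ![t.1.1, t.1.2.1, t.2.2, t.1.2.2])
      invFun := fun t => ((t.2 0, t.2 1, t.2 3), (t.1, t.2 2))
      left_inv := fun t => by simp
      right_inv := fun t => by
        refine Prod.ext rfl ?_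
        funext i; fin_cases i <;> rfl }
  rw [← dens_equiv E] at hG
  obtain ⟨⟨p, q, r⟩, hpqr⟩ := dens_prod_exists hG
  classical
  set A := Finset.univ.filter (fun b => Hit (tw (a b) (y r)) (y p) ∧ Hit (tw (a b) (y r)) (y q)) with hA
  set B := Finset.univ.filter (fun v => Mid a (y p) (y q) (y v) (y r)) with hB
  have hcnt : ε ^ 4 / 48 * Fintype.card (V × V) ≤ (A.card * B.card : ℝ) := by
    refine (le_cnt_of_dens hpqr).trans ?_
    rw [← Nat.cast_mul, ← Finset.card_product]
    unfold cnt
    norm_cast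
    apply Finset.card_le_card
    rintro ⟨b, v⟩ hbv
    have hbv' := (Finset.mem_filter.1 hbv).2
    exact Finset.mem_product.2 ⟨Finset.mem_filter.2 ⟨Finset.mem_univ _, hbv'.1, hbv'.2.1⟩,
      Finset.mem_filter.2 ⟨Finset.mem_univ _, hbv'.2.2⟩⟩
  have hn : (0 : ℝ) < Fintype.card V := card_pos_real
  rw [Fintype.card_prod] at hcnt
  push_cast at hcnt
  have hAn : (A.card : ℝ) ≤ Fintype.card V := by exact_mod_cast Finset.card_le_univ A
  have hBn : (B.card : ℝ) ≤ Fintype.card V := by exact_mod_cast Finset.card_le_univ B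
  apply hWB
  refine ⟨A, B, ?_, ?_, ?_⟩
  · have : (A.card * B.card : ℝ) ≤ A.card * Fintype.card V := by gcongr
    refine le_of_mul_le_mul_right ?_ hn
    linarith
  · have : (A.card * B.card : ℝ) ≤ Fintype.card V * B.card := by gcongr
    refine le_of_mul_le_mul_right ?_ hn
    linarith
  · intro b hb v hv
    have hb' := (Finset.mem_filter.1 hb).2
    have hv' := (Finset.mem_filter.1 hv).2
    exact (hv' b hb'.1 hb'.2).mono (List.Subset.trans (tw_subset _ _) (al b)) (yl v)
end L

section STEP
variable {V : Type} [Fintype V]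

lemma WB.anti {l : V → List Pt} {s t : ℝ} (h : WB l t) (hst : s ≤ t) : WB l s := by
  obtain ⟨A, B, h1, h2, h3⟩ := h
  exact ⟨A, B, hst.trans h1, hst.trans h2, h3⟩

lemma WB.sub {l l' : V → List Pt} {s : ℝ} (h : WB l s) (hl : ∀ v, l v ⊆ l' v) : WB l' s := by
  obtain ⟨A, B, h1, h2, h3⟩ := h
  exact ⟨A, B, h1, h2, fun a ha b hb => (h3 a ha b hb).mono (hl a) (hl b)⟩

lemma cr_piece {l g1 g2 : List Pt} (hl : l.IsChain GR) (hB : Hit l g2) (hA : Hit (tw l g2) g1) :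
    Cr g1 g2 (piece l g1 g2) := by
  refine ⟨chain_inf hl (piece_inf _ _ _), ?_, ?_, ?_⟩
  · rintro ⟨p, h1, h2⟩; exact piece_not_mem_left h1 h2
  · rintro ⟨p, h1, h2⟩; exact piece_not_mem_right h1 h2
  · intro hne
    constructor
    · obtain ⟨p, hp⟩ : ∃ p, p ∈ (piece l g1 g2).head? := ⟨_, List.head_mem_head? hne⟩
      obtain ⟨a, ha, h⟩ := piece_head hl hB hA p hp
      exact ⟨a, ha, p, List.mem_of_mem_head? hp, h⟩
    · obtain ⟨p, hp⟩ : ∃ p, p ∈ (piece l g1 g2).getLast? := ⟨_, List.getLast_mem_getLast? hne⟩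
      obtain ⟨a, ha, h⟩ := piece_last hl hB hA p hp
      exact ⟨a, ha, p, List.mem_of_mem_getLast? hp, h.symm⟩

lemma cr_nil (g1 g2 : List Pt) : Cr g1 g2 [] := by
  refine ⟨List.IsChain.nil, ?_, ?_, fun h => absurd rfl h⟩
  · rintro ⟨p, h1, _⟩; simp at h1
  · rintro ⟨p, h1, _⟩; simp at h1

lemma step [Nonempty V] (l : V → List Pt) (hl : ∀ v, (l v).IsChain GR) {ε : ℝ} (hε : 0 < ε)
    (hε1 : ε ≤ 1) (hWB : ¬ WB l (ε ^ 160 / 10 ^ 75 * Fintype.card V))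
    (hd : ε ≤ dens (fun x : V × V => Hit (l x.1) (l x.2))) :
    ∃ (g1 g2 : List Pt) (a y : V → List Pt),
      (∃ x, g1 <+: l x) ∧ (∃ x, g2 <+: l x) ∧ ¬ Hit g1 g2 ∧ (∀ b, a b <+: l b) ∧
      (∀ b, ¬ Hit (a b) g1) ∧ (∀ b, ¬ Hit (a b) g2) ∧ (∀ z, y z <:+: l z) ∧
      (∀ z, Cr g1 g2 (y z)) ∧ (∀ z, ∀ p ∈ (y z).head?, ∃ a ∈ g1, GR a p) ∧
      (∀ z, y z ≠ [] → ∃ b, Hit (a b) (y z)) ∧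
      ε ^ 160 / 10 ^ 75 ≤ dens (fun x : V × V => Hit (y x.1) (y x.2)) := by
  classical
  have e160 : ε ^ 160 ≤ ε ^ 10 := pow_le_pow_of_le_one hε.le hε1 (by norm_num)
  have hp10 : 0 < ε ^ 10 := by positivity
  have T := tri l (κ := ε ^ 10 / 10 ^ 4) (δ := ε ^ 160 / 10 ^ 75) hε rfl (by positivity)
    (by
      have : ε ^ 160 / 10 ^ 75 ≤ ε ^ 10 / 10 ^ 75 := by gcongr
      refine this.trans ?_
      gcongr <;> norm_num) hWB hd
  obtain ⟨σ, hσ⟩ := dens_pigeon (fun (σ : Equiv.Perm (Fin 3)) (t : (Fin 3 → V × V) × V) =>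
    (∀ i j, i ≠ j → ¬ Hit (hair l (t.1 (σ i))) (hair l (t.1 (σ j)))) ∧
    Valid (l t.2) (hair l (t.1 (σ 0))) (hair l (t.1 (σ 1))) (hair l (t.1 (σ 2)))) T (by
    rintro ⟨h, z⟩ ⟨h1, h2⟩
    obtain ⟨σ, hσ⟩ := p_claim (fun i => hair l (h i)) h1 h2
    exact ⟨σ, fun i j hij => h1 _ _ (σ.injective.ne hij), hσ⟩)
  have hcard : (Fintype.card (Equiv.Perm (Fin 3)) : ℝ) = 6 := by
    rw [Fintype.card_perm]; simp [Nat.factorial]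
  rw [hcard] at hσ
  have h1 := dens_equiv (Equiv.prodCongr (Equiv.arrowCongr σ.symm (Equiv.refl (V × V))) (Equiv.refl V))
      (fun t : (Fin 3 → V × V) × V => (∀ i j, i ≠ j → ¬ Hit (hair l (t.1 i)) (hair l (t.1 j))) ∧
    Valid (l t.2) (hair l (t.1 0)) (hair l (t.1 1)) (hair l (t.1 2)))
  have hσ2 : (ε ^ 10 / 10 ^ 4) ^ 3 * (ε ^ 10 / 2 / 14641) / 6 ≤
    dens (fun t : (Fin 3 → V × V) × V => (∀ i j, i ≠ j → ¬ Hit (hair l (t.1 i)) (hair l (t.1 j))) ∧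
    Valid (l t.2) (hair l (t.1 0)) (hair l (t.1 1)) (hair l (t.1 2))) := by
    rw [← h1]; exact hσ
  let E : (((V × V) × (V × V) × V) × (V × V)) ≃ ((Fin 3 → V × V) × V) :=
    { toFun := fun t => (![t.1.1, t.1.2.1, (t.2.1, t.1.2.2)], t.2.2)
      invFun := fun t => ((t.1 0, t.1 1, (t.1 2).2), ((t.1 2).1, t.2))
      left_inv := fun t => by simp
      right_inv := fun t => by
        refine Prod.ext ?_ rfl
        funext i; fin_cases i <;> rfl }
  rw [← dens_equiv E] at hσ2
  obtain ⟨⟨p, q, w⟩, hpq⟩ := dens_prod_exists hσ2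
  set ε2 := (ε ^ 10 / 10 ^ 4) ^ 3 * (ε ^ 10 / 2 / 14641) / 6 with hε2
  have hε2' : ε2 = ε ^ 40 / (10 ^ 12 * 175692) := by rw [hε2]; ring
  have hε20 : 0 < ε2 := by rw [hε2']; positivity
  have hb : ε ^ 160 / 10 ^ 75 ≤ ε2 ^ 4 / 48 := by
    have : ε2 ^ 4 / 48 = ε ^ 160 / (10 ^ 48 * 175692 ^ 4 * 48) := by rw [hε2']; ring
    rw [this]
    gcongr
    norm_num
  set g1 := hair l p with hg1
  set g2 := hair l q with hg2
  have ne1 : ∃ t : V × V, (¬ Hit g1 g2) := by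
    by_contra hc
    push Not at hc
    have : dens (fun b : V × V => (∀ i j, i ≠ j → ¬ Hit (hair l ((E ((p, q, w), b)).1 i)) (hair l ((E ((p, q, w), b)).1 j))) ∧
      Valid (l (E ((p, q, w), b)).2) (hair l ((E ((p, q, w), b)).1 0)) (hair l ((E ((p, q, w), b)).1 1)) (hair l ((E ((p, q, w), b)).1 2)))
      ≤ dens (fun _ : V × V => False) := by
      apply dens_mono
      intro b hb
      exact hb.1 0 1 (by decide) (hc b)
    have h0 : dens (fun _ : V × V => False) = 0 := by simp [dens, cnt]
    linarith [hpq.trans this]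
  obtain ⟨_, hg⟩ := ne1
  have cg1 : g1.IsChain GR := chain_pre (hl _) (tw_pre _ _)
  have cg2 : g2.IsChain GR := chain_pre (hl _) (tw_pre _ _)
  let a : V → List Pt := fun x => if ¬ Hit (hair l (x, w)) g1 ∧ ¬ Hit (hair l (x, w)) g2 then
    hair l (x, w) else []
  let y : V → List Pt := fun z => if Hit (l z) g2 ∧ Hit (tw (l z) g2) g1 ∧
    ∃ b, Hit (a b) (piece (l z) g1 g2) then piece (l z) g1 g2 else []
  have apre : ∀ b, a b <+: l b := by
    intro b
    simp only [a]
    split_ifs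
    · exact tw_pre _ _
    · exact ⟨_, rfl⟩
  have a1 : ∀ b, ¬ Hit (a b) g1 := by
    intro b
    simp only [a]
    split_ifs with h
    · exact h.1
    · rintro ⟨p, h1, _⟩; simp at h1
  have a2 : ∀ b, ¬ Hit (a b) g2 := by
    intro b
    simp only [a]
    split_ifs with h
    · exact h.2
    · rintro ⟨p, h1, _⟩; simp at h1
  have yin : ∀ z, y z <:+: l z := by
    intro b
    simp only [y]
    split_ifs
    · exact piece_inf _ _ _
    · exact ⟨[], _, rfl⟩
  have ycr : ∀ z, Cr g1 g2 (y z) := by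
    intro b
    simp only [y]
    split_ifs with h
    · exact cr_piece (hl _) h.1 h.2.1
    · exact cr_nil _ _
  refine ⟨g1, g2, a, y, ⟨_, tw_pre _ _⟩, ⟨_, tw_pre _ _⟩, hg, apre, a1, a2, yin, ycr, ?_, ?_, ?_⟩
  · intro b
    simp only [y]
    split_ifs with h
    · exact piece_head (hl _) h.1 h.2.1
    · intro p hp; simp at hp
  · intro z
    simp only [y]
    split_ifs with h
    · intro _; exact h.2.2
    · intro h; exact absurd rfl h
  · have := L_lemma l cg1 cg2 hg a y (fun b => chain_pre (hl b) (apre b)) a1 a2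
      (fun b => (apre b).subset) (fun b => (yin b).subset) ycr hε20 (by
        refine hpq.trans (dens_mono ?_)
        rintro ⟨x, z⟩ ⟨h1, h2⟩
        have hax : a x = hair l (x, w) := by
          simp only [a]
          rw [if_pos ⟨h1 2 0 (by decide), h1 2 1 (by decide)⟩]
        have h2' : Valid (l z) g1 g2 (hair l (x, w)) := h2
        have hyz : y z = piece (l z) g1 g2 := by
          simp only [y]
          rw [if_pos ⟨h2'.1, h2'.2.1, x, by rw [hax]; exact h2'.2.2.symm⟩]
        show Hit (a x) (y z)
        rw [hax, hyz]
        exact h2'.2.2.symm) (fun h => hWB (h.anti (by gcongr)))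
    refine le_trans (hb.trans ?_) this
    have : 0 < ε2 ^ 4 := by positivity
    linarith
end STEP

/-- complement of the frame -/
def Wc (I h1 h2 : List Pt) : Set Pt := {p | p ∉ I ∧ p ∉ h1 ∧ p ∉ h2}

/-- complement of the frame and a string -/
def Wy (I h1 h2 y : List Pt) : Set Pt := {p | p ∉ I ∧ p ∉ h1 ∧ p ∉ h2 ∧ p ∉ y}

/-- landing points -/
def LS (I h1 h2 x : List Pt) : Set Pt :=
  {p | (∃ i ∈ I, GR i p) ∧ ∃ u ∈ x, Conn (Wc I h1 h2) p u}

/-- grounded strings -/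
def Gd (I h1 h2 x : List Pt) : Prop :=
  x ≠ [] ∧ Cr h1 h2 x ∧ ¬ Hit x I ∧ (LS I h1 h2 x).Nonempty

open Classical in
/-- choice of an element -/
noncomputable def chs (s : Set Pt) : Pt := if h : s.Nonempty then h.some else default

lemma chs_mem {s : Set Pt} (h : s.Nonempty) : chs s ∈ s := by
  unfold chs; rw [dif_pos h]; exact h.some_mem

/-- landing point -/
noncomputable def ell (I h1 h2 x : List Pt) : Pt := chs (LS I h1 h2 x)

lemma anti33 {I h1 h2 y z : List Pt} (cI : I.IsChain GR) (c1 : h1.IsChain GR) (c2 : h2.IsChain GR)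
    (n1 : ¬ Hit I h1) (n2 : ¬ Hit I h2) (n3 : ¬ Hit h1 h2) (i1 : Adjc I h1) (i2 : Adjc I h2)
    (hy : Gd I h1 h2 y) (hz : Gd I h1 h2 z) (hyz : ¬ Hit y z) {p u v : Pt}
    (hp : ∃ i ∈ I, GR i p) (hu : u ∈ y) (hv : v ∈ z)
    (cu : Conn (Wy I h1 h2 z) p u) (cv : Conn (Wy I h1 h2 y) p v) : False := by
  obtain ⟨i, hi, hip⟩ := hp
  obtain ⟨s, hs⟩ := i1.symm.ne_left
  obtain ⟨t, ht⟩ := i2.symm.ne_left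
  have y1 := hy.2.1.2.2.2 hy.1
  have z1 := hz.2.1.2.2.2 hz.1
  have k1 := conn_join c1 hy.2.1.1 y1.1 hs hu
  have k2 := conn_join c1 hz.2.1.1 z1.1 hs hv
  have k3 := conn_join c1 cI i1.symm hs hi
  have k4 := conn_join c2 hy.2.1.1 y1.2 ht hu
  have k5 := conn_join c2 hz.2.1.1 z1.2 ht hv
  have k6 := conn_join c2 cI i2.symm ht hi
  have k7 : Conn (ls [p] ∪ ls I) p i := conn_join (List.IsChain.singleton p) cI
    ⟨p, by simp, i, hi, hip.symm⟩ (by simp) hi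
  have pz := cu.mem_left
  have py := cv.mem_left
  have e1 : ¬ Hit [p] h1 := by rintro ⟨r, h, h'⟩; simp at h; subst h; exact pz.2.1 h'
  have e2 : ¬ Hit [p] h2 := by rintro ⟨r, h, h'⟩; simp at h; subst h; exact pz.2.2.1 h'
  have e3 : ¬ Hit [p] z := by rintro ⟨r, h, h'⟩; simp at h; subst h; exact pz.2.2.2 h'
  have e4 : ¬ Hit [p] y := by rintro ⟨r, h, h'⟩; simp at h; subst h; exact py.2.2.2 h'
  have n4 := hy.2.1.2.1
  have n5 := hy.2.1.2.2.1
  have n6 := hz.2.1.2.1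
  have n7 := hz.2.1.2.2.1
  have n8 := hy.2.2.1
  have n9 := hz.2.2.1
  rw [← ls_disj] at n1 n2 n3 n4 n5 n6 n7 n8 n9 e1 e2 e3 e4 hyz
  have w : ∀ y' : List Pt, Disjoint (ls I) (Wy I h1 h2 y') ∧ Disjoint (ls h1) (Wy I h1 h2 y') ∧
      Disjoint (ls h2) (Wy I h1 h2 y') ∧ Disjoint (ls y') (Wy I h1 h2 y') := by
    intro y'
    refine ⟨?_, ?_, ?_, ?_⟩ <;> rw [Set.disjoint_left]
    · intro q hq hq'; exact hq'.1 hq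
    · intro q hq hq'; exact hq'.2.1 hq
    · intro q hq hq'; exact hq'.2.2.1 hq
    · intro q hq hq'; exact hq'.2.2.2 hq
  obtain ⟨w1, w2, w3, w4⟩ := w y
  obtain ⟨w5, w6, w7, w8⟩ := w z
  have n1' := n1.symm
  have n2' := n2.symm
  have n3' := n3.symm
  have n4' := n4.symm
  have n5' := n5.symm
  have n6' := n6.symm
  have n7' := n7.symm
  have n8' := n8.symm
  have n9' := n9.symm
  have e1' := e1.symm
  have e2' := e2.symm
  have e3' := e3.symm
  have e4' := e4.symm
  have hyz' := hyz.symm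
  refine no_K33 k1 k2 k3 k4 k5 k6 cu cv k7 ?_ ?_ ?_ ?_ ?_ ?_ ?_ ?_ ?_ ?_ ?_ ?_ ?_ ?_ ?_ ?_ ?_ ?_ <;>
  simp only [Set.disjoint_union_left, Set.disjoint_union_right, *, and_self]

lemma conn_first {S : Set Pt} {x y : List Pt} (hxy : ¬ Hit x y) {p q : Pt} (h : Conn S p q)
    (hq : q ∈ x ∨ q ∈ y) : (∃ u ∈ x, Conn {r | r ∈ S ∧ r ∉ y} p u) ∨
      (∃ u ∈ y, Conn {r | r ∈ S ∧ r ∉ x} p u) := by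
  induction h with
  | refl a ha =>
    rcases hq with hq | hq
    · exact Or.inl ⟨a, hq, Conn.refl a ⟨ha, fun h => hxy ⟨a, hq, h⟩⟩⟩
    · exact Or.inr ⟨a, hq, Conn.refl a ⟨ha, fun h => hxy ⟨a, h, hq⟩⟩⟩
  | step a b c ha hab h ih =>
    by_cases hx : a ∈ x
    · exact Or.inl ⟨a, hx, Conn.refl a ⟨ha, fun h => hxy ⟨a, hx, h⟩⟩⟩
    by_cases hy : a ∈ y
    · exact Or.inr ⟨a, hy, Conn.refl a ⟨ha, fun h => hxy ⟨a, h, hy⟩⟩⟩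
    rcases ih hq with ⟨u, hu, k⟩ | ⟨u, hu, k⟩
    · exact Or.inl ⟨u, hu, Conn.step _ _ _ ⟨ha, hy⟩ hab k⟩
    · exact Or.inr ⟨u, hu, Conn.step _ _ _ ⟨ha, hx⟩ hab k⟩

lemma Gd.sub {I h1 h2 x : List Pt} (hx : Gd I h1 h2 x) : ls x ⊆ Wc I h1 h2 := by
  intro p hp
  exact ⟨fun h => hx.2.2.1 ⟨p, hp, h⟩, fun h => hx.2.1.2.1 ⟨p, hp, h⟩, fun h => hx.2.1.2.2.1 ⟨p, hp, h⟩⟩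

lemma LS_eq {I h1 h2 x y : List Pt} (hx : Gd I h1 h2 x) (hy : Gd I h1 h2 y) (h : Hit x y) :
    ell I h1 h2 x = ell I h1 h2 y := by
  have key : ∀ {x y : List Pt}, Gd I h1 h2 x → Gd I h1 h2 y → Hit x y → LS I h1 h2 x ⊆ LS I h1 h2 y := by
    rintro x y hx hy ⟨v, h1, h2⟩ p ⟨hp, u, hu, hc⟩
    exact ⟨hp, v, h2, hc.trans ((conn_of_chain hx.2.1.1 hu h1).mono hx.sub)⟩
  unfold ell
  rw [Set.Subset.antisymm (key hx hy h) (key hy hx h.symm)]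

/-- the order -/
def gl (I h1 h2 x y : List Pt) : Prop :=
  toLex (ell I h1 h2 x) < toLex (ell I h1 h2 y) ∨ (ell I h1 h2 x = ell I h1 h2 y ∧ ¬ Hit x y ∧
    ∃ u ∈ x, Conn (Wy I h1 h2 y) (ell I h1 h2 x) u)

lemma gl_irrefl {I h1 h2 x : List Pt} (hx : Gd I h1 h2 x) : ¬ gl I h1 h2 x x := by
  rintro (h | h)
  · exact lt_irrefl _ h
  · obtain ⟨p, hp⟩ := List.exists_mem_of_ne_nil x hx.1
    exact h.2.1 ⟨p, hp, hp⟩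

lemma gl_trans {I h1 h2 x y z : List Pt} (cI : I.IsChain GR) (c1 : h1.IsChain GR) (c2 : h2.IsChain GR)
    (n1 : ¬ Hit I h1) (n2 : ¬ Hit I h2) (n3 : ¬ Hit h1 h2) (i1 : Adjc I h1) (i2 : Adjc I h2)
    (hx : Gd I h1 h2 x) (hy : Gd I h1 h2 y) (hz : Gd I h1 h2 z)
    (hxy : gl I h1 h2 x y) (hyz : gl I h1 h2 y z) : gl I h1 h2 x z := by
  rcases hxy with a | ⟨a, b, u, hu, c⟩ <;> rcases hyz with a' | ⟨a', b', v, hv, c'⟩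
  · exact Or.inl (a.trans a')
  · exact Or.inl (a' ▸ a)
  · exact Or.inl (a ▸ a')
  · have hell := chs_mem hx.2.2.2
    change ell I h1 h2 x ∈ _ at hell
    rw [← a] at c'
    have contra : ∀ w ∈ z, ¬ Conn (Wy I h1 h2 y) (ell I h1 h2 x) w := by
      intro w hw hc
      exact anti33 cI c1 c2 n1 n2 n3 i1 i2 hy hz b' hell.1 hv hw c' hc
    have xsub : ls x ⊆ Wy I h1 h2 y := by
      intro p hp
      have := hx.sub hp
      exact ⟨this.1, this.2.1, this.2.2, fun h => b ⟨p, hp, h⟩⟩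
    have nxz : ¬ Hit x z := by
      rintro ⟨w, hw, hwz⟩
      exact contra w hwz (c.trans ((conn_of_chain hx.2.1.1 hu hw).mono xsub))
    refine Or.inr ⟨a.trans a', nxz, ?_⟩
    rcases conn_first nxz c (Or.inl hu) with ⟨w, hw, k⟩ | ⟨w, hw, k⟩
    · refine ⟨w, hw, k.mono ?_⟩
      rintro r ⟨h, h'⟩
      exact ⟨h.1, h.2.1, h.2.2.1, h'⟩
    · exact absurd (k.mono (fun r h => h.1)) (contra w hw)

lemma gl_total {I h1 h2 x y : List Pt} (hx : Gd I h1 h2 x) (hy : Gd I h1 h2 y) :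
    ¬ Hit x y ↔ gl I h1 h2 x y ∨ gl I h1 h2 y x := by
  constructor
  · intro h
    by_cases he : ell I h1 h2 x = ell I h1 h2 y
    · obtain ⟨_, u, hu, hc⟩ := chs_mem hx.2.2.2
      change Conn _ (ell I h1 h2 x) _ at hc
      rcases conn_first h hc (Or.inl hu) with ⟨w, hw, k⟩ | ⟨w, hw, k⟩
      · left; right
        exact ⟨he, h, w, hw, k.mono (T := Wy I h1 h2 _) (fun r h => ⟨h.1.1, h.1.2.1, h.1.2.2, h.2⟩)⟩
      · right; right
        refine ⟨he.symm, fun h' => h h'.symm, w, hw, ?_⟩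
        rw [← he]
        exact k.mono (T := Wy I h1 h2 _) (fun r h => ⟨h.1.1, h.1.2.1, h.1.2.2, h.2⟩)
    · rcases lt_or_gt_of_ne (fun h => he (toLex.injective h) :
        toLex (ell I h1 h2 x) ≠ toLex (ell I h1 h2 y)) with h | h
      · exact Or.inl (Or.inl h)
      · exact Or.inr (Or.inl h)
  · rintro ((h | h) | (h | h)) hh
    · rw [LS_eq hx hy hh] at h; exact lt_irrefl _ h
    · exact h.2.1 hh
    · rw [LS_eq hx hy hh] at h; exact lt_irrefl _ h
    · exact h.2.1 hh.symm

section
variable {V : Type} [Fintype V]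

lemma two_steps [Nonempty V] (l : V → List Pt) (hl : ∀ v, (l v).IsChain GR) {ε ε' : ℝ} (hε : 0 < ε)
    (hε1 : ε ≤ 1) (hε' : ε' = ε ^ 160 / 10 ^ 75)
    (hWB : ¬ WB l (ε' ^ 160 / 10 ^ 75 * Fintype.card V))
    (hd : ε ≤ dens (fun x : V × V => Hit (l x.1) (l x.2))) :
    ∃ (y : V → List Pt) (lt : V → V → Prop), (∀ z, y z ⊆ l z) ∧
      (∀ u, y u ≠ [] → ¬ lt u u) ∧
      (∀ u v w, y u ≠ [] → y v ≠ [] → y w ≠ [] → lt u v → lt v w → lt u w) ∧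
      (∀ u v, y u ≠ [] → y v ≠ [] → (¬ Hit (y u) (y v) ↔ lt u v ∨ lt v u)) ∧
      ε' ^ 160 / 10 ^ 75 ≤ dens (fun x : V × V => Hit (y x.1) (y x.2)) := by
  have h0 : 0 < ε' := by rw [hε']; positivity
  have h1 : ε' ≤ 1 := by
    rw [hε']
    have : ε ^ 160 ≤ 1 := pow_le_one₀ hε.le hε1
    rw [div_le_one (by positivity)]
    exact this.trans (by norm_num)
  have hle : ε' ^ 160 / 10 ^ 75 ≤ ε' := by
    have : ε' ^ 160 ≤ ε' ^ 1 := pow_le_pow_of_le_one h0.le h1 (by norm_num)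
    rw [pow_one] at this
    rw [div_le_iff₀ (by positivity)]
    have : ε' ≤ ε' * 10 ^ 75 := le_mul_of_one_le_right h0.le (by norm_num)
    linarith
  obtain ⟨I, _, _, y, ⟨xI, hI⟩, _, _, _, _, _, yl, ycr, yh, _, yd⟩ := step l hl hε hε1
    (by rw [← hε']; exact fun h => hWB (h.anti (by gcongr))) hd
  rw [← hε'] at yd
  obtain ⟨g, h, a, x, ⟨u1, hg⟩, ⟨u2, hh⟩, ngh, al, a1, a2, xl, xcr, _, xa, xd⟩ :=
    step y (fun v => (ycr v).1) h0 h1 (fun h => hWB (h.sub (fun v => (yl v).subset))) yd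
  have cI : I.IsChain GR := chain_pre (hl xI) hI
  have cg := chain_pre (ycr u1).1 hg
  have ch := chain_pre (ycr u2).1 hh
  have nI : ∀ {g : List Pt} {v : V}, g ⊆ y v → ¬ Hit g I := fun hs hc =>
    (ycr _).2.1 (hc.mono hs (List.Subset.refl _))
  have pre : ∀ {g : List Pt} {v : V}, g <+: y v → g ≠ [] → ∃ p ∈ g, ∃ i ∈ I, GR i p := by
    intro g v hp hne
    cases g with
    | nil => exact absurd rfl hne
    | cons p g' =>
      refine ⟨p, by simp, yh v p ?_⟩
      obtain ⟨t, ht⟩ := hp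
      rw [← ht]; simp
  have adj : ∀ {g : List Pt} {v : V}, g <+: y v → g ≠ [] → Adjc I g := by
    intro g v hp hne
    obtain ⟨p, hp, i, hi, h⟩ := pre hp hne
    exact ⟨i, hi, p, hp, h⟩
  have gd : ∀ z, x z ≠ [] → Gd I g h (x z) := by
    intro z hz
    refine ⟨hz, xcr z, nI (xl z).subset, ?_⟩
    obtain ⟨b, q, hq, hqx⟩ := xa z hz
    obtain ⟨p, hp, hpi⟩ := pre (al b) (List.ne_nil_of_mem hq)
    refine ⟨p, hpi, q, hqx, (conn_of_chain (chain_pre (ycr b).1 (al b)) hp hq).mono ?_⟩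
    intro r hr
    exact ⟨fun h => nI (al b).subset ⟨r, hr, h⟩, fun h => a1 b ⟨r, hr, h⟩, fun h => a2 b ⟨r, hr, h⟩⟩
  refine ⟨x, fun u v => gl I g h (x u) (x v), fun z =>
    List.Subset.trans (xl z).subset (yl z).subset, fun u hu => gl_irrefl (gd u hu), ?_,
    fun u v hu hv => gl_total (gd u hu) (gd v hv), xd⟩
  intro u v w hu hv hw
  obtain ⟨ag, ah⟩ := (xcr u).2.2.2 hu
  obtain ⟨p, hp⟩ := ag.ne_left
  obtain ⟨q, hq⟩ := ah.ne_left
  exact gl_trans cI cg ch (fun h => nI hg.subset h.symm) (fun h => nI hh.subset h.symm) ngh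
    (adj hg (List.ne_nil_of_mem hp)) (adj hh (List.ne_nil_of_mem hq)) (gd u hu) (gd v hv) (gd w hw)
end

section poset
open Finset Classical

/-- no incomparability biclique -/
def NB (m k : ℕ) (lt : ℕ → ℕ → Prop) : Prop := ∀ A B : Finset ℕ, A ⊆ range m → B ⊆ range m →
  k ≤ A.card → k ≤ B.card → ∃ a ∈ A, ∃ b ∈ B, lt a b ∨ lt b a

/-- upset in an interval -/
noncomputable def Up (lt : ℕ → ℕ → Prop) (A : Finset ℕ) (c s : ℕ) : Finset ℕ :=
  (Ico c (c + s)).filter (fun y => ∃ a ∈ A, lt a y)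

variable {m k s : ℕ} {lt : ℕ → ℕ → Prop}

lemma up_big (hlt : ∀ i j, lt i j → i < j) (nb : NB m k lt) {A : Finset ℕ} {c : ℕ}
    (hA : ∀ a ∈ A, a < c) (hk : k ≤ A.card) (hc : c + s ≤ m) : s < (Up lt A c s).card + k := by
  by_contra hcon
  push Not at hcon
  have hsub : Up lt A c s ⊆ Ico c (c + s) := filter_subset _ _
  have h1 := card_sdiff_of_subset hsub
  rw [Nat.card_Ico] at h1
  obtain ⟨a, ha, b, hb, h⟩ := nb A (Ico c (c + s) \ Up lt A c s)
    (fun a ha => mem_range.2 (by have := hA a ha; omega))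
    (fun b hb => mem_range.2 (by have := mem_Ico.1 (mem_sdiff.1 hb).1; omega)) hk (by omega)
  have hb1 := (mem_sdiff.1 hb).1
  have hb2 := (mem_sdiff.1 hb).2
  rcases h with h | h
  · exact hb2 (mem_filter.2 ⟨hb1, a, ha, h⟩)
  · have := hlt _ _ h
    have := hA a ha
    have := mem_Ico.1 hb1
    omega

lemma up_halve (hlt : ∀ i j, lt i j → i < j) (htr : ∀ i j l, lt i j → lt j l → lt i l)
    (nb : NB m k lt) (hk : 1 ≤ k) (hs : 3 * k ≤ s) (g : ℕ) :
    ∀ (A : Finset ℕ) (c : ℕ), A.card ≤ 2 ^ g → s ≤ (Up lt A c s).card + k → c + (g + 1) * s ≤ m →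
      ∃ x ∈ A, s ≤ (Up lt {x} (c + g * s) s).card + k := by
  induction g with
  | zero =>
    intro A c hA hU hc
    rcases Nat.lt_or_ge A.card 1 with h | h
    · have : A = ∅ := by rw [← card_eq_zero]; omega
      subst this
      simp [Up] at hU
      omega
    · obtain ⟨x, rfl⟩ := card_eq_one.1 (le_antisymm (by simpa using hA) h)
      exact ⟨x, by simp, by simpa using hU⟩
  | succ g ih =>
    intro A c hA hU hc
    have fin : ∀ A' ⊆ A, A'.card ≤ 2 ^ g → k ≤ (Up lt A' c s).card →
        ∃ x ∈ A, s ≤ (Up lt {x} (c + (g + 1) * s) s).card + k := by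
      intro A' hs' hA' hk'
      have h1 := up_big (s := s) hlt nb (A := Up lt A' c s) (c := c + s)
        (fun a ha => (mem_Ico.1 (mem_filter.1 ha).1).2) hk' (by nlinarith)
      have h2 : Up lt (Up lt A' c s) (c + s) s ⊆ Up lt A' (c + s) s := by
        intro y hy
        obtain ⟨hy1, b, hb, hby⟩ := mem_filter.1 hy
        obtain ⟨_, a, ha, hab⟩ := mem_filter.1 hb
        exact mem_filter.2 ⟨hy1, a, ha, htr _ _ _ hab hby⟩
      have h3 := card_le_card h2
      obtain ⟨x, hx, h⟩ := ih A' (c + s) hA' (by omega) (by nlinarith)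
      refine ⟨x, hs' hx, ?_⟩
      have : c + (g + 1) * s = c + s + g * s := by ring
      rw [this]; exact h
    obtain ⟨A', hA's, hA'c⟩ := exists_subset_card_eq (s := A) (n := min A.card (2 ^ g)) (by simp)
    have hU' : Up lt A c s ⊆ Up lt A' c s ∪ Up lt (A \ A') c s := by
      intro y hy
      obtain ⟨hy1, b, hb, hby⟩ := mem_filter.1 hy
      by_cases hbA : b ∈ A'
      · exact mem_union_left _ (mem_filter.2 ⟨hy1, b, hbA, hby⟩)
      · exact mem_union_right _ (mem_filter.2 ⟨hy1, b, mem_sdiff.2 ⟨hb, hbA⟩, hby⟩)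
    have h1 := (card_le_card hU').trans (card_union_le _ _)
    by_cases h : k ≤ (Up lt A' c s).card
    · exact fin A' hA's (by omega) h
    · refine fin (A \ A') sdiff_subset ?_ (by omega)
      rw [card_sdiff_of_subset hA's, hA'c]
      rw [pow_succ] at hA
      omega

lemma bad_up (hlt : ∀ i j, lt i j → i < j) (htr : ∀ i j l, lt i j → lt j l → lt i l)
    (nb : NB m k lt) (hk : 1 ≤ k) (hs : 3 * k ≤ s) {g : ℕ} (hg : k ≤ 2 ^ g) (c : ℕ)
    (hc : c + g * s + s ≤ m) :
    ((range c).filter (fun x => ((Ico (c + g * s) (c + g * s + s)).filter (lt x)).card + k < s)).card < k := by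
  by_contra hcon
  push Not at hcon
  obtain ⟨A, hA, hAk⟩ := exists_subset_card_eq hcon
  have h1 := up_big (s := s) hlt nb (A := A) (c := c) (fun a ha => mem_range.1 (mem_filter.1 (hA ha)).1)
    hAk.ge (by nlinarith)
  obtain ⟨x, hx, h⟩ := up_halve hlt htr nb hk hs g A c (by omega) h1.le (by nlinarith)
  have h2 := (mem_filter.1 (hA hx)).2
  have : Up lt {x} (c + g * s) s = (Ico (c + g * s) (c + g * s + s)).filter (lt x) := by
    unfold Up
    apply filter_congr
    simp
  rw [this] at h
  omega

lemma bad_down (hlt : ∀ i j, lt i j → i < j) (htr : ∀ i j l, lt i j → lt j l → lt i l)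
    (nb : NB m k lt) (hk : 1 ≤ k) (hs : 3 * k ≤ s) {g : ℕ} (hg : k ≤ 2 ^ g) (c : ℕ)
    (hc : c + s + g * s ≤ m) :
    ((Ico (c + s + g * s) m).filter (fun y => ((Ico c (c + s)).filter (fun z => lt z y)).card + k < s)).card < k := by
  set lt' : ℕ → ℕ → Prop := fun i j => i < m ∧ j < m ∧ lt (m - 1 - j) (m - 1 - i) with hlt'
  have h1 : ∀ i j, lt' i j → i < j := by
    rintro i j ⟨a, b, h⟩
    have := hlt _ _ h
    omega
  have h2 : ∀ i j l, lt' i j → lt' j l → lt' i l := by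
    rintro i j l ⟨a, b, h⟩ ⟨a', b', h'⟩
    exact ⟨a, b', htr _ _ _ h' h⟩
  have inj : Set.InjOn (fun i => m - 1 - i) (range m : Set ℕ) := by
    intro i hi j hj h
    simp at hi hj h
    omega
  have h3 : NB m k lt' := by
    intro A B hA hB kA kB
    obtain ⟨a, ha, b, hb, h⟩ := nb (A.image (fun i => m - 1 - i)) (B.image (fun i => m - 1 - i))
      (by
        intro a ha
        obtain ⟨i, hi, rfl⟩ := mem_image.1 ha
        have := mem_range.1 (hA hi)
        exact mem_range.2 (by omega))
      (by
        intro a ha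
        obtain ⟨i, hi, rfl⟩ := mem_image.1 ha
        have := mem_range.1 (hB hi)
        exact mem_range.2 (by omega))
      (by rw [card_image_of_injOn (inj.mono (by exact_mod_cast hA))]; exact kA)
      (by rw [card_image_of_injOn (inj.mono (by exact_mod_cast hB))]; exact kB)
    obtain ⟨i, hi, rfl⟩ := mem_image.1 ha
    obtain ⟨j, hj, rfl⟩ := mem_image.1 hb
    have h5 := mem_range.1 (hA hi)
    have h6 := mem_range.1 (hB hj)
    exact ⟨i, hi, j, hj, h.symm.imp (fun h => ⟨h5, h6, h⟩) (fun h => ⟨h6, h5, h⟩)⟩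
  have h4 := bad_up h1 h2 h3 hk hs hg (m - (c + s + g * s)) (by omega)
  refine lt_of_le_of_lt ?_ h4
  apply card_le_card_of_injOn (fun i => m - 1 - i)
  · intro y hy
    simp only [coe_filter, mem_Ico, Set.mem_ofPred_eq] at hy
    simp only [coe_filter, mem_range, Set.mem_ofPred_eq]
    refine ⟨by omega, lt_of_le_of_lt ?_ hy.2⟩
    gcongr ?_ + k
    apply card_le_card_of_injOn (fun i => m - 1 - i)
    · intro z hz
      simp only [coe_filter, mem_Ico, Set.mem_ofPred_eq] at hz
      simp only [coe_filter, mem_Ico, Set.mem_ofPred_eq]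
      refine ⟨by omega, ?_⟩
      have := hz.2.2.2
      have e : m - 1 - (m - 1 - y) = y := by omega
      rw [e] at this
      exact this
    · refine inj.mono ?_
      intro z hz
      simp only [coe_filter, mem_Ico, Set.mem_ofPred_eq] at hz
      simp only [coe_range, Set.mem_Iio]
      omega
  · refine inj.mono ?_
    intro z hz
    simp only [coe_filter, mem_Ico, Set.mem_ofPred_eq] at hz
    simp only [coe_range, Set.mem_Iio]
    omega

lemma poset_nat (hlt : ∀ i j, lt i j → i < j) (htr : ∀ i j l, lt i j → lt j l → lt i l)
    (nb : NB m k lt) (hk : 1 ≤ k) (hs : 3 * k ≤ s) {g : ℕ} (hg : k ≤ 2 ^ g) :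
    ((range m ×ˢ range m).filter (fun x : ℕ × ℕ => ¬ lt x.1 x.2 ∧ ¬ lt x.2 x.1)).card ≤
      m * (2 * ((2 * g + 2) * s)) + (m / s + 1) * (4 * k * m) := by
  set L := (2 * g + 2) * s with hL
  have hL1 : 0 < L := by
    have : 0 < s := by omega
    positivity
  set BU : ℕ → Finset ℕ := fun j => if j * s + g * s + s ≤ m then
    (range (j * s)).filter (fun x => ((Ico (j * s + g * s) (j * s + g * s + s)).filter (lt x)).card + k < s) else ∅ with hBU
  set BD : ℕ → Finset ℕ := fun j => if (j * s + g * s) + s + g * s ≤ m then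
    (Ico ((j * s + g * s) + s + g * s) m).filter (fun y => ((Ico (j * s + g * s) (j * s + g * s + s)).filter (fun z => lt z y)).card + k < s) else ∅ with hBD
  have cBU : ∀ j, (BU j).card ≤ k := by
    intro j
    simp only [hBU]
    split_ifs with h
    · exact (bad_up hlt htr nb hk hs hg (j * s) h).le
    · simp
  have cBD : ∀ j, (BD j).card ≤ k := by
    intro j
    simp only [hBD]
    split_ifs with h
    · exact (bad_down hlt htr nb hk hs hg (j * s + g * s) h).le
    · simp
  set near : Finset (ℕ × ℕ) := (range m).biUnion (fun x => (Ico (x + 1 - L) (x + L)).image (fun y => (x, y))) with hnear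
  set R := range m with hR
  set far : Finset (ℕ × ℕ) := (range (m / s + 1)).biUnion (fun j => BU j ×ˢ R ∪ R ×ˢ BD j ∪ (BD j ×ˢ R ∪ R ×ˢ BU j)) with hfar
  have key : ∀ x y, y < m → x + L ≤ y → ¬ lt x y → ∃ j ∈ range (m / s + 1), x ∈ BU j ∨ y ∈ BD j := by
    intro x y hy hxy hn
    have hs0 : 0 < s := by omega
    have e1 := Nat.div_add_mod x s
    have e2 := Nat.mod_lt x hs0
    have e3 : (x / s + 1) * s = s * (x / s) + s := by ring
    have e4 : L = g * s + s + g * s + s := by rw [hL]; ring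
    refine ⟨x / s + 1, ?_, ?_⟩
    · rw [mem_range, Nat.lt_succ_iff, Nat.le_div_iff_mul_le hs0]
      omega
    · set j := x / s + 1 with hj
      by_contra hcon
      push Not at hcon
      obtain ⟨c1, c2⟩ := hcon
      simp only [hBU] at c1
      simp only [hBD] at c2
      rw [if_pos (by omega)] at c1 c2
      rw [mem_filter] at c1 c2
      have d1 : ¬ (((Ico (j * s + g * s) (j * s + g * s + s)).filter (lt x)).card + k < s) :=
        fun h => c1 ⟨mem_range.2 (by omega), h⟩
      have d2 : ¬ (((Ico (j * s + g * s) (j * s + g * s + s)).filter (fun z => lt z y)).card + k < s) :=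
        fun h => c2 ⟨mem_Ico.2 ⟨by omega, hy⟩, h⟩
      have hdis : Disjoint ((Ico (j * s + g * s) (j * s + g * s + s)).filter (lt x))
          ((Ico (j * s + g * s) (j * s + g * s + s)).filter (fun z => lt z y)) := by
        rw [disjoint_left]
        intro z h1 h2
        exact hn (htr _ _ _ (mem_filter.1 h1).2 (mem_filter.1 h2).2)
      have h1 := card_union_of_disjoint hdis
      have h2 : (((Ico (j * s + g * s) (j * s + g * s + s)).filter (lt x)) ∪
          ((Ico (j * s + g * s) (j * s + g * s + s)).filter (fun z => lt z y))).card ≤ s := by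
        have := card_le_card (union_subset (filter_subset (lt x) (Ico (j * s + g * s) (j * s + g * s + s)))
          (filter_subset (fun z => lt z y) (Ico (j * s + g * s) (j * s + g * s + s))))
        rw [Nat.card_Ico] at this
        omega
      omega
  have hsub : (range m ×ˢ range m).filter (fun x : ℕ × ℕ => ¬ lt x.1 x.2 ∧ ¬ lt x.2 x.1) ⊆ near ∪ far := by
    rintro ⟨x, y⟩ hxy
    obtain ⟨h1, h2, h3⟩ := mem_filter.1 hxy
    obtain ⟨hx, hy⟩ := mem_product.1 h1
    have hx' := mem_range.1 hx
    have hy' := mem_range.1 hy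
    by_cases hn1 : x + L ≤ y
    · obtain ⟨j, hj, h⟩ := key x y hy' hn1 h2
      refine mem_union_right _ (mem_biUnion.2 ⟨j, hj, mem_union_left _ ?_⟩)
      rcases h with h | h
      · exact mem_union_left _ (mem_product.2 ⟨h, hy⟩)
      · exact mem_union_right _ (mem_product.2 ⟨hx, h⟩)
    by_cases hn2 : y + L ≤ x
    · obtain ⟨j, hj, h⟩ := key y x hx' hn2 h3
      refine mem_union_right _ (mem_biUnion.2 ⟨j, hj, mem_union_right _ ?_⟩)
      rcases h with h | h
      · exact mem_union_right _ (mem_product.2 ⟨hx, h⟩)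
      · exact mem_union_left _ (mem_product.2 ⟨h, hy⟩)
    refine mem_union_left _ (mem_biUnion.2 ⟨x, hx, mem_image.2 ⟨y, mem_Ico.2 ?_, rfl⟩⟩)
    omega
  refine (card_le_card hsub).trans ((card_union_le _ _).trans (add_le_add ?_ ?_))
  · refine (card_biUnion_le_card_mul _ _ (2 * L) ?_).trans (by simp)
    intro x hx
    refine card_image_le.trans ?_
    rw [Nat.card_Ico]; omega
  · refine (card_biUnion_le_card_mul _ _ (4 * k * m) ?_).trans (by simp)
    intro j hj
    refine (card_union_le _ _).trans ?_
    have h1 := card_union_le (BU j ×ˢ R) (R ×ˢ BD j)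
    have h2 := card_union_le (BD j ×ˢ R) (R ×ˢ BU j)
    simp only [card_product] at h1 h2
    have h3 : R.card = m := card_range m
    rw [h3] at h1 h2
    have := Nat.mul_le_mul_right m (cBU j)
    have := Nat.mul_le_mul_right m (cBD j)
    nlinarith
end poset

lemma lin_ext {X : Type} [Fintype X] (lt : X → X → Prop) (hi : ∀ x, ¬ lt x x)
    (ht : ∀ x y z, lt x y → lt y z → lt x z) :
    ∃ pos : X ≃ Fin (Fintype.card X), ∀ u v, lt u v → pos u < pos v := by
  classical
  have : IsStrictOrder X lt := { irrefl := hi, trans := ht }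
  let _ : PartialOrder X := partialOrderOfSO lt
  have : Fintype (LinearExtension X) := inferInstanceAs (Fintype X)
  have hc : Fintype.card (LinearExtension X) = Fintype.card X :=
    Fintype.card_congr (Equiv.refl X : LinearExtension X ≃ X)
  let e := (Fintype.orderIsoFinOfCardEq (LinearExtension X) hc).symm
  refine ⟨e.toEquiv, ?_⟩
  intro u v h
  have h1 : u < v := h
  have h2 : (toLinearExtension u) ≤ (toLinearExtension v) := toLinearExtension.monotone h1.le
  have h3 : (toLinearExtension u) ≠ (toLinearExtension v) := fun hh => h1.ne hh
  exact e.strictMono (lt_of_le_of_ne h2 h3)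

section
variable {V : Type} [Fintype V]

set_option maxHeartbeats 2000000 in
lemma poset_hit (l y : V → List Pt) (lt : V → V → Prop) (hyl : ∀ z, y z ⊆ l z)
    (hi : ∀ u, y u ≠ [] → ¬ lt u u)
    (ht : ∀ u v w, y u ≠ [] → y v ≠ [] → y w ≠ [] → lt u v → lt v w → lt u w)
    (hc : ∀ u v, y u ≠ [] → y v ≠ [] → (¬ Hit (y u) (y v) ↔ lt u v ∨ lt v u))
    {q Q : ℕ} (hq : 1 ≤ q) (hQ : 1 ≤ Q) (hn : Fintype.card V ≤ 2 ^ q)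
    (hbig : 200 * q * Q ^ 2 ≤ Fintype.card V)
    (hcnt : (Fintype.card V) ^ 2 ≤ Q * cnt (fun x : V × V => Hit (y x.1) (y x.2))) :
    WB l ((Fintype.card V : ℝ) / (400 * q * Q ^ 2)) := by
  classical
  set n := Fintype.card V with hnn
  set X := {z : V // y z ≠ []}
  set m := Fintype.card X with hm
  have hmn : m ≤ n := Fintype.card_subtype_le _
  obtain ⟨pos, hpos⟩ := lin_ext (fun u v : X => lt u.1 v.1) (fun u => hi u.1 u.2)
    (fun u v w => ht u.1 v.1 w.1 u.2 v.2 w.2)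
  set ltN : ℕ → ℕ → Prop := fun i j => ∃ u v : X, lt u.1 v.1 ∧ (pos u : ℕ) = i ∧ (pos v : ℕ) = j
  set D := 200 * q * Q ^ 2 with hD
  have hD0 : 0 < D := by positivity
  set k := n / D with hk
  have hk1 : 1 ≤ k := (Nat.one_le_div_iff hD0).2 hbig
  have hkD : k * D ≤ n := Nat.div_mul_le_self _ _
  have hkD' : n < 2 * (k * D) := by
    have := Nat.div_add_mod n D
    have := Nat.mod_lt n hD0
    have h4 : D * (n / D) = k * D := by rw [hk]; ring
    have : D ≤ k * D := Nat.le_mul_of_pos_left _ hk1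
    omega
  by_contra hWB
  have kR : (n : ℝ) / (400 * q * Q ^ 2) ≤ k := by
    rw [div_le_iff₀ (by positivity)]
    have : (n : ℝ) ≤ 2 * (k * D) := by exact_mod_cast hkD'.le
    rw [hD] at this
    push_cast at this
    linarith
  have nb : NB m k ltN := by
    intro A B hA hB kA kB
    by_contra hcon
    push Not at hcon
    apply hWB
    set f : Finset ℕ → Finset V := fun A => (Finset.univ.filter (fun u : X => (pos u : ℕ) ∈ A)).image Subtype.val with hf
    have hfc : ∀ A : Finset ℕ, A ⊆ Finset.range m → A.card ≤ (f A).card := by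
      intro A hA
      rw [hf]
      simp only
      rw [Finset.card_image_of_injective _ Subtype.val_injective]
      refine le_trans (Finset.card_le_card (t := (Finset.univ.filter (fun u : X => (pos u : ℕ) ∈ A)).image (fun u => (pos u : ℕ))) ?_) Finset.card_image_le
      intro i hi
      have him := Finset.mem_range.1 (hA hi)
      refine Finset.mem_image.2 ⟨pos.symm ⟨i, him⟩, ?_, ?_⟩
      · simp [hi]
      · simp
    refine ⟨f A, f B, kR.trans (by exact_mod_cast kA.trans (hfc A hA)),
      kR.trans (by exact_mod_cast kB.trans (hfc B hB)), ?_⟩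
    intro a ha b hb
    obtain ⟨u, hu, rfl⟩ := Finset.mem_image.1 ha
    obtain ⟨v, hv, rfl⟩ := Finset.mem_image.1 hb
    have h := hcon _ (Finset.mem_filter.1 hu).2 _ (Finset.mem_filter.1 hv).2
    refine Hit.mono ?_ (hyl u.1) (hyl v.1)
    by_contra hh
    rcases (hc u.1 v.1 u.2 v.2).1 hh with h' | h'
    · exact h.1 ⟨u, v, h', rfl, rfl⟩
    · exact h.2 ⟨v, u, h', rfl, rfl⟩
  have hkn : k ≤ 2 ^ q := le_trans (Nat.div_le_self _ _) hn
  have P := poset_nat (s := 16 * k * Q) (g := q) (lt := ltN) (by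
      rintro i j ⟨u, v, h, rfl, rfl⟩
      exact hpos u v h) (by
      rintro i j w ⟨u, v, h, rfl, rfl⟩ ⟨u', v', h', e, rfl⟩
      have : u' = v := pos.injective (Fin.ext e)
      subst this
      exact ⟨u, v', ht _ _ _ u.2 u'.2 v'.2 h h', rfl, rfl⟩) nb hk1 (by nlinarith) hkn
  have hC : cnt (fun x : V × V => Hit (y x.1) (y x.2)) ≤
      ((Finset.range m ×ˢ Finset.range m).filter (fun x : ℕ × ℕ => ¬ ltN x.1 x.2 ∧ ¬ ltN x.2 x.1)).card := by
    unfold cnt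
    let p : V → ℕ := fun u => if h : y u ≠ [] then (pos ⟨u, h⟩ : ℕ) else 0
    have nn : ∀ {u v : V}, Hit (y u) (y v) → y u ≠ [] ∧ y v ≠ [] := by
      rintro u v ⟨r, h1, h2⟩
      exact ⟨List.ne_nil_of_mem h1, List.ne_nil_of_mem h2⟩
    apply Finset.card_le_card_of_injOn (fun x => (p x.1, p x.2))
    · rintro ⟨u, v⟩ huv
      have hh : Hit (y u) (y v) := by simpa using huv
      obtain ⟨hu, hv⟩ := nn hh
      simp only [p, dif_pos hu, dif_pos hv, Finset.coe_filter, Finset.mem_product, Finset.mem_range, Set.mem_ofPred_eq]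
      refine ⟨⟨(pos _).2, (pos _).2⟩, ?_, ?_⟩
      · rintro ⟨u', v', h, e1, e2⟩
        have e1' := pos.injective (Fin.ext e1)
        have e2' := pos.injective (Fin.ext e2)
        subst e1' e2'
        exact (hc u v hu hv).2 (Or.inl h) hh
      · rintro ⟨u', v', h, e1, e2⟩
        have e1' := pos.injective (Fin.ext e1)
        have e2' := pos.injective (Fin.ext e2)
        subst e1' e2'
        exact (hc u v hu hv).2 (Or.inr h) hh
    · rintro ⟨u, v⟩ huv ⟨u', v'⟩ huv' he
      have hh : Hit (y u) (y v) := by simpa using huv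
      have hh' : Hit (y u') (y v') := by simpa using huv'
      obtain ⟨hu, hv⟩ := nn hh
      obtain ⟨hu', hv'⟩ := nn hh'
      simp only [p, dif_pos hu, dif_pos hv, dif_pos hu', dif_pos hv', Prod.mk.injEq] at he
      have e1 := pos.injective (Fin.ext he.1)
      have e2 := pos.injective (Fin.ext he.2)
      exact Prod.ext (congrArg Subtype.val e1) (congrArg Subtype.val e2)
  have hCP : cnt (fun x : V × V => Hit (y x.1) (y x.2)) ≤
      m * (2 * ((2 * q + 2) * (16 * k * Q))) + (m / (16 * k * Q) + 1) * (4 * k * m) := by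
    refine hC.trans (le_trans (le_of_eq ?_) P)
    congr!
  have hfin := hcnt.trans (Nat.mul_le_mul_left Q hCP)
  -- arithmetic
  have hR : (n : ℝ) ^ 2 ≤ Q * (n * (2 * ((2 * q + 2) * (16 * k * Q))) + ((n : ℝ) / (16 * k * Q) + 1) * (4 * k * n)) := by
    have h1 : ((m / (16 * k * Q) : ℕ) : ℝ) ≤ (n : ℝ) / (16 * k * Q) := by
      refine (Nat.cast_div_le).trans ?_
      push_cast
      gcongr
    have h2 : (n : ℝ) ^ 2 ≤ Q * (m * (2 * ((2 * q + 2) * (16 * k * Q))) + (((m / (16 * k * Q) : ℕ) : ℝ) + 1) * (4 * k * m)) := by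
      exact_mod_cast hfin
    have hmn' : (m : ℝ) ≤ n := by exact_mod_cast hmn
    refine h2.trans ?_
    gcongr
  have kpos : (0 : ℝ) < k := by exact_mod_cast hk1
  have Qpos : (1 : ℝ) ≤ Q := by exact_mod_cast hQ
  have qpos : (1 : ℝ) ≤ q := by exact_mod_cast hq
  have e1 : Q * (n * (2 * ((2 * q + 2) * (16 * k * Q))) + ((n : ℝ) / (16 * k * Q) + 1) * (4 * k * n)) =
      n * (64 * (q + 1) * (k * Q ^ 2) + n / 4 + 4 * (k * Q)) := by
    field_simp
    ring
  rw [e1, pow_two] at hR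
  have npos : (0 : ℝ) < n := by
    have : 0 < n := lt_of_lt_of_le hD0 hbig
    exact_mod_cast this
  have hR' := le_of_mul_le_mul_left hR npos
  have hkDR : (k : ℝ) * (200 * q * Q ^ 2) ≤ n := by exact_mod_cast hkD
  have i1 : (k : ℝ) * Q ^ 2 ≤ q * (k * Q ^ 2) := le_mul_of_one_le_left (by positivity) qpos
  have i2 : (k : ℝ) * Q ≤ k * Q ^ 2 := by
    have : (Q : ℝ) ≤ Q ^ 2 := by nlinarith
    gcongr
  nlinarith

lemma le_natCast_dens [Nonempty V] {P : V × V → Prop} {Q : ℕ} (h : (1 : ℝ) / Q ≤ dens P) (hQ : 1 ≤ Q) :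
    (Fintype.card V) ^ 2 ≤ Q * cnt P := by
  have h1 := le_cnt_of_dens h
  rw [Fintype.card_prod] at h1
  have hQ' : (0 : ℝ) < Q := by exact_mod_cast hQ
  rw [div_mul_eq_mul_div, div_le_iff₀ hQ'] at h1
  have : ((Fintype.card V) ^ 2 : ℝ) ≤ Q * cnt P := by push_cast at h1; linarith
  exact_mod_cast this

/-- dense families have large weak bicliques -/
lemma dense_biclique [Nonempty V] (l : V → List Pt) (hl : ∀ v, (l v).IsChain GR) {q E : ℕ} (hq : 1000 ≤ q)
    (hE : 600000 ≤ E)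
    (hn : Fintype.card V ≤ 2 ^ q) (hbig : q ^ E ≤ Fintype.card V)
    (hd : (Fintype.card V) ^ 2 ≤ q ^ 10 * cnt (fun x : V × V => Hit (l x.1) (l x.2))) :
    WB l ((Fintype.card V : ℝ) / q ^ E) := by
  have hq0 : (1000 : ℝ) ≤ q := by exact_mod_cast hq
  have hqp : (0 : ℝ) < q := by linarith
  have hq1 : (1 : ℝ) ≤ q := by linarith
  by_contra hWB
  obtain ⟨a, ha⟩ : ∃ a : ℕ, a = 260025 := ⟨_, rfl⟩
  have hd' : (1 : ℝ) / q ^ 10 ≤ dens (fun x : V × V => Hit (l x.1) (l x.2)) := by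
    apply le_dens_of_cnt
    rw [div_mul_eq_mul_div, div_le_iff₀ (by positivity), Fintype.card_prod]
    have : ((Fintype.card V : ℝ)) ^ 2 ≤ q ^ 10 * cnt (fun x : V × V => Hit (l x.1) (l x.2)) := by
      exact_mod_cast hd
    push_cast
    linarith
  have h1075 : (10 : ℝ) ^ 75 = 1000 ^ 25 := by norm_num
  have h75 : (10 : ℝ) ^ 75 ≤ q ^ 25 := by rw [h1075]; gcongr
  set ε' : ℝ := (1 / q ^ 10) ^ 160 / 10 ^ 75 with hε'
  have he' : 1 / (q : ℝ) ^ 1625 ≤ ε' := by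
    rw [hε', div_pow, one_pow, ← pow_mul, div_div]
    apply one_div_le_one_div_of_le (by positivity)
    calc (q : ℝ) ^ (10 * 160) * (10 : ℝ) ^ 75 ≤ (q : ℝ) ^ (10 * 160) * (q : ℝ) ^ 25 := by gcongr
      _ = (q : ℝ) ^ 1625 := by rw [← pow_add]
  have he'' : 1 / (q : ℝ) ^ a ≤ ε' ^ 160 / 10 ^ 75 := by
    calc 1 / (q : ℝ) ^ a = (1 / (q : ℝ) ^ 1625) ^ 160 / q ^ 25 := by
          rw [div_pow, one_pow, ← pow_mul, div_div, ← pow_add, ha]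
      _ ≤ ε' ^ 160 / 10 ^ 75 := by gcongr
  have hnpos : (0 : ℝ) < Fintype.card V := card_pos_real
  obtain ⟨y, lt, h1, h2, h3, h4, h5⟩ := two_steps l hl (ε := 1 / q ^ 10) (by positivity)
    (by rw [div_le_one (by positivity)]; exact one_le_pow₀ hq1) hε' (by
      intro h
      apply hWB
      refine h.anti ?_
      have hh : 1 / (q : ℝ) ^ E ≤ ε' ^ 160 / 10 ^ 75 :=
        le_trans (one_div_le_one_div_of_le (by positivity)
          (pow_le_pow_right₀ hq1 (by omega : a ≤ E))) he''
      have hh2 := mul_le_mul_of_nonneg_right hh hnpos.le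
      rw [one_div_mul_eq_div] at hh2
      exact hh2) hd'
  have h6 := le_natCast_dens (Q := q ^ a) (by push_cast; exact he''.trans h5) (Nat.one_le_pow _ _ (by omega))
  have hx : 200 * q * (q ^ a) ^ 2 ≤ q ^ E := by
    calc 200 * q * (q ^ a) ^ 2 ≤ q * q * (q ^ a) ^ 2 := by gcongr; omega
      _ = q ^ (2 * a + 2) := by ring
      _ ≤ q ^ E := Nat.pow_le_pow_right (by omega) (by omega)
  have hy : 400 * q * (q ^ a) ^ 2 ≤ q ^ E := by
    calc 400 * q * (q ^ a) ^ 2 ≤ q * q * (q ^ a) ^ 2 := by gcongr; omega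
      _ = q ^ (2 * a + 2) := by ring
      _ ≤ q ^ E := Nat.pow_le_pow_right (by omega) (by omega)
  have h7 := poset_hit l y lt h1 h2 h3 h4 (q := q) (Q := q ^ a) (by omega)
    (Nat.one_le_pow _ _ (by omega)) hn (hx.trans hbig) h6
  apply hWB
  refine h7.anti ?_
  have hyR : (400 * q * ((q ^ a : ℕ) : ℝ) ^ 2 : ℝ) ≤ q ^ E := by exact_mod_cast hy
  gcongr
end

section expander
open Finset Classical
variable {V : Type} [Fintype V]

/-- boundary -/
noncomputable def bd (l : V → List Pt) (A : Finset V) : Finset V :=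
  univ.filter (fun v => v ∉ A ∧ ∃ a ∈ A, Hit (l a) (l v))

/-- sparse cut -/
def SC (l : V → List Pt) (q : ℕ) : Prop := ∃ A B : Finset V, A.Nonempty ∧ B.Nonempty ∧ Disjoint A B ∧
  (∀ a ∈ A, ∀ b ∈ B, ¬ Hit (l a) (l b)) ∧ q * (univ \ (A ∪ B)).card ≤ A.card ∧
  q * (univ \ (A ∪ B)).card ≤ B.card

lemma exp1 {l : V → List Pt} {q : ℕ} (hq : 1000 ≤ q) (h : ¬ SC l q) (A : Finset V)
    (hA : 3 * A.card ≤ 2 * Fintype.card V) : A.card ≤ 4 * q * (bd l A).card := by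
  by_contra hcon
  push Not at hcon
  apply h
  set B := univ \ (A ∪ bd l A) with hB
  have hdis : Disjoint A (bd l A) := by
    rw [disjoint_left]; intro a ha hb
    exact (mem_filter.1 hb).2.1 ha
  have hBc : B.card + (A.card + (bd l A).card) = Fintype.card V := by
    rw [hB, card_sdiff_of_subset (subset_univ _), card_union_of_disjoint hdis, card_univ]
    have : A.card + (bd l A).card ≤ Fintype.card V := by
      rw [← card_union_of_disjoint hdis]; exact card_le_univ _
    omega
  have hS : univ \ (A ∪ B) ⊆ bd l A := by
    intro v hv
    simp only [hB, mem_sdiff, mem_univ, mem_union, true_and] at hv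
    tauto
  have hSc := card_le_card hS
  have h1 : q * (univ \ (A ∪ B)).card ≤ q * (bd l A).card := Nat.mul_le_mul_left _ hSc
  have h2 : 1000 * (bd l A).card ≤ q * (bd l A).card := Nat.mul_le_mul_right _ hq
  have h3 : 4 * (q * (bd l A).card) < A.card := by rw [← mul_assoc]; exact hcon
  refine ⟨A, B, card_pos.1 (by omega), card_pos.1 (by omega), ?_, ?_, by omega, by omega⟩
  · rw [disjoint_left]; intro a ha hb
    exact (mem_sdiff.1 hb).2 (mem_union_left _ ha)
  · intro a ha b hb hh
    have hb' := (mem_sdiff.1 hb).2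
    refine hb' (mem_union_right _ (mem_filter.2 ⟨mem_univ _, fun h => hb' (mem_union_left _ h), a, ha, hh⟩))

lemma exp2 {l : V → List Pt} {q : ℕ} (hq : 1000 ≤ q) (h : ¬ SC l q) (H : Finset V)
    (hH : 4000 * q * H.card ≤ Fintype.card V) :
    ∃ A : Finset V, 500 * A.card ≤ Fintype.card V ∧ ∀ B : Finset V, B.Nonempty → Disjoint B (A ∪ H) →
      3 * (A.card + B.card) ≤ 2 * Fintype.card V → B.card < 8 * q * (bd l B \ (A ∪ H)).card := by
  set F := (univ : Finset (Finset V)).filter (fun A => Disjoint A H ∧ 3 * A.card ≤ 2 * Fintype.card V ∧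
    8 * q * (bd l A \ H).card ≤ A.card) with hF
  have hne : F.Nonempty := ⟨∅, mem_filter.2 ⟨mem_univ _, by simp, by simp, by simp [bd]⟩⟩
  obtain ⟨A, hA, hmax⟩ := exists_max_image F card hne
  obtain ⟨_, hAH, hA3, hAb⟩ := mem_filter.1 hA
  refine ⟨A, ?_, ?_⟩
  · have h1 := exp1 hq h A hA3
    have h2 : (bd l A).card ≤ (bd l A \ H).card + H.card := by
      have := card_le_card (subset_union_left (s₁ := bd l A) (s₂ := H))
      rw [← sdiff_union_self_eq_union] at this
      exact this.trans (card_union_le _ _)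
    have h3 : 4 * q * (bd l A).card ≤ 4 * q * ((bd l A \ H).card + H.card) := Nat.mul_le_mul_left _ h2
    nlinarith
  · intro B hB hBd hBc
    by_contra hcon
    push Not at hcon
    have dAB : Disjoint A B := (disjoint_union_right.1 hBd).1.symm
    have hcard := card_union_of_disjoint dAB
    have hsub : bd l (A ∪ B) \ H ⊆ (bd l A \ H) ∪ (bd l B \ (A ∪ H)) := by
      intro v hv
      obtain ⟨h1, h2⟩ := mem_sdiff.1 hv
      obtain ⟨_, h3, a, ha, h4⟩ := mem_filter.1 h1
      have h5 : v ∉ A := fun h => h3 (mem_union_left _ h)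
      have h6 : v ∉ B := fun h => h3 (mem_union_right _ h)
      rcases mem_union.1 ha with ha | ha
      · exact mem_union_left _ (mem_sdiff.2 ⟨mem_filter.2 ⟨mem_univ _, h5, a, ha, h4⟩, h2⟩)
      · refine mem_union_right _ (mem_sdiff.2 ⟨mem_filter.2 ⟨mem_univ _, h6, a, ha, h4⟩, ?_⟩)
        rw [mem_union]; tauto
    have h1 := (card_le_card hsub).trans (card_union_le _ _)
    have h2 := Nat.mul_le_mul_left (8 * q) h1
    have := hmax (A ∪ B) (mem_filter.2 ⟨mem_univ _, ?_, by omega, by rw [hcard]; linarith⟩)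
    · have := hB.card_pos
      omega
    · exact disjoint_union_left.2 ⟨hAH, (disjoint_union_right.1 hBd).2⟩

/-- connection through members -/
def Link (l : V → List Pt) (P : Finset V) (u v : V) : Prop :=
  ∀ p ∈ l u, ∀ s ∈ l v, Conn (⋃ w ∈ P, ls (l w)) p s

lemma sub_link (l : V → List Pt) {P : Finset V} {w : V} (hw : w ∈ P) : ls (l w) ⊆ ⋃ w ∈ P, ls (l w) := by
  intro p hp
  simp only [Set.mem_iUnion]
  exact ⟨w, hw, hp⟩

lemma link_mono (l : V → List Pt) {P P' : Finset V} (hw : P ⊆ P') :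
    (⋃ w ∈ P, ls (l w)) ⊆ ⋃ w ∈ P', ls (l w) := by
  intro p hp
  simp only [Set.mem_iUnion] at hp ⊢
  obtain ⟨w, h, h'⟩ := hp
  exact ⟨w, hw h, h'⟩

noncomputable def ball (l : V → List Pt) (Z : Finset V) (u : V) : ℕ → Finset V
  | 0 => {u}
  | r + 1 => ball l Z u r ∪ (bd l (ball l Z u r) \ Z)

lemma ball_disj {l : V → List Pt} {Z : Finset V} {u : V} (hu : u ∉ Z) (r : ℕ) : Disjoint (ball l Z u r) Z := by
  induction r with
  | zero => simpa [ball] using hu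
  | succ r ih => exact disjoint_union_left.2 ⟨ih, sdiff_disjoint⟩

lemma ball_ne (l : V → List Pt) (Z : Finset V) (u : V) (r : ℕ) : u ∈ ball l Z u r := by
  induction r with
  | zero => simp [ball]
  | succ r ih => exact mem_union_left _ ih

lemma ball_link {l : V → List Pt} (hl : ∀ v, (l v).IsChain GR) {Z : Finset V} {u : V} (hu : u ∉ Z) (r : ℕ) :
    ∀ v ∈ ball l Z u r, ∃ P : Finset V, P.card ≤ r + 1 ∧ Disjoint P Z ∧ Link l P u v := by
  induction r with
  | zero =>
    intro v hv
    simp only [ball, mem_singleton] at hv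
    subst hv
    refine ⟨{v}, by simp, by simpa using hu, ?_⟩
    intro p hp s hs
    exact (conn_of_chain (hl v) hp hs).mono (sub_link l (by simp))
  | succ r ih =>
    intro v hv
    rcases mem_union.1 hv with hv | hv
    · obtain ⟨P, h1, h2⟩ := ih v hv
      exact ⟨P, by omega, h2⟩
    · obtain ⟨h1, h2⟩ := mem_sdiff.1 hv
      obtain ⟨_, _, a, ha, t, hta, htv⟩ := mem_filter.1 h1
      obtain ⟨P, h3, h4, h5⟩ := ih a ha
      refine ⟨insert v P, (card_insert_le _ _).trans (by omega), ?_, ?_⟩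
      · exact disjoint_insert_left.2 ⟨h2, h4⟩
      · intro p hp s hs
        exact ((h5 p hp t hta).mono (link_mono l (subset_insert _ _))).trans
          ((conn_of_chain (hl v) htv hs).mono (sub_link l (mem_insert_self _ _)))

lemma ball_grow {l : V → List Pt} {q : ℕ} (hq : 1000 ≤ q) {A H : Finset V} (hA : 500 * A.card ≤ Fintype.card V)
    (hexp : ∀ B : Finset V, B.Nonempty → Disjoint B (A ∪ H) →
      3 * (A.card + B.card) ≤ 2 * Fintype.card V → B.card < 8 * q * (bd l B \ (A ∪ H)).card)
    {u : V} (hu : u ∉ A ∪ H) (r : ℕ) :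
    3 * Fintype.card V < 5 * (ball l (A ∪ H) u r).card ∨
      (1 + 1 / (8 * q : ℝ)) ^ r ≤ (ball l (A ∪ H) u r).card := by
  have hq0 : (0 : ℝ) < q := by
    have : (1000 : ℝ) ≤ q := by exact_mod_cast hq
    linarith
  induction r with
  | zero => right; simp [ball]
  | succ r ih =>
    have hdis : Disjoint (ball l (A ∪ H) u r) (bd l (ball l (A ∪ H) u r) \ (A ∪ H)) := by
      rw [disjoint_left]
      intro v h1 h2
      exact (mem_filter.1 (mem_sdiff.1 h2).1).2.1 h1
    have hc : (ball l (A ∪ H) u (r + 1)).card = (ball l (A ∪ H) u r).card +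
        (bd l (ball l (A ∪ H) u r) \ (A ∪ H)).card := card_union_of_disjoint hdis
    by_cases hbig : 3 * Fintype.card V < 5 * (ball l (A ∪ H) u r).card
    · left; omega
    · right
      have h1 := ih.resolve_left hbig
      have h2 := hexp (ball l (A ∪ H) u r) ⟨u, ball_ne _ _ _ _⟩ (ball_disj hu r) (by omega)
      rw [hc]
      push_cast
      have h2' : ((ball l (A ∪ H) u r).card : ℝ) ≤ 8 * q * ((bd l (ball l (A ∪ H) u r) \ (A ∪ H)).card : ℝ) := by
        exact_mod_cast h2.le
      set x : ℝ := ((ball l (A ∪ H) u r).card : ℝ)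
      have h3 : x / (8 * q) ≤ ((bd l (ball l (A ∪ H) u r) \ (A ∪ H)).card : ℝ) := by
        rw [div_le_iff₀ (by positivity), mul_comm]
        exact h2'
      calc (1 + 1 / (8 * q : ℝ)) ^ (r + 1) = (1 + 1 / (8 * q : ℝ)) ^ r * (1 + 1 / (8 * q : ℝ)) := pow_succ _ _
        _ ≤ x * (1 + 1 / (8 * q : ℝ)) := by gcongr
        _ = x + x / (8 * q) := by ring
        _ ≤ _ := by linarith

lemma ball_final {l : V → List Pt} {q : ℕ} (hq : 1000 ≤ q) (hn : Fintype.card V ≤ 2 ^ q) {A H : Finset V}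
    (hA : 500 * A.card ≤ Fintype.card V)
    (hexp : ∀ B : Finset V, B.Nonempty → Disjoint B (A ∪ H) →
      3 * (A.card + B.card) ≤ 2 * Fintype.card V → B.card < 8 * q * (bd l B \ (A ∪ H)).card)
    {u : V} (hu : u ∉ A ∪ H) :
    3 * Fintype.card V < 5 * (ball l (A ∪ H) u (8 * q * q)).card := by
  have hq0 : (0 : ℝ) < q := by
    have : (1000 : ℝ) ≤ q := by exact_mod_cast hq
    linarith
  have hN : 0 < Fintype.card V := Fintype.card_pos_iff.2 ⟨u⟩
  rcases ball_grow hq hA hexp hu (8 * q * q) with h | h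
  · exact h
  · have h1 : (2 : ℝ) ≤ (1 + 1 / (8 * q : ℝ)) ^ (8 * q) := by
      have := one_add_mul_le_pow (a := 1 / (8 * q : ℝ)) (by
        have : (0 : ℝ) ≤ 1 / (8 * q : ℝ) := by positivity
        linarith) (8 * q)
      push_cast at this
      have e : (8 * q : ℝ) * (1 / (8 * q : ℝ)) = 1 := by field_simp
      rw [e] at this
      linarith
    have h2 : (2 : ℝ) ^ q ≤ (ball l (A ∪ H) u (8 * q * q)).card := by
      refine le_trans ?_ h
      rw [pow_mul]
      gcongr
    have h3 : 2 ^ q ≤ (ball l (A ∪ H) u (8 * q * q)).card := by exact_mod_cast h2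
    omega

lemma linked {l : V → List Pt} (hl : ∀ v, (l v).IsChain GR) (hne : ∀ v, l v ≠ []) {q : ℕ} (hq : 1000 ≤ q)
    (hn : Fintype.card V ≤ 2 ^ q) (h : ¬ SC l q) (H : Finset V)
    (hH : 4000 * q * H.card ≤ Fintype.card V) :
    ∃ Z : Finset V, 400 * Z.card ≤ Fintype.card V ∧ ∀ u v, u ∉ Z → v ∉ Z →
      ∃ P : Finset V, P.card ≤ 17 * q ^ 2 ∧ Disjoint P H ∧ Link l P u v := by
  obtain ⟨A, hA, hexp⟩ := exp2 hq h H hH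
  refine ⟨A ∪ H, ?_, ?_⟩
  · have h1 := card_union_le A H
    have : 4000 * 1000 * H.card ≤ 4000 * q * H.card := by gcongr
    omega
  · intro u v hu hv
    have bu := ball_final hq hn hA hexp hu
    have bv := ball_final hq hn hA hexp hv
    obtain ⟨w, hw⟩ : (ball l (A ∪ H) u (8 * q * q) ∩ ball l (A ∪ H) v (8 * q * q)).Nonempty := by
      rw [← card_pos]
      have h1 := card_union_add_card_inter (ball l (A ∪ H) u (8 * q * q)) (ball l (A ∪ H) v (8 * q * q))
      have h2 := card_le_univ (ball l (A ∪ H) u (8 * q * q) ∪ ball l (A ∪ H) v (8 * q * q))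
      omega
    obtain ⟨P, p1, p2, p3⟩ := ball_link hl hu _ w (mem_inter.1 hw).1
    obtain ⟨P', p1', p2', p3'⟩ := ball_link hl hv _ w (mem_inter.1 hw).2
    refine ⟨P ∪ P', ?_, ?_, ?_⟩
    · have := card_union_le P P'
      nlinarith
    · exact disjoint_union_left.2 ⟨(disjoint_union_right.1 p2).2, (disjoint_union_right.1 p2').2⟩
    · intro p hp s hs
      obtain ⟨t, ht⟩ := List.exists_mem_of_ne_nil _ (hne w)
      exact ((p3 p hp t ht).mono (link_mono l subset_union_left)).trans
        ((p3' s hs t ht).symm.mono (link_mono l subset_union_right))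
end expander

section expander2
open Finset Classical
variable {V : Type} [Fintype V]

lemma routing [Nonempty V] {l : V → List Pt} (hl : ∀ v, (l v).IsChain GR) (hne : ∀ v, l v ≠ []) {q : ℕ}
    (hq : 1000 ≤ q) (hn : Fintype.card V ≤ 2 ^ q) (h : ¬ SC l q) :
    ∃ (D : Finset (V × V)) (P : V × V → Finset V) (Z : Finset V), 400 * Z.card ≤ Fintype.card V ∧
      (∀ e ∈ D, Link l (P e) e.1 e.2) ∧
      (∀ w, (D.filter (fun e => w ∈ P e)).card ≤ 4000 * q * (17 * q ^ 2) * Fintype.card V) ∧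
      (∀ u v, u ∉ Z → v ∉ Z → (u, v) ∈ D) := by
  set N := Fintype.card V with hN
  have hN0 : 0 < N := Fintype.card_pos
  set cap := 4000 * q * (17 * q ^ 2) * N with hcap
  set F := (univ : Finset (Finset (V × V))).filter (fun D => ∃ P : V × V → Finset V,
    (∀ e ∈ D, Link l (P e) e.1 e.2 ∧ (P e).card ≤ 17 * q ^ 2) ∧
    (∀ w, (D.filter (fun e => w ∈ P e)).card ≤ cap)) with hF
  have hFne : F.Nonempty := ⟨∅, mem_filter.2 ⟨mem_univ _, fun _ => ∅, by simp, by simp⟩⟩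
  obtain ⟨D, hD, hmax⟩ := exists_max_image F card hFne
  obtain ⟨_, P, hP, hload⟩ := mem_filter.1 hD
  set H := univ.filter (fun w => (D.filter (fun e => w ∈ P e)).card = cap) with hH
  have hsum : ∑ w, (D.filter (fun e => w ∈ P e)).card = ∑ e ∈ D, (P e).card := by
    have := sum_card_bipartiteAbove_eq_sum_card_bipartiteBelow (s := (univ : Finset V)) (t := D)
      (fun w e => w ∈ P e)
    simp only [bipartiteAbove, bipartiteBelow] at this
    rw [this]
    refine sum_congr rfl fun e _ => ?_
    congr 1
    ext w; simp
  have h1 : H.card * cap ≤ 17 * q ^ 2 * N ^ 2 := by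
    calc H.card * cap = ∑ w ∈ H, (D.filter (fun e => w ∈ P e)).card := by
          rw [sum_congr rfl (fun w hw => (mem_filter.1 hw).2), sum_const, smul_eq_mul]
      _ ≤ ∑ w, (D.filter (fun e => w ∈ P e)).card :=
          sum_le_sum_of_subset (subset_univ _)
      _ = ∑ e ∈ D, (P e).card := hsum
      _ ≤ ∑ e ∈ D, 17 * q ^ 2 := sum_le_sum fun e he => (hP e he).2
      _ = D.card * (17 * q ^ 2) := by simp
      _ ≤ N ^ 2 * (17 * q ^ 2) := by
          gcongr
          have := card_le_univ D
          rwa [Fintype.card_prod, ← pow_two] at this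
      _ = _ := by ring
  have hHc : 4000 * q * H.card ≤ N := by
    have hpos : 0 < 17 * q ^ 2 * N := by positivity
    refine le_of_mul_le_mul_left (a := 17 * q ^ 2 * N) ?_ hpos
    calc _ = H.card * cap := by rw [hcap]; ring
      _ ≤ _ := h1
      _ = _ := by ring
  obtain ⟨Z, hZ, hlink⟩ := linked hl hne hq hn h H hHc
  refine ⟨D, P, Z, hZ, fun e he => (hP e he).1, hload, ?_⟩
  intro u v hu hv
  by_contra hnot
  obtain ⟨Q, hQ1, hQ2, hQ3⟩ := hlink u v hu hv
  have hin : insert (u, v) D ∈ F := by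
    refine mem_filter.2 ⟨mem_univ _, fun e => if e = (u, v) then Q else P e, ?_, ?_⟩
    · intro e he
      rcases mem_insert.1 he with rfl | he
      · simp only [if_true]; exact ⟨hQ3, hQ1⟩
      · have : e ≠ (u, v) := fun h => hnot (h ▸ he)
        simp only [this, if_false]; exact hP e he
    · intro w
      have hDf : D.filter (fun e => w ∈ (if e = (u, v) then Q else P e)) = D.filter (fun e => w ∈ P e) := by
        refine filter_congr fun e he => ?_
        have : e ≠ (u, v) := fun h => hnot (h ▸ he)
        simp only [this, if_false]
      rw [filter_insert]
      by_cases hw : w ∈ Q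
      · simp only [if_true, hw]
        have hlt : (D.filter (fun e => w ∈ P e)).card < cap := by
          refine lt_of_le_of_ne (hload w) fun he => ?_
          exact disjoint_left.1 hQ2 hw (mem_filter.2 ⟨mem_univ _, he⟩)
        refine (card_insert_le _ _).trans ?_
        rw [hDf]; omega
      · simp only [if_true, hw, if_false]
        rw [hDf]; exact hload w
  have := hmax _ hin
  rw [card_insert_of_notMem hnot] at this
  omega

lemma bad_dens [Nonempty V] (l : V → List Pt) (D : Finset (V × V)) (P : V × V → Finset V) (cap : ℕ)
    (hload : ∀ w, (D.filter (fun e => w ∈ P e)).card ≤ cap) (e : Fin 4 → Fin 5) (he : Function.Injective e) :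
    dens (fun f : Fin 5 → V => (f (e 0), f (e 1)) ∈ D ∧ (f (e 2), f (e 3)) ∈ D ∧
      ∃ w ∈ P (f (e 0), f (e 1)), ∃ w' ∈ P (f (e 2), f (e 3)), Hit (l w) (l w')) ≤
    (cnt (fun x : V × V => Hit (l x.1) (l x.2)) : ℝ) * cap ^ 2 / (Fintype.card V : ℝ) ^ 4 := by
  rw [dens_comp e he (fun g => (g 0, g 1) ∈ D ∧ (g 2, g 3) ∈ D ∧
      ∃ w ∈ P (g 0, g 1), ∃ w' ∈ P (g 2, g 3), Hit (l w) (l w'))]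
  unfold _root_.dens
  have hc : Fintype.card (Fin 4 → V) = Fintype.card V ^ 4 := by simp
  rw [hc]
  push_cast
  gcongr
  have : cnt (fun g : Fin 4 → V => (g 0, g 1) ∈ D ∧ (g 2, g 3) ∈ D ∧
      ∃ w ∈ P (g 0, g 1), ∃ w' ∈ P (g 2, g 3), Hit (l w) (l w')) ≤
      cnt (fun x : V × V => Hit (l x.1) (l x.2)) * cap ^ 2 := by
    unfold cnt
    refine (card_le_card (t := (univ.filter (fun x : V × V => Hit (l x.1) (l x.2))).biUnion
      (fun x => univ.filter (fun g : Fin 4 → V => (g 0, g 1) ∈ D.filter (fun e => x.1 ∈ P e) ∧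
        (g 2, g 3) ∈ D.filter (fun e => x.2 ∈ P e)))) ?_).trans ?_
    · intro g hg
      simp only [mem_filter, mem_univ, true_and] at hg
      obtain ⟨h1, h2, w, hw, w', hw', hh⟩ := hg
      refine mem_biUnion.2 ⟨(w, w'), mem_filter.2 ⟨mem_univ _, hh⟩, mem_filter.2 ⟨mem_univ _,
        mem_filter.2 ⟨h1, hw⟩, mem_filter.2 ⟨h2, hw'⟩⟩⟩
    · refine (card_biUnion_le_card_mul _ _ (cap ^ 2) ?_).trans ?_
      · intro x _
        refine (card_le_card_of_injOn (t := (D.filter (fun e => x.1 ∈ P e)) ×ˢ (D.filter (fun e => x.2 ∈ P e)))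
          (fun g : Fin 4 → V => ((g 0, g 1), (g 2, g 3))) ?_ ?_).trans ?_
        · intro g hg
          have := (mem_filter.1 hg).2
          exact mem_product.2 this
        · intro g _ g' _ hgg
          simp only [Prod.mk.injEq] at hgg
          ext i
          fin_cases i <;> simp [hgg]
        · rw [card_product, pow_two]
          exact Nat.mul_le_mul (hload _) (hload _)
      · apply le_of_eq
        congr!
  exact_mod_cast this

lemma exists_good {Ω : Type*} [Fintype Ω] [Nonempty Ω] {P Q : Ω → Prop} {a b : ℝ}
    (hP : _root_.dens P ≤ a) (hQ : _root_.dens Q ≤ b)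
    (hab : a + b < 1) : ∃ x, ¬ P x ∧ ¬ Q x := by
  by_contra hall
  push Not at hall
  have : (1 : ℝ) ≤ dens (fun _ : Ω => True) := by
    apply le_dens_of_cnt
    unfold cnt
    simp
  have h2 := dens_mono (P := fun _ : Ω => True) (Q := fun x => P x ∨ Q x) fun x _ => by
    by_cases h : P x
    · exact Or.inl h
    · exact Or.inr (hall x h)
  have h3 := dens_or P Q
  linarith

lemma union_disj {l : V → List Pt} {P Q : Finset V} (h : ¬ ∃ w ∈ P, ∃ w' ∈ Q, Hit (l w) (l w')) :
    Disjoint (⋃ w ∈ P, ls (l w)) (⋃ w ∈ Q, ls (l w)) := by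
  simp only [Set.disjoint_iUnion_left, Set.disjoint_iUnion_right]
  intro i hi j hj
  rw [ls_disj]
  intro hh
  exact h ⟨j, hj, i, hi, hh⟩

theorem expander_dense [Nonempty V] {l : V → List Pt} (hl : ∀ v, (l v).IsChain GR) (hne : ∀ v, l v ≠ []) {q : ℕ}
    (hq : 1000 ≤ q) (hn : Fintype.card V ≤ 2 ^ q) (h : ¬ SC l q) :
    (Fintype.card V) ^ 2 ≤ q ^ 10 * cnt (fun x : V × V => Hit (l x.1) (l x.2)) := by
  obtain ⟨D, P, Z, hZ, hlink, hload, hD⟩ := routing hl hne hq hn h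
  have hbad := bad_dens l D P _ hload
  obtain ⟨c, hc⟩ : ∃ c, c = cnt (fun x : V × V => Hit (l x.1) (l x.2)) := ⟨_, rfl⟩
  obtain ⟨N, hN⟩ : ∃ N, N = Fintype.card V := ⟨_, rfl⟩
  have hN0 : 0 < N := hN ▸ Fintype.card_pos
  have hNr : (0 : ℝ) < N := by exact_mod_cast hN0
  rw [← hc, ← hN] at hbad ⊢
  by_contra hcon
  push Not at hcon
  have hδ : (c : ℝ) * ((4000 * q * (17 * q ^ 2) * N : ℕ) : ℝ) ^ 2 / (N : ℝ) ^ 4 ≤ 1 / 200 := by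
    rw [div_le_iff₀ (by positivity)]
    push_cast
    have h1 : (q : ℝ) ^ 10 * c ≤ (N : ℝ) ^ 2 := by exact_mod_cast hcon.le
    have h2 : (1000 : ℝ) ≤ q := by exact_mod_cast hq
    have h3 : (1000 : ℝ) ^ 4 ≤ (q : ℝ) ^ 4 := by gcongr
    have h4 : (c : ℝ) * (4000 * q * (17 * q ^ 2) * N) ^ 2 * 200 ≤ (q : ℝ) ^ 10 * c * N ^ 2 := by
      have : (q : ℝ) ^ 10 * c * N ^ 2 = q ^ 4 * (q ^ 6 * c * N ^ 2) := by ring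
      rw [this]
      have h5 : (0 : ℝ) ≤ q ^ 6 * c * N ^ 2 := by positivity
      have : (c : ℝ) * (4000 * q * (17 * q ^ 2) * N) ^ 2 * 200 = 924800000000 * (q ^ 6 * c * N ^ 2) := by ring
      rw [this]
      gcongr
      norm_num at h3
      linarith
    have h6 : (q : ℝ) ^ 10 * c * N ^ 2 ≤ N ^ 2 * N ^ 2 := by gcongr
    have h7 : (N : ℝ) ^ 2 * N ^ 2 = N ^ 4 := by ring
    linarith
  have hZd : ∀ i : Fin 5, dens (fun f : Fin 5 → V => f i ∈ Z) ≤ 1 / 400 := by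
    intro i
    refine dens_update i _ fun f => ?_
    simp only [Function.update_self]
    apply dens_le_of_cnt (by norm_num)
    have h1 : cnt (fun x => x ∈ Z) = Z.card := by
      unfold cnt; congr 1; ext x; simp
    rw [h1]
    have : (400 : ℝ) * Z.card ≤ Fintype.card V := by exact_mod_cast hZ
    linarith
  let I : Finset (Fin 4 → Fin 5) := univ.filter Function.Injective
  have hI : I.card ≤ 120 := by
    have h1 : I.card = Fintype.card (Fin 4 ↪ Fin 5) := by
      rw [← Fintype.card_congr (Equiv.subtypeInjectiveEquivEmbedding (Fin 4) (Fin 5)), Fintype.card_subtype]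
    rw [h1, Fintype.card_embedding_eq]
    decide
  have hA := dens_exists (univ : Finset (Fin 5)) (fun i (f : Fin 5 → V) => f i ∈ Z)
  have hA' : dens (fun f : Fin 5 → V => ∃ i ∈ (univ : Finset (Fin 5)), f i ∈ Z) ≤ 5 * (1 / 400) := by
    refine hA.trans ((sum_le_sum fun i _ => hZd i).trans ?_)
    simp
  have hB := dens_exists I (fun e (f : Fin 5 → V) => (f (e 0), f (e 1)) ∈ D ∧ (f (e 2), f (e 3)) ∈ D ∧
      ∃ w ∈ P (f (e 0), f (e 1)), ∃ w' ∈ P (f (e 2), f (e 3)), Hit (l w) (l w'))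
  have hB' := hB.trans ((sum_le_sum fun e he => (hbad e (mem_filter.1 he).2).trans hδ))
  rw [sum_const, nsmul_eq_mul] at hB'
  have hI' : (I.card : ℝ) ≤ 120 := by exact_mod_cast hI
  obtain ⟨f, hf1, hf2⟩ := exists_good hA' hB' (by linarith)
  have hfZ : ∀ i, f i ∉ Z := fun i hi => hf1 ⟨i, mem_univ _, hi⟩
  have hfD : ∀ i j, (f i, f j) ∈ D := fun i j => hD _ _ (hfZ i) (hfZ j)
  choose p hp using fun i => List.exists_mem_of_ne_nil _ (hne (f i))
  have hcn : ∀ i j, Conn (⋃ w ∈ P (f i, f j), ls (l w)) (p i) (p j) := fun i j =>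
    hlink _ (hfD i j) _ (hp i) _ (hp j)
  have hdj : ∀ i j k m : Fin 5, Function.Injective ![i, j, k, m] →
      Disjoint (⋃ w ∈ P (f i, f j), ls (l w)) (⋃ w ∈ P (f k, f m), ls (l w)) := by
    intro i j k m hinj
    apply union_disj
    intro hh
    exact hf2 ⟨![i, j, k, m], mem_filter.2 ⟨mem_univ _, hinj⟩, hfD _ _, hfD _ _, hh⟩
  exact no_K5 (hcn 0 1) (hcn 0 2) (hcn 0 3) (hcn 0 4) (hcn 1 2) (hcn 1 3) (hcn 1 4) (hcn 2 3) (hcn 2 4)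
    (hcn 3 4) (hdj 0 1 2 3 (by decide)) (hdj 0 1 2 4 (by decide)) (hdj 0 1 3 4 (by decide))
    (hdj 0 2 1 3 (by decide)) (hdj 0 2 1 4 (by decide)) (hdj 0 2 3 4 (by decide))
    (hdj 0 3 1 2 (by decide)) (hdj 0 3 1 4 (by decide)) (hdj 0 3 2 4 (by decide))
    (hdj 0 4 1 2 (by decide)) (hdj 0 4 1 3 (by decide)) (hdj 0 4 2 3 (by decide))
    (hdj 1 2 3 4 (by decide)) (hdj 1 3 2 4 (by decide)) (hdj 1 4 2 3 (by decide))

/-- the key dichotomy -/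
theorem KL [Nonempty V] {l : V → List Pt} (hl : ∀ v, (l v).IsChain GR) (hne : ∀ v, l v ≠ []) {q : ℕ}
    (hq : 1000 ≤ q) {E : ℕ} (hE : 600000 ≤ E) (hn : Fintype.card V ≤ 2 ^ q) (hbig : q ^ E ≤ Fintype.card V) :
    SC l q ∨ WB l ((Fintype.card V : ℝ) / q ^ E) := by
  by_cases h : SC l q
  · exact Or.inl h
  · exact Or.inr (dense_biclique l hl hq hE hn hbig (expander_dense hl hne hq hn h))
end expander2

section recursion
open Finset Classical
variable {V : Type} [Fintype V]

def Cliq (l : V → List Pt) (S : Finset V) : Prop := ∀ u ∈ S, ∀ v ∈ S, u ≠ v → Hit (l u) (l v)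
def Ind (l : V → List Pt) (S : Finset V) : Prop := ∀ u ∈ S, ∀ v ∈ S, u ≠ v → ¬ Hit (l u) (l v)

lemma exists_disj {A B : Finset V} {s : ℝ} (hs : 2 ≤ s) (hA : s ≤ A.card) (hB : s ≤ B.card) :
    ∃ A' B', A' ⊆ A ∧ B' ⊆ B ∧ Disjoint A' B' ∧ s / 3 ≤ A'.card ∧ s / 3 ≤ B'.card := by
  obtain ⟨m, hm⟩ : ∃ m, m = ⌈s⌉₊ := ⟨_, rfl⟩
  have h1 : s ≤ m := hm ▸ Nat.le_ceil s
  have hmA : m ≤ A.card := by rw [hm]; exact Nat.ceil_le.2 hA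
  have hmB : m ≤ B.card := by rw [hm]; exact Nat.ceil_le.2 hB
  have hm2 : 2 ≤ m := by
    have : (2 : ℝ) ≤ m := hs.trans h1
    exact_mod_cast this
  obtain ⟨A', hA', hc⟩ := exists_subset_card_eq (s := A) (n := m / 2) (by omega)
  have h3 : (m : ℝ) ≤ 3 * (m / 2 : ℕ) := by
    have : m ≤ 3 * (m / 2) := by omega
    exact_mod_cast this
  refine ⟨A', B \ A', hA', sdiff_subset, disjoint_sdiff, ?_, ?_⟩
  · rw [hc]; linarith
  · have h4 := le_card_sdiff A' B
    have : m / 2 ≤ (B \ A').card := by omega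
    have : ((m / 2 : ℕ) : ℝ) ≤ (B \ A').card := by exact_mod_cast this
    linarith

lemma KLU {l : V → List Pt} (hl : ∀ v, (l v).IsChain GR) (hne : ∀ v, l v ≠ []) {q : ℕ}
    (hq : 1000 ≤ q) {E : ℕ} (hE : 600000 ≤ E) (U : Finset V) (hU : U.Nonempty) (hn : U.card ≤ 2 ^ q)
    (hbig : q ^ (E + 1) ≤ U.card) :
    (∃ A B : Finset V, A ⊆ U ∧ B ⊆ U ∧ A.Nonempty ∧ B.Nonempty ∧ Disjoint A B ∧
      (∀ a ∈ A, ∀ b ∈ B, ¬ Hit (l a) (l b)) ∧ q * (U \ (A ∪ B)).card ≤ A.card ∧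
      q * (U \ (A ∪ B)).card ≤ B.card) ∨
    (∃ A B : Finset V, A ⊆ U ∧ B ⊆ U ∧ Disjoint A B ∧ (∀ a ∈ A, ∀ b ∈ B, Hit (l a) (l b)) ∧
      U.card ≤ q ^ (E + 1) * A.card ∧ U.card ≤ q ^ (E + 1) * B.card) := by
  have hne' : Nonempty U := hU.to_subtype
  have hcard : Fintype.card U = U.card := Fintype.card_coe U
  have hpos : 0 < q ^ E := by positivity
  have hposr : (0 : ℝ) < (q : ℝ) ^ E := by exact_mod_cast hpos
  have hqE : q ^ E ≤ U.card := by
    refine le_trans ?_ hbig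
    exact Nat.pow_le_pow_right (by omega) (by omega)
  rcases KL (l := fun u : U => l u) (fun v => hl v) (fun v => hne v) hq hE (by rw [hcard]; exact hn)
    (by rw [hcard]; exact hqE) with h | h
  · left
    obtain ⟨A, B, h1, h2, h3, h4, h5, h6⟩ := h
    have hmap : (U \ (A.map (Function.Embedding.subtype _) ∪ B.map (Function.Embedding.subtype _))).card =
        (univ \ (A ∪ B)).card := by
      rw [← card_map (Function.Embedding.subtype (· ∈ U))]
      congr 1
      ext x
      simp only [mem_sdiff, mem_union, mem_map, Function.Embedding.coe_subtype, mem_univ, true_and]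
      constructor
      · rintro ⟨hx, hx'⟩
        refine ⟨⟨x, hx⟩, ?_, rfl⟩
        rintro (hh | hh)
        · exact hx' (Or.inl ⟨_, hh, rfl⟩)
        · exact hx' (Or.inr ⟨_, hh, rfl⟩)
      · rintro ⟨a, ha, rfl⟩
        refine ⟨a.2, ?_⟩
        rintro (⟨b, hb, hh⟩ | ⟨b, hb, hh⟩)
        · exact ha (Or.inl (Subtype.ext hh ▸ hb))
        · exact ha (Or.inr (Subtype.ext hh ▸ hb))
    refine ⟨A.map (Function.Embedding.subtype _), B.map (Function.Embedding.subtype _), ?_, ?_, h1.map, h2.map,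
      (disjoint_map _).2 h3, ?_, ?_, ?_⟩
    · intro x hx; obtain ⟨a, _, rfl⟩ := mem_map.1 hx; exact a.2
    · intro x hx; obtain ⟨a, _, rfl⟩ := mem_map.1 hx; exact a.2
    · intro a ha b hb
      obtain ⟨a, ha', rfl⟩ := mem_map.1 ha
      obtain ⟨b, hb', rfl⟩ := mem_map.1 hb
      exact h4 a ha' b hb'
    · rw [hmap, card_map]; convert h5
    · rw [hmap, card_map]; convert h6
  · right
    rw [hcard] at h
    obtain ⟨A0, B0, hA0, hB0, hAB⟩ := h
    have hqr : (1000 : ℝ) ≤ q := by exact_mod_cast hq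
    have hs : (1000 : ℝ) ≤ (U.card : ℝ) / q ^ E := by
      rw [le_div_iff₀ hposr]
      have : (q : ℝ) ^ (E + 1) ≤ U.card := by exact_mod_cast hbig
      rw [pow_succ] at this
      nlinarith
    obtain ⟨A, B, h1, h2, h3, h4, h5⟩ := exists_disj (by linarith) hA0 hB0
    have hfin : ∀ c : ℕ, (U.card : ℝ) / q ^ E / 3 ≤ c → U.card ≤ q ^ (E + 1) * c := by
      intro c hc
      rw [div_div, div_le_iff₀ (by positivity)] at hc
      have : (c : ℝ) * (q ^ E * 3) ≤ q ^ (E + 1) * c := by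
        rw [pow_succ]
        have : (0 : ℝ) ≤ c * q ^ E := by positivity
        nlinarith
      have := hc.trans this
      exact_mod_cast this
    refine ⟨A.map (Function.Embedding.subtype _), B.map (Function.Embedding.subtype _), ?_, ?_,
      (disjoint_map _).2 h3, ?_, ?_, ?_⟩
    · intro x hx; obtain ⟨a, _, rfl⟩ := mem_map.1 hx; exact a.2
    · intro x hx; obtain ⟨a, _, rfl⟩ := mem_map.1 hx; exact a.2
    · intro a ha b hb
      obtain ⟨a, ha', rfl⟩ := mem_map.1 ha
      obtain ⟨b, hb', rfl⟩ := mem_map.1 hb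
      exact hAB a (h1 ha') b (h2 hb')
    · rw [card_map]; exact hfin _ h4
    · rw [card_map]; exact hfin _ h5

lemma phi_ineq {q a b s u : ℝ} (hq : 0 < q) (ha : 1 ≤ a) (hb : 1 ≤ b) (hs : 0 ≤ s) (hu : u = a + b + s)
    (h1 : q * s ≤ a) (h2 : q * s ≤ b) :
    u * (1 - Real.logb 2 u / q) ≤ a * (1 - Real.logb 2 a / q) + b * (1 - Real.logb 2 b / q) := by
  wlog hab : a ≤ b generalizing a b
  · have := this hb ha (by linarith) h2 h1 (by linarith)
    linarith
  have hla : Real.logb 2 a ≤ Real.logb 2 u - 1 := by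
    have : Real.logb 2 (2 * a) ≤ Real.logb 2 u := Real.logb_le_logb_of_le (by norm_num) (by linarith) (by linarith)
    rw [Real.logb_mul (by norm_num) (by linarith), Real.logb_self_eq_one (by norm_num)] at this
    linarith
  have hlb : Real.logb 2 b ≤ Real.logb 2 u := Real.logb_le_logb_of_le (by norm_num) (by linarith) (by linarith)
  have hlu : 0 ≤ Real.logb 2 u := Real.logb_nonneg (by norm_num) (by linarith)
  obtain ⟨L, hL⟩ : ∃ L, L = Real.logb 2 u := ⟨_, rfl⟩
  rw [← hL] at hla hlb hlu ⊢
  have e1 : a * (1 - L / q) + a / q ≤ a * (1 - Real.logb 2 a / q) := by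
    have : Real.logb 2 a / q ≤ (L - 1) / q := by gcongr
    have h3 : (L - 1) / q = L / q - 1 / q := by ring
    have h4 : a * (Real.logb 2 a / q) ≤ a * (L / q - 1 / q) := by gcongr; linarith
    have h5 : a * (1 / q) = a / q := by ring
    nlinarith
  have e2 : b * (1 - L / q) ≤ b * (1 - Real.logb 2 b / q) := by gcongr
  have e3 : s * (1 - L / q) ≤ a / q := by
    have h3 : s ≤ a / q := by rw [le_div_iff₀ hq]; linarith
    have h4 : 0 ≤ L / q := by positivity
    nlinarith
  rw [hu]
  nlinarith

lemma alpha {l : V → List Pt} (hl : ∀ v, (l v).IsChain GR) (hne : ∀ v, l v ≠ []) {q : ℕ}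
    (hq : 1000 ≤ q) {E : ℕ} (hE : 600000 ≤ E) (k : ℕ) : ∀ (U : Finset V) (_ : U.card ^ 2 ≤ 2 ^ q)
    (_ : ∀ S ⊆ U, Cliq l S → S.card ≠ 2 ^ k), ∃ I ⊆ U, Ind l I ∧ U.card ≤ (2 * q ^ (E + 1)) ^ k * I.card := by
  obtain ⟨M, hM⟩ : ∃ M, M = q ^ (E + 1) := ⟨_, rfl⟩
  have hM0 : 0 < M := by rw [hM]; positivity
  have hqr : (0 : ℝ) < q := by
    have : (1000 : ℝ) ≤ q := by exact_mod_cast hq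
    linarith
  rw [← hM]
  induction k with
  | zero =>
    intro U _ hcl
    have hU : U = ∅ := by
      rw [eq_empty_iff_forall_notMem]
      intro x hx
      refine hcl {x} (by simpa using hx) ?_ (by simp)
      intro u hu v hv huv
      rw [mem_singleton] at hu hv
      exact absurd (hu.trans hv.symm) huv
    refine ⟨∅, by simp, by intro u hu; simp at hu, by simp [hU]⟩
  | succ k ih =>
    intro U hU hcl
    obtain ⟨M', hM'⟩ : ∃ M', M' = (2 * M) ^ k := ⟨_, rfl⟩
    have hM'0 : 0 < M' := by rw [hM']; positivity
    rw [← hM'] at ih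
    have main : ∀ m, ∀ W : Finset V, W.card = m → W ⊆ U → ∃ I ⊆ W, Ind l I ∧
        (W.card : ℝ) * (1 - Real.logb 2 W.card / q) ≤ (M * M' : ℕ) * I.card := by
      intro m
      induction m using Nat.strong_induction_on with
      | _ m ihm =>
        intro W hWm hWU
        rcases W.eq_empty_or_nonempty with rfl | hWne
        · exact ⟨∅, by simp, by intro u hu; simp at hu, by simp⟩
        have hW1 : 1 ≤ W.card := card_pos.2 hWne
        have hW1r : (1 : ℝ) ≤ W.card := by exact_mod_cast hW1
        have hphi : (W.card : ℝ) * (1 - Real.logb 2 W.card / q) ≤ W.card := by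
          have : 0 ≤ Real.logb 2 (W.card : ℝ) := Real.logb_nonneg (by norm_num) hW1r
          have : 0 ≤ Real.logb 2 (W.card : ℝ) / q := by positivity
          nlinarith
        have hWU2 : W.card ^ 2 ≤ 2 ^ q := (Nat.pow_le_pow_left (card_le_card hWU) 2).trans hU
        have hWq : W.card ≤ 2 ^ q := by nlinarith
        by_cases hsmall : q ^ (E + 1) ≤ W.card
        · rcases KLU hl hne hq hE W hWne hWq hsmall with ⟨A, B, hA, hB, hAn, hBn, hd, hno, h1, h2⟩ |
            ⟨A, B, hA, hB, hd, hall, h1, h2⟩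
          · have hAB : A ∪ B ⊆ W := union_subset hA hB
            have hc : (W \ (A ∪ B)).card + (A.card + B.card) = W.card := by
              rw [← card_union_of_disjoint hd]; exact card_sdiff_add_card_eq_card hAB
            have hA1 : 1 ≤ A.card := card_pos.2 hAn
            have hB1 : 1 ≤ B.card := card_pos.2 hBn
            obtain ⟨I, hI, hI2, hI3⟩ := ihm A.card (by omega) A rfl (hA.trans hWU)
            obtain ⟨J, hJ, hJ2, hJ3⟩ := ihm B.card (by omega) B rfl (hB.trans hWU)
            refine ⟨I ∪ J, union_subset (hI.trans hA) (hJ.trans hB), ?_, ?_⟩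
            · intro u hu v hv huv
              rcases mem_union.1 hu with hu | hu <;> rcases mem_union.1 hv with hv | hv
              · exact hI2 u hu v hv huv
              · exact hno u (hI hu) v (hJ hv)
              · exact fun hh => hno v (hI hv) u (hJ hu) hh.symm
              · exact hJ2 u hu v hv huv
            · rw [card_union_of_disjoint (disjoint_of_subset_left hI (disjoint_of_subset_right hJ hd))]
              have := phi_ineq (q := q) (a := A.card) (b := B.card) (s := (W \ (A ∪ B)).card) (u := W.card)
                hqr (by exact_mod_cast hA1) (by exact_mod_cast hB1) (by positivity)
                (by rw [← hc]; push_cast; ring) (by exact_mod_cast h1) (by exact_mod_cast h2)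
              rw [Nat.cast_add, mul_add]
              linarith
          · have hone : (∀ S ⊆ A, Cliq l S → S.card ≠ 2 ^ k) ∨ (∀ S ⊆ B, Cliq l S → S.card ≠ 2 ^ k) := by
              by_contra hcon
              push Not at hcon
              obtain ⟨⟨S, hS, hS2, hS3⟩, ⟨T, hT, hT2, hT3⟩⟩ := hcon
              refine hcl (S ∪ T) (union_subset (hS.trans (hA.trans hWU)) (hT.trans (hB.trans hWU))) ?_ ?_
              · intro u hu v hv huv
                rcases mem_union.1 hu with hu | hu <;> rcases mem_union.1 hv with hv | hv
                · exact hS2 u hu v hv huv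
                · exact hall u (hS hu) v (hT hv)
                · exact (hall v (hS hv) u (hT hu)).symm
                · exact hT2 u hu v hv huv
              · rw [card_union_of_disjoint (disjoint_of_subset_left hS (disjoint_of_subset_right hT hd)),
                  hS3, hT3]; ring
            have fin : ∀ A ⊆ W, W.card ≤ q ^ (E + 1) * A.card → (∀ S ⊆ A, Cliq l S → S.card ≠ 2 ^ k) →
                ∃ I ⊆ W, Ind l I ∧
        (W.card : ℝ) * (1 - Real.logb 2 W.card / q) ≤ (M * M' : ℕ) * I.card := by
              intro A hA h1 hA2
              obtain ⟨I, hI, hI2, hI3⟩ := ih A ((Nat.pow_le_pow_left (card_le_card hA) 2).trans hWU2) hA2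
              refine ⟨I, hI.trans hA, hI2, hphi.trans ?_⟩
              rw [← hM] at h1
              have : W.card ≤ M * M' * I.card := by
                rw [mul_assoc]; exact h1.trans (Nat.mul_le_mul_left _ hI3)
              exact_mod_cast this
            rcases hone with h | h
            · exact fin A hA h1 h
            · exact fin B hB h2 h
        · obtain ⟨x, hx⟩ := hWne
          refine ⟨{x}, by simpa using hx, ?_, hphi.trans ?_⟩
          · intro u hu v hv huv
            rw [mem_singleton] at hu hv
            exact absurd (hu.trans hv.symm) huv
          · rw [← hM] at hsmall
            have : W.card ≤ M * M' := by nlinarith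
            simp only [card_singleton, Nat.cast_one, mul_one]
            exact_mod_cast this
    obtain ⟨I, hI, hI2, hI3⟩ := main _ U rfl subset_rfl
    refine ⟨I, hI, hI2, ?_⟩
    rcases U.eq_empty_or_nonempty with rfl | hUne
    · simp
    have hU1 : (1 : ℝ) ≤ U.card := by exact_mod_cast card_pos.2 hUne
    have hlog : Real.logb 2 U.card / q ≤ 1 / 2 := by
      rw [div_le_iff₀ hqr]
      have h1 : Real.logb 2 ((U.card : ℝ) ^ 2) ≤ Real.logb 2 ((2 : ℝ) ^ q) :=
        Real.logb_le_logb_of_le (by norm_num) (by positivity) (by exact_mod_cast hU)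
      rw [Real.logb_pow, Real.logb_pow, Real.logb_self_eq_one (by norm_num)] at h1
      push_cast at h1
      linarith
    have : (U.card : ℝ) ≤ 2 * ((M * M' : ℕ) * I.card) := by nlinarith
    have h2 : U.card ≤ 2 * (M * M' * I.card) := by exact_mod_cast this
    calc U.card ≤ 2 * (M * M' * I.card) := h2
      _ = _ := by rw [pow_succ, hM']; ring

lemma greedy {l : V → List Pt} {K : ℕ} (hK : 0 < K)
    (h : ∀ U : Finset V, ∃ I ⊆ U, Ind l I ∧ U.card ≤ K * I.card) :
    ∀ (m : ℕ) (U : Finset V), U.card = m → U.Nonempty → ∃ (c : ℕ) (f : V → ℕ), (∀ v ∈ U, f v < c) ∧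
      (∀ u ∈ U, ∀ v ∈ U, u ≠ v → Hit (l u) (l v) → f u ≠ f v) ∧ (c : ℝ) ≤ 1 + K * Real.log U.card := by
  intro m
  induction m using Nat.strong_induction_on with
  | _ m ih =>
    intro U hUm hU
    obtain ⟨I, hI, hI2, hI3⟩ := h U
    have hU1 : 1 ≤ U.card := card_pos.2 hU
    have hU1r : (1 : ℝ) ≤ U.card := by exact_mod_cast hU1
    have hKr : (0 : ℝ) < K := by exact_mod_cast hK
    have hIc : 0 < I.card := by
      by_contra h0
      have : I.card = 0 := by omega
      rw [this] at hI3; omega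
    have hc : (U \ I).card + I.card = U.card := card_sdiff_add_card_eq_card hI
    rcases (U \ I).eq_empty_or_nonempty with he | hn
    · refine ⟨1, fun _ => 0, by simp, ?_, ?_⟩
      · intro u hu v hv huv hh
        have : U ⊆ I := sdiff_eq_empty_iff_subset.1 he
        exact absurd hh (hI2 u (this hu) v (this hv) huv)
      · have := Real.log_nonneg hU1r
        have : 0 ≤ (K : ℝ) * Real.log U.card := by positivity
        push_cast
        linarith
    · obtain ⟨c, f, hf1, hf2, hf3⟩ := ih (U \ I).card (by omega) (U \ I) rfl hn
      refine ⟨c + 1, fun v => if v ∈ I then c else f v, ?_, ?_, ?_⟩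
      · intro v hv
        by_cases hvI : v ∈ I
        · simp [hvI]
        · simp only [hvI, if_false]
          have := hf1 v (mem_sdiff.2 ⟨hv, hvI⟩)
          omega
      · intro u hu v hv huv hh
        by_cases huI : u ∈ I <;> by_cases hvI : v ∈ I <;> simp only [huI, hvI, if_true, if_false]
        · exact absurd hh (hI2 u huI v hvI huv)
        · have := hf1 v (mem_sdiff.2 ⟨hv, hvI⟩)
          omega
        · have := hf1 u (mem_sdiff.2 ⟨hu, huI⟩)
          omega
        · exact hf2 u (mem_sdiff.2 ⟨hu, huI⟩) v (mem_sdiff.2 ⟨hv, hvI⟩) huv hh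
      · have hx : (1 : ℝ) ≤ (U \ I).card := by exact_mod_cast card_pos.2 hn
        have hcr : ((U \ I).card : ℝ) + I.card = U.card := by exact_mod_cast hc
        have hI3r : (U.card : ℝ) ≤ K * I.card := by exact_mod_cast hI3
        have hlog : Real.log (U \ I).card ≤ Real.log U.card - 1 / K := by
          have h1 := Real.log_le_sub_one_of_pos (x := ((U \ I).card : ℝ) / U.card) (by positivity)
          rw [Real.log_div (by positivity) (by positivity)] at h1
          have h2 : ((U \ I).card : ℝ) / U.card ≤ 1 - 1 / K := by
            rw [div_le_iff₀ (by positivity)]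
            have : 1 / (K : ℝ) * U.card ≤ I.card := by
              rw [one_div, inv_mul_le_iff₀ hKr]; exact hI3r
            linarith
          linarith
        have h3 : (K : ℝ) * Real.log (U \ I).card ≤ K * Real.log U.card - 1 := by
          have : (K : ℝ) * (Real.log U.card - 1 / K) = K * Real.log U.card - 1 := by field_simp
          rw [← this]
          gcongr
        push_cast
        linarith

end recursion

section discretize
open Finset Classical

lemma conn_list {S : Set Pt} {a b : Pt} (h : Conn S a b) : ∀ M : List Pt, (b :: M).IsChain GR →
    (∀ x ∈ b :: M, x ∈ S) → ∃ M' : List Pt, (a :: M').IsChain GR ∧ (∀ x ∈ a :: M', x ∈ S) ∧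
      ∀ x ∈ b :: M, x ∈ a :: M' := by
  induction h with
  | refl a ha => intro M h1 h2; exact ⟨M, h1, h2, fun _ h => h⟩
  | step a b c ha hab h ih =>
    intro M h1 h2
    obtain ⟨M', h3, h4, h5⟩ := ih M h1 h2
    refine ⟨b :: M', List.isChain_cons_cons.2 ⟨hab, h3⟩, ?_, ?_⟩
    · intro x hx
      rcases List.mem_cons.1 hx with rfl | hx
      · exact ha
      · exact h4 x hx
    · intro x hx
      exact List.mem_cons_of_mem _ (h5 x hx)

lemma cover_list {S : Set Pt} {a : Pt} (ha : a ∈ S) (T : Finset Pt) (h : ∀ t ∈ T, Conn S a t) :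
    ∃ M : List Pt, (a :: M).IsChain GR ∧ (∀ x ∈ a :: M, x ∈ S) ∧ ∀ t ∈ T, t ∈ a :: M := by
  induction T using Finset.induction_on with
  | empty => exact ⟨[], by simp, by simpa using ha, by simp⟩
  | insert t T _ ih =>
    obtain ⟨M, h1, h2, h3⟩ := ih fun t ht => h t (mem_insert_of_mem ht)
    have hc := h t (mem_insert_self _ _)
    obtain ⟨M1, g1, g2, g3⟩ := conn_list hc.symm M h1 h2
    obtain ⟨M2, k1, k2, k3⟩ := conn_list hc M1 g1 g2
    refine ⟨M2, k1, k2, ?_⟩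
    intro x hx
    rcases mem_insert.1 hx with rfl | hx
    · exact k3 _ List.mem_cons_self
    · exact k3 _ (g3 _ (h3 x hx))

noncomputable def cell (s : ℝ) (p : ℝ × ℝ) : Pt := (⌊p.1 / s⌋, ⌊p.2 / s⌋)

def near (s : ℝ) (c : Set (ℝ × ℝ)) : Set Pt :=
  {a | ∃ x ∈ c, |a.1 * s - x.1| ≤ 2 * s ∧ |a.2 * s - x.2| ≤ 2 * s}

lemma floor_near {s : ℝ} (hs : 0 < s) (x : ℝ) : |(⌊x / s⌋ : ℝ) * s - x| ≤ s := by
  have h1 := Int.floor_le (x / s)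
  have h2 := Int.lt_floor_add_one (x / s)
  rw [le_div_iff₀ hs] at h1
  rw [div_lt_iff₀ hs] at h2
  rw [abs_le]; constructor <;> linarith

lemma floor_step {s : ℝ} (hs : 0 < s) {x y : ℝ} (h : |x - y| < s) :
    ⌊x / s⌋ = ⌊y / s⌋ ∨ ⌊x / s⌋ = ⌊y / s⌋ + 1 ∨ ⌊y / s⌋ = ⌊x / s⌋ + 1 := by
  rw [abs_lt] at h
  have h1 := Int.floor_le (x / s)
  have h2 := Int.lt_floor_add_one (x / s)
  have h3 := Int.floor_le (y / s)
  have h4 := Int.lt_floor_add_one (y / s)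
  have h5 : x / s < y / s + 1 := by
    rw [div_add_one hs.ne']; gcongr; linarith
  have h6 : y / s < x / s + 1 := by
    rw [div_add_one hs.ne']; gcongr; linarith
  have a1 : (⌊x / s⌋ : ℝ) < ⌊y / s⌋ + 2 := by linarith
  have a2 : (⌊y / s⌋ : ℝ) < ⌊x / s⌋ + 2 := by linarith
  have b1 : ⌊x / s⌋ < ⌊y / s⌋ + 2 := by exact_mod_cast a1
  have b2 : ⌊y / s⌋ < ⌊x / s⌋ + 2 := by exact_mod_cast a2
  omega

lemma cell_mem {s : ℝ} (hs : 0 < s) {c : Set (ℝ × ℝ)} {x : ℝ × ℝ} (hx : x ∈ c) : cell s x ∈ near s c := by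
  refine ⟨x, hx, ?_, ?_⟩
  · have := floor_near hs x.1
    simp only [cell]; linarith
  · have := floor_near hs x.2
    simp only [cell]; linarith

lemma cell_step {s : ℝ} (hs : 0 < s) {c : Set (ℝ × ℝ)} {x y : ℝ × ℝ} (hx : x ∈ c) (hy : y ∈ c)
    (h : dist x y < s) : Conn (near s c) (cell s x) (cell s y) := by
  have h1 : |x.1 - y.1| < s := lt_of_le_of_lt (by rw [← Real.dist_eq]; exact le_max_left _ _) h
  have h2 : |x.2 - y.2| < s := lt_of_le_of_lt (by rw [← Real.dist_eq]; exact le_max_right _ _) h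
  have e1 := floor_step hs h1
  have e2 := floor_step hs h2
  have hm : ((⌊y.1 / s⌋, ⌊x.2 / s⌋) : Pt) ∈ near s c := by
    refine ⟨x, hx, ?_, ?_⟩
    · have := floor_near hs y.1
      rw [abs_lt] at h1
      rw [abs_le] at this ⊢
      constructor <;> simp only <;> linarith
    · have := floor_near hs x.2
      simp only; linarith
  refine Conn.step _ (⌊y.1 / s⌋, ⌊x.2 / s⌋) _ (cell_mem hs hx) ?_ (Conn.of_adj hm (cell_mem hs hy) ?_)
  · unfold GR cell; simp only; tauto
  · unfold GR cell; simp only; tauto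

lemma curve_conn {s : ℝ} (hs : 0 < s) {f : ℝ → ℝ × ℝ} (hf : ContinuousOn f (Set.Icc 0 1)) :
    ∀ τ ∈ Set.Icc (0 : ℝ) 1, Conn (near s (f '' Set.Icc 0 1)) (cell s (f 0)) (cell s (f τ)) := by
  have huc := isCompact_Icc.uniformContinuousOn_of_continuous hf
  rw [Metric.uniformContinuousOn_iff] at huc
  obtain ⟨δ, hδ, hd⟩ := huc s hs
  have h0 : (0 : ℝ) ∈ Set.Icc (0 : ℝ) 1 := by simp
  have key : ∀ m : ℕ, ∀ τ ∈ Set.Icc (0 : ℝ) 1, τ ≤ m * (δ / 2) →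
      Conn (near s (f '' Set.Icc 0 1)) (cell s (f 0)) (cell s (f τ)) := by
    intro m
    induction m with
    | zero =>
      intro τ hτ h
      have : τ = 0 := le_antisymm (by simpa using h) hτ.1
      rw [this]
      exact Conn.refl _ (cell_mem hs ⟨0, h0, rfl⟩)
    | succ m ih =>
      intro τ hτ h
      push_cast at h
      have hτ' : max (τ - δ / 2) 0 ∈ Set.Icc (0 : ℝ) 1 :=
        ⟨le_max_right _ _, max_le (by linarith [hτ.2]) (by norm_num)⟩
      refine (ih _ hτ' (max_le (by linarith) (by positivity))).trans ?_
      refine cell_step hs ⟨_, hτ', rfl⟩ ⟨_, hτ, rfl⟩ (hd _ hτ' _ hτ ?_)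
      rw [Real.dist_eq, abs_lt]
      constructor
      · linarith [le_max_left (τ - δ / 2) 0]
      · have : max (τ - δ / 2) 0 ≤ τ := max_le (by linarith) hτ.1
        linarith
  intro τ hτ
  obtain ⟨m, hm⟩ := exists_nat_ge (1 / (δ / 2))
  refine key m τ hτ (hτ.2.trans ?_)
  rwa [div_le_iff₀ (by positivity)] at hm

variable {V : Type} [Fintype V]

lemma sep_dist (γ : V → Set (ℝ × ℝ)) (hγ : ∀ v, IsCurve (γ v)) : ∃ d : ℝ, 0 < d ∧ ∀ u v,
    Disjoint (γ u) (γ v) → ∀ x ∈ γ u, ∀ y ∈ γ v, d ≤ dist x y := by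
  have hcomp : ∀ v, IsCompact (γ v) := by
    intro v
    obtain ⟨f, hf, hc⟩ := hγ v
    rw [hc]
    exact isCompact_Icc.image_of_continuousOn hf
  have h1 : ∀ e : V × V, ∃ d : ℝ, 0 < d ∧ (Disjoint (γ e.1) (γ e.2) → ∀ x ∈ γ e.1, ∀ y ∈ γ e.2, d ≤ dist x y) := by
    intro e
    by_cases h : Disjoint (γ e.1) (γ e.2)
    · obtain ⟨δ, hδ, hdd⟩ := h.exists_thickenings (hcomp _) (hcomp e.2).isClosed
      refine ⟨δ, hδ, fun _ x hx y hy => ?_⟩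
      by_contra hcon
      push Not at hcon
      refine Set.disjoint_left.1 hdd (Metric.mem_thickening_iff.2 ⟨x, hx, ?_⟩)
        (Metric.self_subset_thickening hδ _ hy)
      rwa [dist_comm]
    · exact ⟨1, one_pos, fun h' => absurd h' h⟩
  choose d hd1 hd2 using h1
  rcases isEmpty_or_nonempty V with hE | hE
  · exact ⟨1, one_pos, fun u => (hE.false u).elim⟩
  · obtain ⟨e, _, he⟩ := exists_min_image (univ : Finset (V × V)) d univ_nonempty
    exact ⟨d e, hd1 e, fun u v huv x hx y hy => (he (u, v) (mem_univ _)).trans (hd2 (u, v) huv x hx y hy)⟩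

lemma discretize (γ : V → Set (ℝ × ℝ)) (hγ : ∀ v, IsCurve (γ v)) : ∃ l : V → List Pt,
    (∀ v, (l v).IsChain GR) ∧ (∀ v, l v ≠ []) ∧ ∀ u v, Hit (l u) (l v) ↔ (γ u ∩ γ v).Nonempty := by
  obtain ⟨d, hd, hsep⟩ := sep_dist γ hγ
  obtain ⟨s, hs⟩ : ∃ s, s = d / 10 := ⟨_, rfl⟩
  have hs0 : 0 < s := by rw [hs]; positivity
  have hz : ∀ u v, ∃ z, (γ u ∩ γ v).Nonempty → z ∈ γ u ∩ γ v := by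
    intro u v
    by_cases h : (γ u ∩ γ v).Nonempty
    · exact ⟨h.some, fun _ => h.some_mem⟩
    · exact ⟨0, fun h' => absurd h' h⟩
  choose z hz using hz
  have hL : ∀ v, ∃ L : List Pt, L.IsChain GR ∧ L ≠ [] ∧ (∀ x ∈ L, x ∈ near s (γ v)) ∧
      (∀ u, z u v ∈ γ v → cell s (z u v) ∈ L) ∧ (∀ u, z v u ∈ γ v → cell s (z v u) ∈ L) := by
    intro v
    obtain ⟨f, hf, hc⟩ := hγ v
    have hconn := curve_conn hs0 hf
    rw [← hc] at hconn
    obtain ⟨M, h1, h2, h3⟩ := cover_list (hconn 0 (by simp)).mem_left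
      (((univ.image (fun u => z u v) ∪ univ.image (fun u => z v u)).filter (fun p => p ∈ γ v)).image (cell s))
      (by
        intro t ht
        obtain ⟨p, hp, rfl⟩ := mem_image.1 ht
        have hp2 := (mem_filter.1 hp).2
        rw [hc] at hp2
        obtain ⟨τ, hτ, rfl⟩ := hp2
        exact hconn τ hτ)
    refine ⟨_, h1, by simp, h2, ?_, ?_⟩
    · intro u hu
      exact h3 _ (mem_image_of_mem _ (mem_filter.2 ⟨mem_union_left _ (mem_image.2 ⟨u, mem_univ _, rfl⟩), hu⟩))
    · intro u hu
      exact h3 _ (mem_image_of_mem _ (mem_filter.2 ⟨mem_union_right _ (mem_image.2 ⟨u, mem_univ _, rfl⟩), hu⟩))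
  choose l h1 h2 h3 h4 h5 using hL
  refine ⟨l, h1, h2, fun u v => ⟨?_, ?_⟩⟩
  · rintro ⟨p, hpu, hpv⟩
    by_contra hcon
    have hdis : Disjoint (γ u) (γ v) := Set.disjoint_iff_inter_eq_empty.2 (Set.not_nonempty_iff_eq_empty.1 hcon)
    obtain ⟨x, hx, hx1, hx2⟩ := h3 u p hpu
    obtain ⟨y, hy, hy1, hy2⟩ := h3 v p hpv
    have hxy := hsep u v hdis x hx y hy
    have : dist x y ≤ 4 * s := by
      rw [Prod.dist_eq, Real.dist_eq, Real.dist_eq]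
      rw [abs_le] at hx1 hx2 hy1 hy2
      apply max_le <;> rw [abs_le] <;> constructor <;> linarith
    rw [hs] at this
    linarith
  · intro h
    have := hz u v h
    exact ⟨cell s (z u v), h5 u v this.1, h4 v u this.2⟩
end discretize

lemma final_num {lam L : ℝ} (hlam : 3 / 2 ≤ lam) {q E k c : ℕ} (hq : (q : ℝ) ≤ 1001 * lam) (hk : 1 ≤ k)
    (hc : (c : ℝ) ≤ 1 + ((2 * q ^ (E + 1)) ^ k : ℕ) * L) (hL : L ≤ lam) (hq1 : 1 ≤ q) :
    (c : ℝ) ≤ lam ^ ((19 * (E + 1) + 5) * k) := by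
  have h1 : (1 : ℝ) ≤ lam := by linarith
  have h18 : (1001 : ℝ) ≤ lam ^ 18 := by
    calc (1001 : ℝ) ≤ (3 / 2) ^ 18 := by norm_num
      _ ≤ lam ^ 18 := by gcongr
  have hq' : (q : ℝ) ≤ lam ^ 19 := by
    refine hq.trans ?_
    rw [pow_succ]
    gcongr
  have h2 : (2 : ℝ) ≤ lam ^ 2 := by nlinarith
  have hM : ((2 * q ^ (E + 1) : ℕ) : ℝ) ≤ lam ^ (19 * (E + 1) + 2) := by
    push_cast
    calc (2 : ℝ) * q ^ (E + 1) ≤ lam ^ 2 * (lam ^ 19) ^ (E + 1) := by gcongr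
      _ = _ := by rw [← pow_mul, ← pow_add]; congr 1; omega
  have hM1 : (1 : ℝ) ≤ ((2 * q ^ (E + 1) : ℕ) : ℝ) := by
    have : 1 ≤ 2 * q ^ (E + 1) := by
      have : 0 < q ^ (E + 1) := by positivity
      omega
    exact_mod_cast this
  obtain ⟨M, hMd⟩ : ∃ M : ℝ, M = ((2 * q ^ (E + 1) : ℕ) : ℝ) := ⟨_, rfl⟩
  have e : (((2 * q ^ (E + 1)) ^ k : ℕ) : ℝ) = M ^ k := by rw [hMd, Nat.cast_pow]
  rw [e] at hc
  rw [← hMd] at hM hM1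
  have hMk : (1 : ℝ) ≤ M ^ k := one_le_pow₀ hM1
  have h3 : (c : ℝ) ≤ 2 * (M ^ k * lam) := by
    have : M ^ k * L ≤ M ^ k * lam := by gcongr
    have : 1 ≤ M ^ k * lam := by nlinarith
    linarith
  calc (c : ℝ) ≤ 2 * (M ^ k * lam) := h3
    _ ≤ lam ^ 2 * ((lam ^ (19 * (E + 1) + 2)) ^ k * lam) := by gcongr
    _ = lam ^ ((19 * (E + 1) + 2) * k + 3) := by rw [← pow_mul]; ring
    _ ≤ lam ^ ((19 * (E + 1) + 5) * k) := by
        apply pow_le_pow_right₀ h1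
        have : (19 * (E + 1) + 5) * k = (19 * (E + 1) + 2) * k + 3 * k := by ring
        omega

/-- There is an absolute constant `C > 0` such that for every integer `t ≥ 2`, every
`K_t`-free string graph on `n > 2` vertices has chromatic number at most
`(log₂ n)^(C·log₂ t)`. -/
theorem string_graph_chromatic_number :
    ∃ C : ℝ, 0 < C ∧
      ∀ (t : ℕ), 2 ≤ t →
        ∀ (V : Type) [Fintype V] (G : SimpleGraph V),
          IsStringGraph G → G.CliqueFree t → 2 < Fintype.card V →
          ∃ k : ℕ, G.Colorable k ∧
            (k : ℝ) ≤ (Real.logb 2 (Fintype.card V)) ^ (C * Real.logb 2 t) := by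
  obtain ⟨E, hE⟩ : ∃ E : ℕ, 600000 ≤ E := ⟨600000, le_rfl⟩
  refine ⟨2 * (19 * (E + 1) + 5 : ℕ), by positivity, ?_⟩
  intro t ht V _ G hG hfree hn
  obtain ⟨γ, hγ, hadj⟩ := hG
  obtain ⟨l, hl, hne, hhit⟩ := discretize γ hγ
  obtain ⟨n, hnd⟩ : ∃ n, n = Fintype.card V := ⟨_, rfl⟩
  rw [← hnd] at hn ⊢
  have hnr : (3 : ℝ) ≤ n := by exact_mod_cast hn
  obtain ⟨lam, hlam⟩ : ∃ lam, lam = Real.logb 2 n := ⟨_, rfl⟩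
  have hl32 : 3 / 2 ≤ lam := by
    rw [hlam, Real.le_logb_iff_rpow_le (by norm_num) (by linarith)]
    refine le_trans ?_ hnr
    have h1 : ((2 : ℝ) ^ (3 / 2 : ℝ)) ^ 2 = 8 := by
      rw [← Real.rpow_natCast, ← Real.rpow_mul (by norm_num)]
      norm_num
    have h2 : (0 : ℝ) ≤ (2 : ℝ) ^ (3 / 2 : ℝ) := by positivity
    nlinarith
  obtain ⟨q, hq⟩ : ∃ q, q = ⌈1000 * lam⌉₊ := ⟨_, rfl⟩
  have hq1 : 1000 * lam ≤ q := hq ▸ Nat.le_ceil _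
  have hq2 : (q : ℝ) ≤ 1001 * lam := by
    have := Nat.ceil_lt_add_one (a := 1000 * lam) (by linarith)
    rw [← hq] at this
    linarith
  have hq1000 : 1000 ≤ q := by
    have : (1000 : ℝ) ≤ q := by linarith
    exact_mod_cast this
  have hn2 : n ^ 2 ≤ 2 ^ q := by
    have h1 : (n : ℝ) ^ 2 ≤ 2 ^ q := by
      have h2 : (n : ℝ) = 2 ^ lam := by
        rw [hlam, Real.rpow_logb (by norm_num) (by norm_num) (by linarith)]
      rw [h2, ← Real.rpow_natCast, ← Real.rpow_natCast, ← Real.rpow_mul (by norm_num)]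
      apply Real.rpow_le_rpow_of_exponent_le (by norm_num)
      push_cast
      linarith
    exact_mod_cast h1
  obtain ⟨k, hk⟩ : ∃ k, k = Nat.clog 2 t := ⟨_, rfl⟩
  have htk : t ≤ 2 ^ k := hk ▸ Nat.le_pow_clog (by norm_num) t
  have hk1 : 1 ≤ k := by
    rcases Nat.eq_zero_or_pos k with h | h
    · rw [h] at htk; omega
    · exact h
  have hcl : ∀ S : Finset V, Cliq l S → S.card ≠ 2 ^ k := by
    intro S hS hc
    obtain ⟨T, hT, hTc⟩ := Finset.exists_subset_card_eq (s := S) (n := t) (by omega)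
    refine hfree T ⟨?_, hTc⟩
    intro u hu v hv huv
    exact (hadj u v huv).2 ((hhit u v).1 (hS u (hT hu) v (hT hv) huv))
  have hal := fun U : Finset V => alpha hl hne hq1000 hE k U
    ((Nat.pow_le_pow_left (by rw [hnd]; exact Finset.card_le_univ U) 2).trans hn2) (fun S _ => hcl S)
  have hK : 0 < (2 * q ^ (E + 1)) ^ k := by positivity
  have hVne : (Finset.univ : Finset V).Nonempty := by
    rw [← Finset.card_pos, Finset.card_univ]; omega
  obtain ⟨c, f, hf1, hf2, hf3⟩ := greedy hK hal _ Finset.univ rfl hVne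
  rw [Finset.card_univ, ← hnd] at hf3
  refine ⟨c, ⟨SimpleGraph.Coloring.mk (fun v => (⟨f v, hf1 v (Finset.mem_univ _)⟩ : Fin c)) ?_⟩, ?_⟩
  · intro u v huv heq
    have hne := huv.ne
    refine hf2 u (Finset.mem_univ _) v (Finset.mem_univ _) hne ((hhit u v).2 ((hadj u v hne).1 huv)) ?_
    exact congrArg Fin.val heq
  · have hlog : Real.log n ≤ lam := by
      rw [hlam, Real.logb, le_div_iff₀ (Real.log_pos (by norm_num))]
      have h1 := Real.log_two_lt_d9
      have h2 : 0 ≤ Real.log n := Real.log_nonneg (by linarith)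
      nlinarith
    have hfin := final_num hl32 hq2 hk1 hf3 hlog (by omega)
    refine hfin.trans ?_
    rw [← hlam, ← Real.rpow_natCast]
    apply Real.rpow_le_rpow_of_exponent_le (by linarith)
    rw [Nat.cast_mul]
    have hkt : (k : ℝ) ≤ 2 * Real.logb 2 t := by
      have h1 : 2 ^ (k - 1) < t := by
        rw [hk]; exact Nat.pow_pred_clog_lt_self (by norm_num) (by omega)
      have h2 : ((k - 1 : ℕ) : ℝ) ≤ Real.logb 2 t := by
        rw [Real.le_logb_iff_rpow_le (by norm_num) (by positivity), Real.rpow_natCast]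
        exact_mod_cast h1.le
      have h3 : (1 : ℝ) ≤ Real.logb 2 t := by
        rw [Real.le_logb_iff_rpow_le (by norm_num) (by positivity), Real.rpow_one]
        exact_mod_cast ht
      rw [Nat.cast_sub hk1] at h2
      push_cast at h2
      linarith
    have h0 : (0 : ℝ) ≤ ((19 * (E + 1) + 5 : ℕ) : ℝ) := by positivity
    nlinarith
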